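/- For every universal monotone machine U, the probability μ(INF(U)) that the output of U on a random infinite binary input is infinite is a 2-random 0'-right-c.e. real. Conversely, every 2-random 0'-right-c.e. real α ∈ (0,1) equals μ(INF(U)) for some universal monotone machine U. -/

import Mathlib

open scoped Classical
open MeasureTheory

namespace RandProb

/-- Cantor space: the space of infinite binary sequences. -/
abbrev Cantor := ℕ → Bool

/-! ### Oracle partial recursive functions, via codes -/

/-- Codes for partial recursive functions with access to an oracle `O : ℕ → ℕ`.
These codes play the role of (oracle) Turing machines. -/
inductive CodeO : Type
  | zero : CodeO
  | succ : CodeO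
  | left : CodeO
  | right : CodeO
  | oracle : CodeO
  | pair : CodeO → CodeO → CodeO
  | comp : CodeO → CodeO → CodeO
  | prec : CodeO → CodeO → CodeO
  | rfind' : CodeO → CodeO

/-- Evaluation of an oracle code with (total) oracle `O`. -/
def CodeO.eval (O : ℕ → ℕ) : CodeO → ℕ →. ℕ
  | .zero => pure 0
  | .succ => Nat.succ
  | .left => ↑fun n : ℕ => n.unpair.1
  | .right => ↑fun n : ℕ => n.unpair.2
  | .oracle => ↑fun n : ℕ => O n
  | .pair cf cg => fun n => Nat.pair <$> cf.eval O n <*> cg.eval O n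
  | .comp cf cg => fun n => cg.eval O n >>= cf.eval O
  | .prec cf cg =>
    Nat.unpaired fun a n =>
      n.rec (cf.eval O a) fun y IH => do
        let i ← IH
        cg.eval O (Nat.pair a (Nat.pair y i))
  | .rfind' cf =>
    Nat.unpaired fun a m =>
      (Nat.rfind fun n => (fun m => m = 0) <$> cf.eval O (Nat.pair a (n + m))).map (· + m)

/-- A canonical injective numbering of oracle codes. -/
def CodeO.encode : CodeO → ℕ
  | .zero => 0
  | .succ => 1
  | .left => 2
  | .right => 3
  | .oracle => 4
  | .pair cf cg => 2 * (2 * Nat.pair cf.encode cg.encode) + 5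
  | .comp cf cg => 2 * (2 * Nat.pair cf.encode cg.encode + 1) + 5
  | .prec cf cg => 2 * (2 * Nat.pair cf.encode cg.encode) + 6
  | .rfind' cf => 2 * (2 * cf.encode + 1) + 6

/-- The Turing jump of an oracle: the halting problem relative to `O`,
as a `{0,1}`-valued function. -/
noncomputable def jump (O : ℕ → ℕ) : ℕ → ℕ := fun e =>
  if ∃ c : CodeO, c.encode = e ∧ (c.eval O e).Dom then 1 else 0

/-- `iterJump n` is `∅^(n)`, the `n`-th iterate of the halting problem (as an oracle). -/
noncomputable def iterJump : ℕ → ℕ → ℕ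
  | 0 => fun _ => 0
  | n + 1 => jump (iterJump n)

/-- `S ⊆ ℕ` is computably enumerable relative to the oracle `O`. -/
def CeIn (O : ℕ → ℕ) (S : Set ℕ) : Prop := ∃ c : CodeO, S = {m | (c.eval O m).Dom}

/-- The left Dedekind cut of `α` (as a set of codes of rationals) is c.e. in `O`. -/
def LeftCeIn (O : ℕ → ℕ) (α : ℝ) : Prop :=
  CeIn O {m | ∃ q : ℚ, Encodable.encode q = m ∧ (q : ℝ) < α}

/-- The right Dedekind cut of `α` (as a set of codes of rationals) is c.e. in `O`. -/
def RightCeIn (O : ℕ → ℕ) (α : ℝ) : Prop :=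
  CeIn O {m | ∃ q : ℚ, Encodable.encode q = m ∧ α < (q : ℝ)}

/-! ### Martin-Löf randomness for real numbers -/

/-- The `i`-th component of a Martin-Löf test coded by the set `W ⊆ ℕ`:
the union of all open rational intervals whose codes are enumerated into the
`i`-th section of `W`. -/
def testSet (W : Set ℕ) (i : ℕ) : Set ℝ :=
  {x | ∃ p q : ℚ, Nat.pair i (Encodable.encode (p, q)) ∈ W ∧ (p : ℝ) < x ∧ x < (q : ℝ)}

/-- `α` is Martin-Löf random relative to the oracle `O`. -/
def MLRandomIn (O : ℕ → ℕ) (α : ℝ) : Prop :=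
  ∀ W : Set ℕ, CeIn O W →
    (∀ i, volume (testSet W i) ≤ ENNReal.ofReal ((2 : ℝ)⁻¹ ^ i)) →
    ∃ i, α ∉ testSet W i

/-- `α` is `n`-random: Martin-Löf random relative to `∅^(n-1)`. -/
def NRandom (n : ℕ) (α : ℝ) : Prop := MLRandomIn (iterJump (n - 1)) α

/-! ### The uniform measure on Cantor space -/

/-- The binary digits of a real number (meaningful on `[0,1)`). -/
noncomputable def digits (x : ℝ) : Cantor := fun n => decide (⌊x * 2 ^ (n + 1)⌋ % 2 = 1)

/-- The uniform (Lebesgue) product measure on Cantor space, obtained as the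
pushforward of Lebesgue measure on `[0,1)` under the binary-digit map. -/
noncomputable def mu : Measure Cantor :=
  Measure.map digits (volume.restrict (Set.Ico (0 : ℝ) 1))

/-- The uniform measure of a set of elements of Cantor space, as a real number. -/
noncomputable def muR (S : Set Cantor) : ℝ := (mu S).toReal

/-! ### Strings, prefixes and cylinders -/

/-- The length-`n` initial segment of `X ∈ 2^ω`, as a finite binary string. -/
def initSeg (X : Cantor) (n : ℕ) : List Bool := (List.range n).map X

/-- `⟦S⟧`: the elements of Cantor space having a prefix in the set of strings `S`. -/
def cyl (S : Set (List Bool)) : Set Cantor := {X | ∃ n, initSeg X n ∈ S}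

/-- A set of strings is prefix-free if none of its elements properly extends another. -/
def IsPrefixFree (S : Set (List Bool)) : Prop := ∀ σ ∈ S, ∀ τ ∈ S, σ <+: τ → σ = τ

/-- A set of strings is upward closed if it is closed under taking extensions. -/
def UpClosed (S : Set (List Bool)) : Prop := ∀ σ ∈ S, ∀ τ, σ <+: τ → τ ∈ S

/-- Two strings are compatible if one is a prefix of the other. -/
def Compatible (σ τ : List Bool) : Prop := σ <+: τ ∨ τ <+: σ

/-! ### Oracle machines -/

/-- An element of Cantor space viewed as a `{0,1}`-valued oracle. -/
def oX (X : Cantor) : ℕ → ℕ := fun n => cond (X n) 1 0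

/-- `evalO X c n`: the (possibly divergent) output of the oracle machine `c`
on input `n` with oracle `X`. -/
def evalO (X : Cantor) (c : CodeO) (n : ℕ) : Part ℕ := c.eval (oX X) n

/-- The oracle obtained by writing the string `ρ` before the bits of `X`. -/
def prepend (ρ : List Bool) (X : Cantor) : Cantor := fun n =>
  if n < ρ.length then ρ.getD n false else X (n - ρ.length)

/-- `X ∈ 2^ω` extends the finite string `ρ`. -/
def Extends (X : Cantor) (ρ : List Bool) : Prop := initSeg X ρ.length = ρ

/-- `u` is a universal oracle machine: some effective, prefix-free translation
`c ↦ σ_c` satisfies `u(σ_c * X, n) ≃ c(X, n)` for all machines `c`. -/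
def UniversalOM (u : CodeO) : Prop :=
  ∃ σ : CodeO → List Bool,
    (∃ f : ℕ → ℕ, Computable f ∧ ∀ c : CodeO, f c.encode = Encodable.encode (σ c)) ∧
    IsPrefixFree (Set.range σ) ∧
    ∀ (c : CodeO) (X : Cantor) (n : ℕ), evalO (prepend (σ c) X) u n = evalO X c n

/-- `TOT(c)`: the oracles `X` such that the function `c(X)` is total. -/
def TOT (c : CodeO) : Set Cantor := {X | ∀ n, (evalO X c n).Dom}

/-- The domain of the partial function `c(X)`. -/
def domSet (c : CodeO) (X : Cantor) : Set ℕ := {n | (evalO X c n).Dom}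

/-- The range of the partial function `c(X)`. -/
def ranSet (c : CodeO) (X : Cantor) : Set ℕ := {v | ∃ n, v ∈ evalO X c n}

/-- `INF(c)`: the oracles `X` such that `c(X)` has infinite domain. -/
def INF (c : CodeO) : Set Cantor := {X | (domSet c X).Infinite}

/-- `COF(c)`: the oracles `X` such that `c(X)` has cofinite domain. -/
def COF (c : CodeO) : Set Cantor := {X | (domSet c X)ᶜ.Finite}

/-- `COM(c)`: the oracles `X` such that `c(X)` has computable domain. -/
def COM (c : CodeO) : Set Cantor := {X | ComputablePred fun n => n ∈ domSet c X}

/-- The characteristic function of a set of naturals. -/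
noncomputable def chi (A : Set ℕ) : ℕ → ℕ := fun n => if n ∈ A then 1 else 0

/-- Turing reducibility between sets of naturals. -/
def TuringLEs (B A : Set ℕ) : Prop := ∃ c : CodeO, ∀ n, c.eval (chi A) n = Part.some (chi B n)

/-- The halting problem `∅'` as a set of naturals. -/
noncomputable def HaltingSet : Set ℕ := {e | iterJump 1 e = 1}

/-- `COMPL(c)`: the oracles `X` such that the domain of `c(X)` computes the halting problem. -/
noncomputable def COMPL (c : CodeO) : Set Cantor := {X | TuringLEs HaltingSet (domSet c X)}

/-- Turing reducibility between total functions on ℕ. -/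
def TuringLEf (f g : ℕ → ℕ) : Prop := ∃ c : CodeO, ∀ n, c.eval g n = Part.some (f n)

/-- A real number viewed as an oracle, via its binary expansion. -/
noncomputable def realOracle (α : ℝ) : ℕ → ℕ := oX (digits α)

/-- Two reals have Turing-incomparable degrees. -/
noncomputable def TIncompReal (α β : ℝ) : Prop :=
  ¬ TuringLEf (realOracle α) (realOracle β) ∧ ¬ TuringLEf (realOracle β) (realOracle α)

/-! ### Arithmetical hierarchy -/

/-- Evaluation with the trivial (empty) oracle: ordinary partial recursion. -/
def eval0 (c : CodeO) : ℕ →. ℕ := c.eval fun _ => 0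

/-- `SigmaNumIdx n c` is the `Σ^0_{n+1}` subset of `ℕ` with index `c`. -/
def SigmaNumIdx : ℕ → CodeO → Set ℕ
  | 0, c => {m | (eval0 c m).Dom}
  | n + 1, c => {m | ∃ k, Nat.pair m k ∉ SigmaNumIdx n c}

/-- `S ⊆ ℕ` is `Σ^0_n` (intended for `n ≥ 1`). -/
def SigmaN (n : ℕ) (S : Set ℕ) : Prop := ∃ c : CodeO, S = SigmaNumIdx (n - 1) c

/-- The set of codes of the elements of a set of binary strings. -/
def strCodes (S : Set (List Bool)) : Set ℕ := {m | ∃ σ ∈ S, Encodable.encode σ = m}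

/-- A set of binary strings is `Σ^0_n`. -/
def SigmaStr (n : ℕ) (S : Set (List Bool)) : Prop := SigmaN n (strCodes S)

/-- A set of binary strings is `Π^0_n`: its complement is `Σ^0_n`. -/
def PiStr (n : ℕ) (S : Set (List Bool)) : Prop := SigmaStr n Sᶜ

/-- A set of binary strings is c.e. relative to the oracle `O`. -/
def CeStrIn (O : ℕ → ℕ) (S : Set (List Bool)) : Prop := CeIn O (strCodes S)

/-- `SigmaClassIdx n c m` is the `Σ^0_{n+1}` class of elements of Cantor space
with index `c` and parameter `m`. -/
def SigmaClassIdx : ℕ → CodeO → ℕ → Set Cantor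
  | 0, c, m => {X | (evalO X c m).Dom}
  | n + 1, c, m => {X | ∃ k, X ∉ SigmaClassIdx n c (Nat.pair m k)}

/-! ### Monotone machines -/

/-- A monotone machine: a partial computable, monotone map on finite binary strings. -/
structure MonoMachine where
  f : List Bool →. List Bool
  partrec : Partrec f
  mono : ∀ ⦃σ τ a b : List Bool⦄, σ <+: τ → a ∈ f σ → b ∈ f τ → a <+: b

/-- The oracles `X` such that the output of the monotone machine on `X` is infinite. -/
def MonoINF (M : MonoMachine) : Set Cantor :=
  {X | ∀ k, ∃ n a, a ∈ M.f (initSeg X n) ∧ k ≤ a.length}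

/-- The `k`-th bit of the output `M(X)` of a monotone machine is `b`. -/
def MonoMachine.hasBit (M : MonoMachine) (X : Cantor) (k : ℕ) (b : Bool) : Prop :=
  ∃ n a, a ∈ M.f (initSeg X n) ∧ a[k]? = some b

/-- `U` is a universal monotone machine. -/
def UniversalMono (U : MonoMachine) : Prop :=
  ∃ (M : ℕ → MonoMachine) (σ : ℕ → List Bool),
    Partrec₂ (fun (e : ℕ) (τ : List Bool) => (M e).f τ) ∧
    (∀ V : MonoMachine, ∃ e, (M e).f = V.f) ∧
    Computable σ ∧ IsPrefixFree (Set.range σ) ∧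
    ∀ e τ, U.f (σ e ++ τ) = (M e).f τ

/-! ### Infinitary self-delimiting machines -/

/-- Chaitin's infinitary self-delimiting machines: `f σ n` is the `n`-th approximation
of the output on program `σ` (`none` meaning divergence); the convergence relation is
decidable, approximations are monotone, and machines are self-delimiting. -/
structure InfMachine where
  f : List Bool → ℕ → Option (List Bool)
  computable : Computable₂ f
  mono : ∀ σ m n a, n < m → f σ m = some a → ∃ b, f σ n = some b ∧ b <+: a
  sd : ∀ σ τ n a, f σ n = some a → f (σ ++ τ) n = some a

/-- `M^∞(σ)↓`: all approximations converge. -/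
def InfMachine.domInf (M : InfMachine) (σ : List Bool) : Prop := ∀ n, M.f σ n ≠ none

/-- The domain of `M^∞`. -/
def InfMachine.DOM (M : InfMachine) : Set (List Bool) := {σ | M.domInf σ}

/-- The output `M^∞(σ)` is infinite (a stream). -/
def InfMachine.outInf (M : InfMachine) (σ : List Bool) : Prop :=
  ∀ k, ∃ n a, M.f σ n = some a ∧ k ≤ a.length

/-- `FIN(M^∞)`: programs in the domain with finite output. -/
def InfMachine.FIN (M : InfMachine) : Set (List Bool) := {σ | M.domInf σ ∧ ¬ M.outInf σ}

/-- `INF(M^∞)`: programs in the domain with infinite output. -/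
def InfMachine.INF (M : InfMachine) : Set (List Bool) := {σ | M.domInf σ ∧ M.outInf σ}

/-- The `k`-th bit of the output `M^∞(σ)` is `b`. -/
def InfMachine.hasBit (M : InfMachine) (σ : List Bool) (k : ℕ) (b : Bool) : Prop :=
  ∃ n a, M.f σ n = some a ∧ a[k]? = some b

/-- The domain of the prefix-free machine `M^*`: minimal strings in the domain of `M^∞`. -/
def InfMachine.DOMstar (M : InfMachine) : Set (List Bool) :=
  {σ | M.domInf σ ∧ ∀ τ, τ <+: σ → τ ≠ σ → ¬ M.domInf τ}

/-- Programs whose output is a stream with a tail of 1s. -/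
def InfMachine.COFout (M : InfMachine) : Set (List Bool) :=
  {σ | M.domInf σ ∧ M.outInf σ ∧ ∃ t, ∀ k, t ≤ k → M.hasBit σ k true}

/-- `A^∞(σ) ≃ B^∞(τ)`: both converge or both diverge, with equal outputs. -/
def InfAgree (A : InfMachine) (σ : List Bool) (B : InfMachine) (τ : List Bool) : Prop :=
  (A.domInf σ ↔ B.domInf τ) ∧ (A.domInf σ → ∀ k b, (A.hasBit σ k b ↔ B.hasBit τ k b))

/-- `U` is a universal infinitary self-delimiting machine. -/
def UniversalInf (U : InfMachine) : Prop :=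
  ∃ (M : ℕ → InfMachine) (σ : ℕ → List Bool),
    Computable (fun p : ℕ × List Bool × ℕ => (M p.1).f p.2.1 p.2.2) ∧
    (∀ V : InfMachine, ∃ e, ∀ τ, InfAgree (M e) τ V τ) ∧
    Computable σ ∧ IsPrefixFree (Set.range σ) ∧
    ∀ e τ, InfAgree U (σ e ++ τ) (M e) τ

end RandProb

namespace RandProb

/-! ### Primitive recursive automation -/

attribute [fun_prop] Primrec PrimrecPred
attribute [fun_prop] Primrec.id Primrec.const Primrec.comp Primrec.pair

section Auto
variable {α β γ : Type*} [Primcodable α] [Primcodable β] [Primcodable γ]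

@[fun_prop] theorem pr_fst (f : α → β × γ) (h : Primrec f) : Primrec (fun x => (f x).1) :=
  Primrec.fst.comp h
@[fun_prop] theorem pr_snd (f : α → β × γ) (h : Primrec f) : Primrec (fun x => (f x).2) :=
  Primrec.snd.comp h
@[fun_prop] theorem pr_add (f g : α → ℕ) (hf : Primrec f) (hg : Primrec g) :
    Primrec (fun x => f x + g x) := Primrec.nat_add.comp hf hg
@[fun_prop] theorem pr_sub (f g : α → ℕ) (hf : Primrec f) (hg : Primrec g) :
    Primrec (fun x => f x - g x) := Primrec.nat_sub.comp hf hg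
@[fun_prop] theorem pr_mul (f g : α → ℕ) (hf : Primrec f) (hg : Primrec g) :
    Primrec (fun x => f x * g x) := Primrec.nat_mul.comp hf hg
@[fun_prop] theorem pr_div (f g : α → ℕ) (hf : Primrec f) (hg : Primrec g) :
    Primrec (fun x => f x / g x) := Primrec.nat_div.comp hf hg
@[fun_prop] theorem pr_mod (f g : α → ℕ) (hf : Primrec f) (hg : Primrec g) :
    Primrec (fun x => f x % g x) := Primrec.nat_mod.comp hf hg
@[fun_prop] theorem pr_pow (f g : α → ℕ) (hf : Primrec f) (hg : Primrec g) :
    Primrec (fun x => f x ^ g x) := (Primrec₂.unpaired'.1 Nat.Primrec.pow).comp hf hg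
@[fun_prop] theorem pr_natpair (f g : α → ℕ) (hf : Primrec f) (hg : Primrec g) :
    Primrec (fun x => Nat.pair (f x) (g x)) := Primrec₂.natPair.comp hf hg
@[fun_prop] theorem pr_unpair (f : α → ℕ) (hf : Primrec f) :
    Primrec (fun x => Nat.unpair (f x)) := Primrec.unpair.comp hf
@[fun_prop] theorem pr_encode (f : α → β) (hf : Primrec f) :
    Primrec (fun x => Encodable.encode (f x)) := Primrec.encode.comp hf
@[fun_prop] theorem pr_decode (f : α → ℕ) (hf : Primrec f) :
    Primrec (fun x => (Encodable.decode (f x) : Option β)) := Primrec.decode.comp hf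
@[fun_prop] theorem pr_some (f : α → β) (hf : Primrec f) :
    Primrec (fun x => some (f x)) := Primrec.option_some.comp hf
@[fun_prop] theorem pr_cons (f : α → β) (g : α → List β) (hf : Primrec f) (hg : Primrec g) :
    Primrec (fun x => f x :: g x) := Primrec.list_cons.comp hf hg
@[fun_prop] theorem pr_append (f : α → List β) (g : α → List β) (hf : Primrec f)
    (hg : Primrec g) : Primrec (fun x => f x ++ g x) := Primrec.list_append.comp hf hg
@[fun_prop] theorem pr_length (f : α → List β) (hf : Primrec f) :
    Primrec (fun x => (f x).length) := Primrec.list_length.comp hf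
@[fun_prop] theorem pr_range (f : α → ℕ) (hf : Primrec f) :
    Primrec (fun x => List.range (f x)) := Primrec.list_range.comp hf
@[fun_prop] theorem pr_getD (f : α → List β) (g : α → ℕ) (d : β) (hf : Primrec f)
    (hg : Primrec g) : Primrec (fun x => (f x).getD (g x) d) := (Primrec.list_getD d).comp hf hg
@[fun_prop] theorem pr_getE (f : α → List β) (g : α → ℕ) (hf : Primrec f)
    (hg : Primrec g) : Primrec (fun x => (f x)[g x]?) := Primrec.list_getElem?.comp hf hg
@[fun_prop] theorem pr_take (f : α → List β) (g : α → ℕ) (hf : Primrec f)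
    (hg : Primrec g) : Primrec (fun x => (f x).take (g x)) := Primrec.list_take.comp hg hf
@[fun_prop] theorem pr_drop (f : α → List β) (g : α → ℕ) (hf : Primrec f)
    (hg : Primrec g) : Primrec (fun x => (f x).drop (g x)) := Primrec.list_drop.comp hg hf
@[fun_prop] theorem pr_map (f : α → List β) (g : α → β → γ) (hf : Primrec f)
    (hg : Primrec (fun z : α × β => g z.1 z.2)) : Primrec (fun x => (f x).map (g x)) :=
  Primrec.list_map hf hg.to₂

theorem pp_decide {p : α → Prop} (h : PrimrecPred p) [DecidablePred p] :
    Primrec (fun x => decide (p x)) := by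
  obtain ⟨d, h⟩ := h
  convert h

theorem pp_of {p : α → Prop} (f : α → Bool) (h : Primrec f) (hp : ∀ x, p x ↔ f x = true) :
    PrimrecPred p := by
  refine ⟨fun x => decidable_of_iff _ (hp x).symm, h.of_eq fun x => ?_⟩
  have := hp x
  cases h : f x <;> simp_all

@[fun_prop] theorem pp_le (f g : α → ℕ) (hf : Primrec f) (hg : Primrec g) :
    PrimrecPred (fun x => f x ≤ g x) := Primrec.nat_le.comp hf hg
@[fun_prop] theorem pp_lt (f g : α → ℕ) (hf : Primrec f) (hg : Primrec g) :
    PrimrecPred (fun x => f x < g x) := Primrec.nat_lt.comp hf hg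
@[fun_prop] theorem pp_eq (f g : α → β) (hf : Primrec f) (hg : Primrec g) :
    PrimrecPred (fun x => f x = g x) := Primrec.eq.comp hf hg
@[fun_prop] theorem pp_not (f : α → Prop) (hf : PrimrecPred f) :
    PrimrecPred (fun x => ¬ f x) := hf.not
@[fun_prop] theorem pp_ne (f g : α → β) (hf : Primrec f) (hg : Primrec g) :
    PrimrecPred (fun x => f x ≠ g x) := pp_not _ (pp_eq f g hf hg)
@[fun_prop] theorem pp_and (f g : α → Prop) (hf : PrimrecPred f) (hg : PrimrecPred g) :
    PrimrecPred (fun x => f x ∧ g x) := hf.and hg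
@[fun_prop] theorem pp_or (f g : α → Prop) (hf : PrimrecPred f) (hg : PrimrecPred g) :
    PrimrecPred (fun x => f x ∨ g x) := hf.or hg
@[fun_prop] theorem pp_imp (f g : α → Prop) (hf : PrimrecPred f) (hg : PrimrecPred g) :
    PrimrecPred (fun x => f x → g x) := (hf.not.or hg).of_eq fun x => by tauto
theorem pp_comp {p : β → Prop} {f : α → β} (hp : PrimrecPred p) (hf : Primrec f) :
    PrimrecPred (fun x => p (f x)) := hp.comp hf
theorem pp_ball_list (f : α → List β) (p : α → β → Prop) (hf : Primrec f)
    (hg : PrimrecPred (fun z : α × β => p z.1 z.2)) :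
    PrimrecPred (fun x => ∀ i ∈ f x, p x i) := by
  have h : PrimrecRel (fun (i : β) (x : α) => p x i) :=
    pp_comp (f := fun z : β × α => (z.2, z.1)) hg (by fun_prop)
  exact (PrimrecRel.forall_mem_list h).comp hf Primrec.id
theorem pp_bex_list (f : α → List β) (p : α → β → Prop) (hf : Primrec f)
    (hg : PrimrecPred (fun z : α × β => p z.1 z.2)) :
    PrimrecPred (fun x => ∃ i ∈ f x, p x i) := by
  have h : PrimrecRel (fun (i : β) (x : α) => p x i) :=
    pp_comp (f := fun z : β × α => (z.2, z.1)) hg (by fun_prop)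
  exact (PrimrecRel.exists_mem_list h).comp hf Primrec.id
@[fun_prop] theorem pp_ball (f : α → ℕ) (p : α → ℕ → Prop) (hf : Primrec f)
    (hg : PrimrecPred (fun z : α × ℕ => p z.1 z.2)) :
    PrimrecPred (fun x => ∀ i < f x, p x i) :=
  (pp_ball_list (fun x => List.range (f x)) p (by fun_prop) hg).of_eq fun x => by simp
@[fun_prop] theorem pp_bex (f : α → ℕ) (p : α → ℕ → Prop) (hf : Primrec f)
    (hg : PrimrecPred (fun z : α × ℕ => p z.1 z.2)) :
    PrimrecPred (fun x => ∃ i < f x, p x i) :=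
  (pp_bex_list (fun x => List.range (f x)) p (by fun_prop) hg).of_eq fun x => by simp
theorem pp_opt (o : α → Option β) (p : α → β → Prop) (ho : Primrec o)
    (hg : PrimrecPred (fun z : α × β => p z.1 z.2)) :
    PrimrecPred (fun x => ∃ y ∈ o x, p x y) := by
  classical
  refine pp_of (fun x => ((o x).map (fun y => decide (p x y))).getD false) ?_ ?_
  · refine Primrec.option_getD.comp (Primrec.option_map ho ?_) (Primrec.const _)
    exact (pp_decide hg).to₂
  · intro x
    cases h : o x <;> simp
@[fun_prop] theorem pr_ite (p : α → Prop) [DecidablePred p] (f g : α → β) (hp : PrimrecPred p)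
    (hf : Primrec f) (hg : Primrec g) : Primrec (fun x => if p x then f x else g x) :=
  Primrec.ite hp hf hg
theorem pr_decide (p : α → Prop) [DecidablePred p] (hp : PrimrecPred p) :
    Primrec (fun x => decide (p x)) := pp_decide hp
end Auto

/-! ### Arithmetical classes -/

section Sig
variable {α β γ δ : Type*} [Primcodable α] [Primcodable β] [Primcodable γ] [Primcodable δ]

/-- `P` is `Σ₁`. -/
def Sig1 (P : α → Prop) : Prop := ∃ R : α → ℕ → Prop,
  PrimrecPred (fun z : α × ℕ => R z.1 z.2) ∧ ∀ x, P x ↔ ∃ j, R x j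

/-- `P` is `Σ₂`. -/
@[fun_prop] def Sig2 (P : α → Prop) : Prop := ∃ R : α → ℕ → ℕ → Prop,
  PrimrecPred (fun z : α × ℕ × ℕ => R z.1 z.2.1 z.2.2) ∧ ∀ x, P x ↔ ∃ k, ∀ j, R x k j

theorem Sig2.of_prim {P : α → Prop} (h : PrimrecPred P) : Sig2 P :=
  ⟨fun x _ _ => P x, pp_comp (f := fun z : α × ℕ × ℕ => z.1) h (by fun_prop), by simp⟩

theorem Sig2.pi (P : α → ℕ → Prop) (h : PrimrecPred (fun z : α × ℕ => P z.1 z.2)) :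
    Sig2 (fun x => ∀ j, P x j) :=
  ⟨fun x _ j => P x j, pp_comp (f := fun z : α × ℕ × ℕ => (z.1, z.2.2)) h (by fun_prop), by simp⟩

theorem Sig2.of_iff {P Q : α → Prop} (h : Sig2 P) (hq : ∀ x, Q x ↔ P x) : Sig2 Q := by
  obtain ⟨R, h1, h2⟩ := h
  exact ⟨R, h1, fun x => (hq x).trans (h2 x)⟩

theorem Sig2.comp {P : β → Prop} {f : α → β} (h : Sig2 P) (hf : Primrec f) :
    Sig2 (fun x => P (f x)) := by
  obtain ⟨R, h1, h2⟩ := h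
  exact ⟨fun x k j => R (f x) k j,
    pp_comp (f := fun z : α × ℕ × ℕ => (f z.1, z.2.1, z.2.2)) h1 (by fun_prop), fun x => h2 (f x)⟩

theorem Sig2.comp2 {P : β → γ → Prop} {f : α → β} {g : α → γ}
    (h : Sig2 (fun z : β × γ => P z.1 z.2)) (hf : Primrec f) (hg : Primrec g) :
    Sig2 (fun x => P (f x) (g x)) := h.comp (f := fun x => (f x, g x)) (by fun_prop)

theorem Sig2.comp3 {P : β → γ → δ → Prop} {f : α → β} {g : α → γ} {k : α → δ}
    (h : Sig2 (fun z : β × γ × δ => P z.1 z.2.1 z.2.2)) (hf : Primrec f) (hg : Primrec g)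
    (hk : Primrec k) :
    Sig2 (fun x => P (f x) (g x) (k x)) := h.comp (f := fun x => (f x, g x, k x)) (by fun_prop)

theorem Sig2.and {P Q : α → Prop} (h : Sig2 P) (h' : Sig2 Q) : Sig2 (fun x => P x ∧ Q x) := by
  obtain ⟨R, h1, h2⟩ := h
  obtain ⟨S, h3, h4⟩ := h'
  refine ⟨fun x k j => R x k.unpair.1 j ∧ S x k.unpair.2 j, pp_and _ _
    (pp_comp (f := fun z : α × ℕ × ℕ => (z.1, z.2.1.unpair.1, z.2.2)) h1 (by fun_prop))
    (pp_comp (f := fun z : α × ℕ × ℕ => (z.1, z.2.1.unpair.2, z.2.2)) h3 (by fun_prop)), ?_⟩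
  intro x
  beta_reduce
  rw [h2, h4]
  constructor
  · rintro ⟨⟨k, hk⟩, l, hl⟩
    exact ⟨Nat.pair k l, fun j => by simpa using ⟨hk j, hl j⟩⟩
  · rintro ⟨k, hk⟩
    exact ⟨⟨_, fun j => (hk j).1⟩, _, fun j => (hk j).2⟩

theorem Sig2.ex {P : α → β → Prop} (h : Sig2 (fun z : α × β => P z.1 z.2)) :
    Sig2 (fun x => ∃ y, P x y) := by
  obtain ⟨R, h1, h2⟩ := h
  refine ⟨fun x k j => ∃ y ∈ (Encodable.decode k.unpair.1 : Option β), R (x, y) k.unpair.2 j,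
    pp_opt _ (fun (z : α × ℕ × ℕ) (y : β) => R (z.1, y) z.2.1.unpair.2 z.2.2) (by fun_prop)
      (pp_comp (f := fun w : (α × ℕ × ℕ) × β =>
        ((w.1.1, w.2), w.1.2.1.unpair.2, w.1.2.2)) h1 (by fun_prop)), ?_⟩
  intro x
  constructor
  · rintro ⟨y, hy⟩
    obtain ⟨k, hk⟩ := (h2 (x, y)).1 hy
    exact ⟨Nat.pair (Encodable.encode y) k, fun j => ⟨y, by simp, by simpa using hk j⟩⟩
  · rintro ⟨k, hk⟩
    obtain ⟨y, hy, -⟩ := hk 0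
    refine ⟨y, (h2 (x, y)).2 ⟨k.unpair.2, fun j => ?_⟩⟩
    obtain ⟨y', hy', h⟩ := hk j
    rw [Option.mem_def] at hy hy'
    rw [hy] at hy'
    cases hy'
    exact h

theorem Sig2.or {P Q : α → Prop} (h : Sig2 P) (h' : Sig2 Q) : Sig2 (fun x => P x ∨ Q x) := by
  obtain ⟨R, h1, h2⟩ := h
  obtain ⟨S, h3, h4⟩ := h'
  refine ⟨fun x k j => (k.unpair.1 = 0 ∧ R x k.unpair.2 j) ∨ (k.unpair.1 = 1 ∧ S x k.unpair.2 j),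
    pp_or _ _ (pp_and _ _ (by fun_prop)
    (pp_comp (f := fun z : α × ℕ × ℕ => (z.1, z.2.1.unpair.2, z.2.2)) h1 (by fun_prop)))
    (pp_and _ _ (by fun_prop)
    (pp_comp (f := fun z : α × ℕ × ℕ => (z.1, z.2.1.unpair.2, z.2.2)) h3 (by fun_prop))), ?_⟩
  intro x
  beta_reduce
  rw [h2, h4]
  constructor
  · rintro (⟨k, hk⟩ | ⟨k, hk⟩)
    · exact ⟨Nat.pair 0 k, fun j => by simpa using hk j⟩
    · exact ⟨Nat.pair 1 k, fun j => by simpa using hk j⟩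
  · rintro ⟨k, hk⟩
    rcases hk 0 with ⟨h0, -⟩ | ⟨h0, -⟩
    · exact Or.inl ⟨_, fun j => by simpa [h0] using hk j⟩
    · exact Or.inr ⟨_, fun j => by simpa [h0] using hk j⟩

theorem Sig2.of_sig1 {P : α → Prop} (h : Sig1 P) : Sig2 P := by
  obtain ⟨R, h1, h2⟩ := h
  exact (Sig2.ex (P := R) (Sig2.of_prim h1)).of_iff h2

theorem Sig2.of_not {P : α → Prop} (h : Sig1 P) : Sig2 (fun x => ¬ P x) := by
  obtain ⟨R, h1, h2⟩ := h
  refine (Sig2.pi (fun x j => ¬ R x j) (pp_not _ h1)).of_iff ?_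
  intro x
  rw [h2]
  simp

theorem Sig2.ball {P : α → ℕ → Prop} {f : α → ℕ} (hf : Primrec f)
    (h : Sig2 (fun z : α × ℕ => P z.1 z.2)) : Sig2 (fun x => ∀ i < f x, P x i) := by
  obtain ⟨R, h1, h2⟩ := h
  have key : Sig2 (fun x => ∃ l : List ℕ, ∀ j, ∀ i < f x, R (x, i) (l.getD i 0) j) := by
    refine Sig2.ex (Sig2.pi (fun (z : α × List ℕ) j => ∀ i < f z.1, R (z.1, i) (z.2.getD i 0) j) ?_)
    refine pp_ball (fun z : (α × List ℕ) × ℕ => f z.1.1)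
      (fun z i => R (z.1.1, i) (z.1.2.getD i 0) z.2) (by fun_prop) ?_
    exact pp_comp (f := fun w : ((α × List ℕ) × ℕ) × ℕ =>
      ((w.1.1.1, w.2), w.1.1.2.getD w.2 0, w.1.2)) h1 (by fun_prop)
  refine key.of_iff fun x => ?_
  constructor
  · intro hx
    have : ∀ i, ∃ k, i < f x → ∀ j, R (x, i) k j := by
      intro i
      by_cases hi : i < f x
      · obtain ⟨k, hk⟩ := (h2 (x, i)).1 (hx i hi)
        exact ⟨k, fun _ => hk⟩
      · exact ⟨0, fun h => absurd h hi⟩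
    choose k hk using this
    refine ⟨(List.range (f x)).map k, fun j i hi => ?_⟩
    have : ((List.range (f x)).map k).getD i 0 = k i := by
      simp [List.getD, List.getElem?_range hi]
    rw [this]
    exact hk i hi j
  · rintro ⟨l, hl⟩ i hi
    exact (h2 (x, i)).2 ⟨_, fun j => hl j i hi⟩

end Sig

/-! ### Post's theorem -/

open Nat.Partrec (Code)

theorem sig1_dom : Sig1 (fun z : Code × ℕ => (z.1.eval z.2).Dom) := by
  refine ⟨fun z k => (Nat.Partrec.Code.evaln k z.1 z.2).isSome = true, ?_, ?_⟩
  · refine pp_eq _ _ ?_ (Primrec.const _)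
    exact Primrec.option_isSome.comp (Nat.Partrec.Code.primrec_evaln.comp
      (f := fun a : (ℕ × Code) × ℕ => Nat.Partrec.Code.evaln a.1.1 a.1.2 a.2)
      (g := fun z : (Code × ℕ) × ℕ => ((z.2, z.1.1), z.1.2)) (by fun_prop))
  · rintro ⟨c, n⟩
    refine Part.dom_iff_mem.trans ?_
    constructor
    · rintro ⟨v, hv⟩
      obtain ⟨k, hk⟩ := Nat.Partrec.Code.evaln_complete.1 hv
      exact ⟨k, Option.isSome_iff_exists.2 ⟨v, hk⟩⟩
    · rintro ⟨k, hk⟩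
      obtain ⟨v, hv⟩ := Option.isSome_iff_exists.1 hk
      exact ⟨v, Nat.Partrec.Code.evaln_complete.2 ⟨k, hv⟩⟩

theorem Sig1.comp {α β : Type*} [Primcodable α] [Primcodable β] {P : β → Prop} {f : α → β}
    (h : Sig1 P) (hf : Primrec f) : Sig1 (fun x => P (f x)) := by
  obtain ⟨R, h1, h2⟩ := h
  exact ⟨fun x j => R (f x) j,
    pp_comp (f := fun z : α × ℕ => (f z.1, z.2)) h1 (by fun_prop), fun x => h2 (f x)⟩

/-- Translation of numbers of oracle codes into ordinary codes (with zero oracle). -/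
def toCode : ℕ → Code
  | 0 => .zero
  | 1 => .succ
  | 2 => .left
  | 3 => .right
  | 4 => .zero
  | n + 5 =>
    have h1 : n / 4 < n + 5 := by omega
    have h2 : (n / 4).unpair.1 < n + 5 := lt_of_le_of_lt (Nat.unpair_left_le _) h1
    have h3 : (n / 4).unpair.2 < n + 5 := lt_of_le_of_lt (Nat.unpair_right_le _) h1
    if n % 4 = 0 then .pair (toCode (n / 4).unpair.1) (toCode (n / 4).unpair.2)
    else if n % 4 = 1 then .prec (toCode (n / 4).unpair.1) (toCode (n / 4).unpair.2)
    else if n % 4 = 2 then .comp (toCode (n / 4).unpair.1) (toCode (n / 4).unpair.2)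
    else .rfind' (toCode (n / 4))

theorem toCode_primrec : Primrec toCode := by
  let G : List Code → Code := fun l =>
    if l.length = 0 then .zero
    else if l.length = 1 then .succ
    else if l.length = 2 then .left
    else if l.length = 3 then .right
    else if l.length = 4 then .zero
    else if (l.length - 5) % 4 = 0 then
      .pair (l.getD ((l.length - 5) / 4).unpair.1 .zero) (l.getD ((l.length - 5) / 4).unpair.2 .zero)
    else if (l.length - 5) % 4 = 1 then
      .prec (l.getD ((l.length - 5) / 4).unpair.1 .zero) (l.getD ((l.length - 5) / 4).unpair.2 .zero)
    else if (l.length - 5) % 4 = 2 then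
      .comp (l.getD ((l.length - 5) / 4).unpair.1 .zero) (l.getD ((l.length - 5) / 4).unpair.2 .zero)
    else .rfind' (l.getD ((l.length - 5) / 4) .zero)
  have hG : Primrec G := by
    have h1 := fun (f g : List Code → Code) (hf : Primrec f) (hg : Primrec g) =>
      Nat.Partrec.Code.primrec₂_pair.comp hf hg
    have h2 := fun (f g : List Code → Code) (hf : Primrec f) (hg : Primrec g) =>
      Nat.Partrec.Code.primrec₂_prec.comp hf hg
    have h3 := fun (f g : List Code → Code) (hf : Primrec f) (hg : Primrec g) =>
      Nat.Partrec.Code.primrec₂_comp.comp hf hg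
    have h4 := fun (f : List Code → Code) (hf : Primrec f) =>
      Nat.Partrec.Code.primrec_rfind'.comp hf
    refine pr_ite _ _ _ (by fun_prop) (by fun_prop) ?_
    refine pr_ite _ _ _ (by fun_prop) (by fun_prop) ?_
    refine pr_ite _ _ _ (by fun_prop) (by fun_prop) ?_
    refine pr_ite _ _ _ (by fun_prop) (by fun_prop) ?_
    refine pr_ite _ _ _ (by fun_prop) (by fun_prop) ?_
    refine pr_ite _ _ _ (by fun_prop) (h1 _ _ (by fun_prop) (by fun_prop)) ?_
    refine pr_ite _ _ _ (by fun_prop) (h2 _ _ (by fun_prop) (by fun_prop)) ?_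
    refine pr_ite _ _ _ (by fun_prop) (h3 _ _ (by fun_prop) (by fun_prop)) ?_
    exact h4 _ (by fun_prop)
  have := Primrec.nat_strong_rec (α := Unit) (fun _ n => toCode n) (g := fun _ l => some (G l))
    (by exact (Primrec.option_some.comp (hG.comp Primrec.snd)).to₂) (by
      intro _ n
      have hget : ∀ m < n, ((List.range n).map toCode).getD m .zero = toCode m := by
        intro m hm
        simp [List.getD, List.getElem?_range hm]
      congr 1
      rcases n with _ | _ | _ | _ | _ | n
      · rw [toCode]; rfl
      · rw [toCode]; rfl
      · rw [toCode]; rfl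
      · rw [toCode]; rfl
      · rw [toCode]; rfl
      · have h1 : n / 4 < n + 5 := by omega
        have h2 : (n / 4).unpair.1 < n + 5 := lt_of_le_of_lt (Nat.unpair_left_le _) h1
        have h3 : (n / 4).unpair.2 < n + 5 := lt_of_le_of_lt (Nat.unpair_right_le _) h1
        rw [toCode]
        simp only [G, List.length_map, List.length_range]
        have h0 : n + 1 + 1 + 1 + 1 + 1 - 5 = n := by omega
        rw [h0]
        rw [hget _ h1, hget _ h2, hget _ h3]
        simp)
  exact this.comp (Primrec.const ()) Primrec.id

theorem toCode_eval (c : CodeO) : (toCode c.encode).eval = c.eval (fun _ => 0) := by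
  induction c with
  | zero => rw [CodeO.encode, toCode]; rfl
  | succ => rw [CodeO.encode, toCode]; rfl
  | left => rw [CodeO.encode, toCode]; rfl
  | right => rw [CodeO.encode, toCode]; rfl
  | oracle => rw [CodeO.encode, toCode]; rfl
  | pair cf cg h1 h2 =>
    rw [CodeO.encode, toCode]
    have e1 : 2 * (2 * Nat.pair cf.encode cg.encode) % 4 = 0 := by omega
    have e2 : 2 * (2 * Nat.pair cf.encode cg.encode) / 4 = Nat.pair cf.encode cg.encode := by omega
    simp only [e1, e2, if_true, Nat.unpair_pair, Code.eval, CodeO.eval, h1, h2]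
    try rfl
  | comp cf cg h1 h2 =>
    rw [CodeO.encode, toCode]
    have e1 : 2 * (2 * Nat.pair cf.encode cg.encode + 1) % 4 = 2 := by omega
    have e2 : 2 * (2 * Nat.pair cf.encode cg.encode + 1) / 4
      = Nat.pair cf.encode cg.encode := by omega
    simp [e1, e2, Code.eval, CodeO.eval, h1, h2]
    try rfl
  | prec cf cg h1 h2 =>
    rw [CodeO.encode, toCode]
    have e1 : (2 * (2 * Nat.pair cf.encode cg.encode) + 1) % 4 = 1 := by omega
    have e2 : (2 * (2 * Nat.pair cf.encode cg.encode) + 1) / 4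
      = Nat.pair cf.encode cg.encode := by omega
    simp [e1, e2, Code.eval, CodeO.eval, h1, h2]
    try rfl
  | rfind' cf h1 =>
    rw [CodeO.encode, toCode]
    have e1 : (2 * (2 * cf.encode + 1) + 1) % 4 = 3 := by omega
    have e2 : (2 * (2 * cf.encode + 1) + 1) / 4 = cf.encode := by omega
    simp [e1, e2, Code.eval, CodeO.eval, h1]
    try rfl

theorem CodeO.encode_surj : ∀ n : ℕ, ∃ c : CodeO, c.encode = n := by
  intro n
  induction n using Nat.strong_induction_on with
  | _ n ih =>
    rcases n with _ | _ | _ | _ | _ | n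
    · exact ⟨.zero, rfl⟩
    · exact ⟨.succ, rfl⟩
    · exact ⟨.left, rfl⟩
    · exact ⟨.right, rfl⟩
    · exact ⟨.oracle, rfl⟩
    · have h1 : n / 4 < n + 5 := by omega
      obtain ⟨a, ha⟩ := ih (n / 4).unpair.1 (lt_of_le_of_lt (Nat.unpair_left_le _) h1)
      obtain ⟨b, hb⟩ := ih (n / 4).unpair.2 (lt_of_le_of_lt (Nat.unpair_right_le _) h1)
      obtain ⟨d, hd⟩ := ih (n / 4) h1
      have h4 : n % 4 < 4 := Nat.mod_lt _ (by norm_num)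
      have h5 : n = 4 * (n / 4) + n % 4 := (Nat.div_add_mod n 4).symm
      rcases (by omega : n % 4 = 0 ∨ n % 4 = 1 ∨ n % 4 = 2 ∨ n % 4 = 3) with h | h | h | h
      · exact ⟨.pair a b, by rw [CodeO.encode, ha, hb, Nat.pair_unpair]; omega⟩
      · exact ⟨.prec a b, by rw [CodeO.encode, ha, hb, Nat.pair_unpair]; omega⟩
      · exact ⟨.comp a b, by rw [CodeO.encode, ha, hb, Nat.pair_unpair]; omega⟩
      · exact ⟨.rfind' d, by rw [CodeO.encode, hd]; omega⟩

theorem jump_zero (n : ℕ) :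
    iterJump 1 n = if ((toCode n).eval n).Dom then 1 else 0 := by
  show (if _ then _ else _) = _
  congr 1
  apply propext
  constructor
  · rintro ⟨c, rfl, h⟩
    rw [toCode_eval]
    exact h
  · intro h
    obtain ⟨c, rfl⟩ := CodeO.encode_surj n
    rw [toCode_eval] at h
    exact ⟨c, rfl, h⟩

theorem sig2_jump : Sig2 (fun z : ℕ × ℕ => z.2 ∈ (Part.some (iterJump 1 z.1))) := by
  have h : Sig1 (fun z : ℕ × ℕ => ((toCode z.1).eval z.1).Dom) :=
    sig1_dom.comp (f := fun z : ℕ × ℕ => (toCode z.1, z.1))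
      (Primrec.pair (toCode_primrec.comp Primrec.fst) Primrec.fst)
  refine (((Sig2.of_sig1 h).and (Sig2.of_prim (P := fun z : ℕ × ℕ => z.2 = 1) (by fun_prop))).or
    ((Sig2.of_not h).and (Sig2.of_prim (P := fun z : ℕ × ℕ => z.2 = 0) (by fun_prop)))).of_iff ?_
  rintro ⟨n, v⟩
  simp only [Part.mem_some_iff, jump_zero]
  by_cases h : ((toCode n).eval n).Dom <;> simp [h]

theorem sig2_graph (c : CodeO) : Sig2 (fun z : ℕ × ℕ => z.2 ∈ c.eval (iterJump 1) z.1) := by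
  induction c with
  | zero =>
    refine (Sig2.of_prim (P := fun z : ℕ × ℕ => z.2 = 0) (by fun_prop)).of_iff ?_
    intro z
    exact Part.mem_some_iff
  | succ =>
    refine (Sig2.of_prim (P := fun z : ℕ × ℕ => z.2 = z.1 + 1) (by fun_prop)).of_iff ?_
    intro z
    exact Part.mem_some_iff
  | left =>
    refine (Sig2.of_prim (P := fun z : ℕ × ℕ => z.2 = z.1.unpair.1) (by fun_prop)).of_iff ?_
    intro z
    exact Part.mem_some_iff
  | right =>
    refine (Sig2.of_prim (P := fun z : ℕ × ℕ => z.2 = z.1.unpair.2) (by fun_prop)).of_iff ?_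
    intro z
    exact Part.mem_some_iff
  | oracle => exact sig2_jump
  | pair cf cg h1 h2 =>
    have : Sig2 (fun z : ℕ × ℕ => ∃ w : ℕ × ℕ, w.1 ∈ cf.eval (iterJump 1) z.1 ∧
        w.2 ∈ cg.eval (iterJump 1) z.1 ∧ z.2 = Nat.pair w.1 w.2) := by
      refine Sig2.ex (Sig2.and (h1.comp (f := fun w : (ℕ × ℕ) × (ℕ × ℕ) => (w.1.1, w.2.1))
        (by fun_prop)) (Sig2.and (h2.comp (f := fun w : (ℕ × ℕ) × (ℕ × ℕ) => (w.1.1, w.2.2))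
        (by fun_prop)) (Sig2.of_prim (by fun_prop))))
    refine this.of_iff ?_
    rintro ⟨n, v⟩
    simp [CodeO.eval, Seq.seq, eq_comm]
  | comp cf cg h1 h2 =>
    have : Sig2 (fun z : ℕ × ℕ => ∃ w : ℕ, w ∈ cg.eval (iterJump 1) z.1 ∧
        z.2 ∈ cf.eval (iterJump 1) w) := by
      refine Sig2.ex (Sig2.and (h2.comp (f := fun w : (ℕ × ℕ) × ℕ => (w.1.1, w.2))
        (by fun_prop)) (h1.comp (f := fun w : (ℕ × ℕ) × ℕ => (w.2, w.1.2))
        (by fun_prop)))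
    refine this.of_iff ?_
    rintro ⟨n, v⟩
    exact Part.mem_bind_iff
  | prec cf cg h1 h2 =>
    have : Sig2 (fun z : ℕ × ℕ => ∃ l : List ℕ, (l.getD 0 0 ∈ cf.eval (iterJump 1) z.1.unpair.1 ∧
        ∀ y < z.1.unpair.2, l.getD (y + 1) 0 ∈ cg.eval (iterJump 1)
          (Nat.pair z.1.unpair.1 (Nat.pair y (l.getD y 0)))) ∧ z.2 = l.getD z.1.unpair.2 0) := by
      refine Sig2.ex (Sig2.and (Sig2.and (h1.comp (f := fun w : (ℕ × ℕ) × List ℕ =>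
        (w.1.1.unpair.1, w.2.getD 0 0)) (by fun_prop)) (Sig2.ball (by fun_prop)
        (h2.comp (f := fun w : ((ℕ × ℕ) × List ℕ) × ℕ =>
        (Nat.pair w.1.1.1.unpair.1 (Nat.pair w.2 (w.1.2.getD w.2 0)), w.1.2.getD (w.2 + 1) 0))
         (by fun_prop)))) (Sig2.of_prim (by fun_prop)))
    refine this.of_iff ?_
    rintro ⟨n, v⟩
    simp only [CodeO.eval, Nat.unpaired]
    generalize n.unpair.1 = a
    generalize n.unpair.2 = m
    constructor
    · intro hv
      suffices H : ∀ m v, v ∈ (Nat.rec (cf.eval (iterJump 1) a) (fun y IH => do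
          let i ← IH
          cg.eval (iterJump 1) (Nat.pair a (Nat.pair y i))) m : Part ℕ) →
          ∃ l : List ℕ, l.length = m + 1 ∧ (l.getD 0 0 ∈ cf.eval (iterJump 1) a ∧
        ∀ y < m, l.getD (y + 1) 0 ∈ cg.eval (iterJump 1)
          (Nat.pair a (Nat.pair y (l.getD y 0)))) ∧ v = l.getD m 0 by
        obtain ⟨l, -, hl⟩ := H m v hv
        exact ⟨l, hl⟩
      intro m
      induction m with
      | zero => intro v hv; exact ⟨[v], by simp, by simpa using hv, by simp⟩
      | succ m ih =>
        intro v hv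
        obtain ⟨i, hi, hv⟩ := Part.mem_bind_iff.1 hv
        obtain ⟨l, h0, ⟨h1, h2⟩, h3⟩ := ih i hi
        refine ⟨l ++ [v], by simp [h0], ⟨?_, ?_⟩, ?_⟩
        · rw [List.getD_append _ _ _ _ (by omega)]
          exact h1
        · intro y hy
          rw [List.getD_append _ _ _ _ (by omega : y < l.length)]
          rcases Nat.lt_succ_iff_lt_or_eq.1 hy with hy | rfl
          · rw [List.getD_append _ _ _ _ (by omega)]
            exact h2 y hy
          · rw [List.getD_append_right _ _ _ _ (by omega), h0, ← h3]
            simpa using hv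
        · rw [List.getD_append_right _ _ _ _ (by omega), h0]
          simp
    · rintro ⟨l, ⟨h1, h2⟩, rfl⟩
      clear this
      induction m with
      | zero => exact h1
      | succ m ih =>
        exact Part.mem_bind_iff.2 ⟨_, ih (fun y hy => h2 y (by omega)), h2 m (by omega)⟩
  | rfind' cf h1 =>
    have : Sig2 (fun z : ℕ × ℕ => ∃ k : ℕ, z.2 = k + z.1.unpair.2 ∧
        0 ∈ cf.eval (iterJump 1) (Nat.pair z.1.unpair.1 (k + z.1.unpair.2)) ∧
        ∀ i < k, ∃ w, w ≠ 0 ∧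
          w ∈ cf.eval (iterJump 1) (Nat.pair z.1.unpair.1 (i + z.1.unpair.2))) := by
      refine Sig2.ex (Sig2.and (Sig2.of_prim (by fun_prop)) (Sig2.and
        (h1.comp (f := fun w : (ℕ × ℕ) × ℕ =>
          (Nat.pair w.1.1.unpair.1 (w.2 + w.1.1.unpair.2), 0)) (by fun_prop))
        (Sig2.ball (by fun_prop) (Sig2.ex (Sig2.and (Sig2.of_prim (by fun_prop))
        (h1.comp (f := fun w : (((ℕ × ℕ) × ℕ) × ℕ) × ℕ =>
          (Nat.pair w.1.1.1.1.unpair.1 (w.1.2 + w.1.1.1.1.unpair.2), w.2)) (by fun_prop)))))))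
    refine this.of_iff ?_
    rintro ⟨n, v⟩
    simp only [CodeO.eval, Nat.unpaired, Part.mem_map_iff]
    constructor
    · rintro ⟨k, hk, rfl⟩
      obtain ⟨h1, h2⟩ := Nat.mem_rfind.1 hk
      refine ⟨k, rfl, ?_, fun i hi => ?_⟩
      · simpa using h1
      · simpa [and_comm] using h2 hi
    · rintro ⟨k, rfl, h1, h2⟩
      refine ⟨k, Nat.mem_rfind.2 ⟨by simpa using h1, fun {i} hi => ?_⟩, rfl⟩
      simpa [and_comm] using h2 i hi

theorem sig2_of_ce {S : Set ℕ} (h : CeIn (iterJump 1) S) : Sig2 (fun m => m ∈ S) := by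
  obtain ⟨c, rfl⟩ := h
  refine (Sig2.ex (P := fun m v => v ∈ c.eval (iterJump 1) m) (sig2_graph c)).of_iff ?_
  intro m
  exact Part.dom_iff_mem

/-- Translation of ordinary codes into oracle codes. -/
def ofCode : Code → CodeO
  | .zero => .zero
  | .succ => .succ
  | .left => .left
  | .right => .right
  | .pair a b => .pair (ofCode a) (ofCode b)
  | .comp a b => .comp (ofCode a) (ofCode b)
  | .prec a b => .prec (ofCode a) (ofCode b)
  | .rfind' a => .rfind' (ofCode a)

theorem ofCode_eval (O : ℕ → ℕ) (c : Code) : (ofCode c).eval O = c.eval := by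
  induction c with
  | zero => rfl
  | succ => rfl
  | left => rfl
  | right => rfl
  | pair cf cg h1 h2 =>
    simp only [ofCode, Code.eval, CodeO.eval, h1, h2]
    rfl
  | comp cf cg h1 h2 =>
    simp only [ofCode, Code.eval, CodeO.eval, h1, h2]
    rfl
  | prec cf cg h1 h2 =>
    simp only [ofCode, Code.eval, CodeO.eval, h1, h2]
    rfl
  | rfind' cf h1 =>
    simp only [ofCode, Code.eval, CodeO.eval, h1]
    rfl

/-- Oracle codes for constant functions. -/
def constO : ℕ → CodeO
  | 0 => .zero
  | n + 1 => .comp .succ (constO n)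

theorem CodeO.eval_comp_some (O : ℕ → ℕ) (a b : CodeO) (n x : ℕ) (h : b.eval O n = Part.some x) :
    (CodeO.comp a b).eval O n = a.eval O x := by
  show (b.eval O n).bind _ = _
  rw [h]
  exact Part.bind_some _ _

theorem constO_eval (O : ℕ → ℕ) (n m : ℕ) : (constO n).eval O m = Part.some n := by
  induction n with
  | zero => rfl
  | succ n ih =>
    simp only [constO, CodeO.eval, ih]
    exact Part.bind_some _ _

theorem constO_primrec : Primrec (fun n => (constO n).encode) := by
  have : Primrec (Nat.rec 0 (fun _ r => 2 * (2 * Nat.pair 1 r + 1) + 5) : ℕ → ℕ) := by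
    refine Primrec.nat_rec₁ (f := fun _ r => 2 * (2 * Nat.pair 1 r + 1) + 5) 0 ?_
    exact Primrec.to₂ (f := fun z : ℕ × ℕ => 2 * (2 * Nat.pair 1 z.2 + 1) + 5) (by fun_prop)
  refine this.of_eq fun n => ?_
  induction n with
  | zero => rfl
  | succ n ih =>
    simp only [constO, CodeO.encode]
    rw [← ih]

theorem code_of_primrec (f : ℕ → ℕ) (hf : Primrec f) (O : ℕ → ℕ) :
    ∃ c : CodeO, ∀ n, c.eval O n = Part.some (f n) := by
  obtain ⟨c, hc⟩ := Nat.Partrec.Code.exists_code.1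
    (Nat.Partrec.of_primrec (Primrec.nat_iff.1 hf))
  exact ⟨ofCode c, fun n => by rw [ofCode_eval, hc]; rfl⟩

theorem ce_of_sig2 {S : Set ℕ} (h : Sig2 (fun m => m ∈ S)) : CeIn (iterJump 1) S := by
  obtain ⟨R, h1, h2⟩ := h
  -- machine for the complement
  have hp : Nat.Partrec (fun n => Nat.rfind fun j =>
      (Part.some (decide (¬ R n.unpair.1 n.unpair.2 j)) : Part Bool)) := by
    refine Partrec.nat_iff.1 ?_
    refine Partrec.rfind (p := fun (n : ℕ) (j : ℕ) => Part.some (decide (¬ R n.unpair.1 n.unpair.2 j))) ?_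
    have : Primrec (fun z : ℕ × ℕ => decide (¬ R z.1.unpair.1 z.1.unpair.2 z.2)) := by
      apply pr_decide
      exact pp_not _ (pp_comp (f := fun z : ℕ × ℕ => (z.1.unpair.1, z.1.unpair.2, z.2)) h1
        (by fun_prop))
    exact this.to_comp.partrec
  obtain ⟨d, hd⟩ := Nat.Partrec.Code.exists_code.1 hp
  let f : ℕ → ℕ := fun x => (CodeO.comp (ofCode d) (constO x)).encode
  have hf : Primrec f := by
    have : Primrec (fun x => 2 * (2 * Nat.pair (ofCode d).encode ((constO x).encode) + 1) + 5) := by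
      have := constO_primrec
      fun_prop
    exact this
  obtain ⟨cf, hcf⟩ := code_of_primrec f hf (iterJump 1)
  have hO : ∀ x, iterJump 1 (f x) = 0 ↔ ∀ j, R x.unpair.1 x.unpair.2 j := by
    intro x
    rw [jump_zero]
    have : ((toCode (f x)).eval (f x)).Dom ↔ ∃ j, ¬ R x.unpair.1 x.unpair.2 j := by
      simp only [f]
      rw [toCode_eval, CodeO.eval_comp_some _ _ _ _ _ (constO_eval _ _ _)]
      rw [ofCode_eval, hd]
      refine Nat.rfind_dom.trans ?_
      simp
    rw [this]
    by_cases hx : ∃ j, ¬ R x.unpair.1 x.unpair.2 j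
    · rw [if_pos hx]
      simpa using hx
    · rw [if_neg hx]
      simpa using hx
  refine ⟨.comp (.rfind' (.comp .oracle cf)) (.pair (.pair .left .right) .zero), ?_⟩
  ext m
  show m ∈ S ↔ (CodeO.eval _ _ m).Dom
  have e0 : (CodeO.pair (CodeO.pair CodeO.left CodeO.right) CodeO.zero).eval (iterJump 1) m
      = Part.some (Nat.pair m 0) := by
    simp [CodeO.eval, Seq.seq, pure, PFun.pure]
  have e1 : ∀ n, (CodeO.comp CodeO.oracle cf).eval (iterJump 1) n
      = Part.some (iterJump 1 (f n)) := by
    intro n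
    simp only [CodeO.eval, hcf]
    exact Part.bind_some _ _
  rw [CodeO.eval_comp_some _ _ _ _ _ e0]
  rw [CodeO.eval]
  simp only [Nat.unpaired, Nat.unpair_pair, e1, h2 m]
  constructor
  · rintro ⟨k, hk⟩
    have := (hO (Nat.pair m k)).2 (by simpa using hk)
    show (Nat.rfind _).Dom
    refine Nat.rfind_dom.2 ?_
    refine ⟨k, ?_, ?_⟩
    · simpa using this
    · intros; trivial
  · intro h
    have h : (Nat.rfind _).Dom := h
    obtain ⟨k, hk, -⟩ := Nat.rfind_dom.1 h
    refine ⟨k, ?_⟩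
    have : iterJump 1 (f (Nat.pair m k)) = 0 := by simpa using hk
    simpa using (hO _).1 this

/-! ### Codes of rationals and right cuts in dyadic form -/

theorem int_encode (n : ℤ) : (Encodable.encode n + 1) / 2 = n.natAbs ∧
    (Encodable.encode n % 2 = 1 ↔ n < 0) := by
  rcases n with n | n
  · have : Encodable.encode (Int.ofNat n) = 2 * n := rfl
    rw [this]
    refine ⟨?_, ?_⟩
    · show _ = n
      omega
    · constructor
      · omega
      · intro h
        exact absurd h (by simp)
  · have : Encodable.encode (Int.negSucc n) = 2 * n + 1 := rfl
    rw [this]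
    refine ⟨?_, ?_⟩
    · show _ = n + 1
      omega
    · constructor
      · intro _
        exact Int.negSucc_lt_zero n
      · omega

theorem int_encode_surj (m : ℕ) : ∃ n : ℤ, Encodable.encode n = m := by
  rcases Nat.even_or_odd' m with ⟨k, rfl | rfl⟩
  · exact ⟨Int.ofNat k, rfl⟩
  · exact ⟨Int.negSucc k, rfl⟩

theorem rat_encode (q : ℚ) : Encodable.encode q = Nat.pair (Encodable.encode q.num) q.den := rfl

/-- Validity of a code of a rational number. -/
def ValidQ (m : ℕ) : Prop := 0 < m.unpair.2 ∧
  ∀ k < m.unpair.2 + 1, ((m.unpair.1 + 1) / 2) % k = 0 → m.unpair.2 % k = 0 → k = 1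

theorem validQ_prim : PrimrecPred ValidQ := by
  unfold ValidQ
  fun_prop

theorem validQ_iff (m : ℕ) : (∃ q : ℚ, Encodable.encode q = m) ↔ ValidQ m := by
  constructor
  · rintro ⟨q, rfl⟩
    rw [rat_encode]
    unfold ValidQ
    simp only [Nat.unpair_pair, (int_encode q.num).1]
    refine ⟨q.den_pos, fun k _ h1 h2 => ?_⟩
    exact Nat.eq_one_of_dvd_coprimes q.reduced (Nat.dvd_of_mod_eq_zero h1)
      (Nat.dvd_of_mod_eq_zero h2)
  · rintro ⟨h0, h1⟩
    obtain ⟨n, hn⟩ := int_encode_surj m.unpair.1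
    rw [← hn, (int_encode n).1] at h1
    refine ⟨⟨n, m.unpair.2, h0.ne', ?_⟩, ?_⟩
    · refine h1 _ (Nat.lt_succ_of_le (Nat.le_of_dvd h0 (Nat.gcd_dvd_right _ _))) ?_ ?_
      · exact Nat.mod_eq_zero_of_dvd (Nat.gcd_dvd_left _ _)
      · exact Nat.mod_eq_zero_of_dvd (Nat.gcd_dvd_right _ _)
    · rw [rat_encode]
      simp only [hn, Nat.pair_unpair]

/-- The rational coded by `m` is smaller than `k / 2 ^ s`. -/
def QLt (m k s : ℕ) : Prop := m.unpair.1 % 2 = 1 ∨ (m.unpair.1 + 1) / 2 * 2 ^ s < k * m.unpair.2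

/-- The rational coded by `m` is greater than `k / 2 ^ s`. -/
def QGt (m k s : ℕ) : Prop := m.unpair.1 % 2 = 0 ∧ k * m.unpair.2 < (m.unpair.1 + 1) / 2 * 2 ^ s

theorem qLt_prim : PrimrecPred (fun z : ℕ × ℕ × ℕ => QLt z.1 z.2.1 z.2.2) := by
  unfold QLt
  fun_prop

theorem qGt_prim : PrimrecPred (fun z : ℕ × ℕ × ℕ => QGt z.1 z.2.1 z.2.2) := by
  unfold QGt
  fun_prop

theorem rat_real (q : ℚ) : (q : ℝ) = (q.num : ℝ) / (q.den : ℝ) := by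
  exact_mod_cast (Rat.num_div_den q).symm

theorem qLt_iff (q : ℚ) (k s : ℕ) :
    (q : ℝ) < (k : ℝ) / 2 ^ s ↔ QLt (Encodable.encode q) k s := by
  have hd : (0 : ℝ) < q.den := by exact_mod_cast q.den_pos
  rw [rat_encode]
  unfold QLt
  simp only [Nat.unpair_pair, (int_encode q.num).1, (int_encode q.num).2]
  rw [rat_real, div_lt_div_iff₀ hd (by positivity)]
  by_cases h : q.num < 0
  · simp only [h, true_or, iff_true]
    have : (q.num : ℝ) < 0 := by exact_mod_cast h
    have h2 : (q.num : ℝ) * 2 ^ s < 0 := mul_neg_of_neg_of_pos this (by positivity)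
    have h3 : (0 : ℝ) ≤ k * q.den := by positivity
    linarith
  · simp only [h, false_or]
    push Not at h
    have h1 : (q.num : ℝ) = ((q.num.natAbs : ℕ) : ℝ) := by
      have : q.num = (q.num.natAbs : ℤ) := by omega
      exact (congrArg (Int.cast (R := ℝ)) this).trans (Int.cast_natCast _)
    rw [h1]
    norm_cast

theorem qGt_iff (q : ℚ) (k s : ℕ) :
    (k : ℝ) / 2 ^ s < (q : ℝ) ↔ QGt (Encodable.encode q) k s := by
  have hd : (0 : ℝ) < q.den := by exact_mod_cast q.den_pos
  rw [rat_encode]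
  unfold QGt
  simp only [Nat.unpair_pair, (int_encode q.num).1]
  have h0 := (int_encode q.num).2
  rw [rat_real, div_lt_div_iff₀ (by positivity) hd]
  by_cases h : q.num < 0
  · have : (q.num : ℝ) < 0 := by exact_mod_cast h
    have h2 : (q.num : ℝ) * 2 ^ s < 0 := mul_neg_of_neg_of_pos this (by positivity)
    have h3 : (0 : ℝ) ≤ k * q.den := by positivity
    have h4 := h0.2 h
    constructor
    · intro h5
      linarith
    · rintro ⟨h5, -⟩
      omega
  · have h4 : Encodable.encode q.num % 2 = 0 := by
      have : ¬ (Encodable.encode q.num % 2 = 1) := fun h5 => h (h0.1 h5)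
      omega
    simp only [h4, true_and]
    push Not at h
    have h1 : (q.num : ℝ) = ((q.num.natAbs : ℕ) : ℝ) := by
      have : q.num = (q.num.natAbs : ℤ) := by omega
      exact (congrArg (Int.cast (R := ℝ)) this).trans (Int.cast_natCast _)
    rw [h1]
    norm_cast

/-- The right cut of `γ` (as a set of dyadic rationals) is `Σ₂`. -/
def RC (γ : ℝ) : Prop := Sig2 (fun z : ℕ × ℕ => γ < (z.1 : ℝ) / 2 ^ z.2)

/-- Dyadic rationals are dense. -/
theorem dyadic_between {x y : ℝ} (hx : 0 ≤ x) (h : x < y) :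
    ∃ a s : ℕ, x < (a : ℝ) / 2 ^ s ∧ (a : ℝ) / 2 ^ s < y := by
  obtain ⟨s, hs⟩ := exists_pow_lt_of_lt_one (sub_pos.2 h) (by norm_num : (1 / 2 : ℝ) < 1)
  have h2 : (0 : ℝ) < 2 ^ s := by positivity
  refine ⟨⌊x * 2 ^ s⌋₊ + 1, s, ?_, ?_⟩
  · rw [lt_div_iff₀ h2]
    push_cast
    exact Nat.lt_floor_add_one _
  · rw [div_lt_iff₀ h2]
    push_cast
    have h3 := Nat.floor_le (a := x * 2 ^ s) (by positivity)
    have h4 : (1 / 2 : ℝ) ^ s * 2 ^ s = 1 := by rw [← mul_pow]; norm_num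
    nlinarith

theorem rc_of_rightCe {α : ℝ} (h : RightCeIn (iterJump 1) α) : RC α := by
  have h := sig2_of_ce h
  refine (Sig2.ex (P := fun (z : ℕ × ℕ) (m : ℕ) =>
    (∃ q : ℚ, Encodable.encode q = m ∧ α < (q : ℝ)) ∧ ¬ QGt m z.1 z.2) ?_).of_iff ?_
  · refine Sig2.and (h.comp (f := fun w : (ℕ × ℕ) × ℕ => w.2) (by fun_prop)) (Sig2.of_prim ?_)
    exact pp_not _ (pp_comp (f := fun w : (ℕ × ℕ) × ℕ => (w.2, w.1.1, w.1.2)) qGt_prim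
      (by fun_prop))
  · rintro ⟨a, s⟩
    constructor
    · intro h
      refine ⟨_, ⟨(a : ℚ) / 2 ^ s, rfl, ?_⟩, ?_⟩
      · push_cast
        exact h
      · rw [← qGt_iff]
        push_cast
        exact lt_irrefl _
    · rintro ⟨m, ⟨q, rfl, h1⟩, h2⟩
      rw [← qGt_iff, not_lt] at h2
      exact lt_of_lt_of_le h1 h2

theorem rightCe_of_rc {α : ℝ} (h0 : 0 ≤ α) (h : RC α) : RightCeIn (iterJump 1) α := by
  apply ce_of_sig2
  refine (Sig2.and (Sig2.of_prim validQ_prim) (Sig2.ex (P := fun (m : ℕ) (z : ℕ × ℕ) =>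
    α < (z.1 : ℝ) / 2 ^ z.2 ∧ QGt m z.1 z.2) ?_)).of_iff ?_
  · refine Sig2.and (Sig2.comp (f := fun w : ℕ × ℕ × ℕ => w.2) h (by fun_prop)) (Sig2.of_prim ?_)
    exact pp_comp (f := fun w : ℕ × ℕ × ℕ => (w.1, w.2.1, w.2.2)) qGt_prim
      (by fun_prop)
  · intro m
    rw [← validQ_iff]
    constructor
    · rintro ⟨q, rfl, hq⟩
      obtain ⟨a, s, h1, h2⟩ := dyadic_between h0 hq
      exact ⟨⟨q, rfl⟩, (a, s), h1, (qGt_iff _ _ _).1 h2⟩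
    · rintro ⟨⟨q, rfl⟩, ⟨a, s⟩, h1, h2⟩
      exact ⟨q, rfl, lt_trans h1 ((qGt_iff _ _ _).2 h2)⟩

/-! ### Monotone approximations -/

/-- The function `b` has a `Σ₂` graph. -/
def Gr (b : ℕ → ℕ) : Prop := Sig2 (fun z : ℕ × ℕ => z.2 = b z.1)

/-- `b n / 2 ^ n` is a decreasing approximation of `γ` (strictly from above). -/
structure Approx (γ : ℝ) (b : ℕ → ℕ) : Prop where
  gr : Gr b
  lt : ∀ n, γ < (b n : ℝ) / 2 ^ n
  step : ∀ n, b (n + 1) ≤ 2 * b n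
  lim : ∀ y, γ < y → ∃ n, (b n : ℝ) / 2 ^ n < y
  init : b 0 ≤ 2

theorem Approx.succ {γ : ℝ} {b : ℕ → ℕ} (h : Approx γ b) (n : ℕ) :
    (b (n + 1) : ℝ) / 2 ^ (n + 1) ≤ (b n : ℝ) / 2 ^ n := by
  rw [div_le_div_iff₀ (by positivity) (by positivity), pow_succ]
  have : (b (n + 1) : ℝ) ≤ 2 * b n := by exact_mod_cast h.step n
  have h2 : (0 : ℝ) < 2 ^ n := by positivity
  nlinarith

theorem Approx.anti {γ : ℝ} {b : ℕ → ℕ} (h : Approx γ b) :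
    Antitone (fun n => (b n : ℝ) / 2 ^ n) := antitone_nat_of_succ_le h.succ

theorem exists_approx {γ : ℝ} (h0 : 0 ≤ γ) (h2 : γ < 2) (h : RC γ) : ∃ b, Approx γ b := by
  obtain ⟨R, hR, hiff⟩ := h
  let OK : ℕ → Prop := fun w => ∀ j, R (w.unpair.1, w.unpair.2.unpair.1) w.unpair.2.unpair.2 j
  let Good : ℕ → ℕ → Prop := fun n j => j = 2 * 2 ^ n ∨
    ∃ w < n, OK w ∧ w.unpair.1 * 2 ^ n ≤ j * 2 ^ w.unpair.2.unpair.1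
  have hG : ∀ n, ∃ j, Good n j := fun n => ⟨_, Or.inl rfl⟩
  let b : ℕ → ℕ := fun n => Nat.find (hG n)
  have hb : ∀ n, Good n (b n) := fun n => Nat.find_spec (hG n)
  have hb' : ∀ n j, Good n j → b n ≤ j := fun n j h => Nat.find_min' (hG n) h
  have hR1 : PrimrecPred (fun z : ℕ × ℕ =>
      R (z.1.unpair.1, z.1.unpair.2.unpair.1) z.1.unpair.2.unpair.2 z.2) :=
    pp_comp (f := fun z : ℕ × ℕ =>
      ((z.1.unpair.1, z.1.unpair.2.unpair.1), z.1.unpair.2.unpair.2, z.2)) hR (by fun_prop)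
  have hOK : Sig2 OK := Sig2.pi _ hR1
  have hNOK : Sig2 (fun w => ¬ OK w) := by
    refine (Sig2.of_sig1 (P := fun w => ∃ j,
      ¬ R (w.unpair.1, w.unpair.2.unpair.1) w.unpair.2.unpair.2 j) ⟨_, pp_not _ hR1,
      fun _ => Iff.rfl⟩).of_iff ?_
    intro w
    simp [OK]
  have hGood : Sig2 (fun z : ℕ × ℕ => Good z.1 z.2) := by
    refine Sig2.or (Sig2.of_prim (by fun_prop)) (Sig2.ex (P := fun (z : ℕ × ℕ) w =>
      w < z.1 ∧ OK w ∧ w.unpair.1 * 2 ^ z.1 ≤ z.2 * 2 ^ w.unpair.2.unpair.1) ?_)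
    exact Sig2.and (Sig2.of_prim (by fun_prop)) (Sig2.and (hOK.comp (by fun_prop))
      (Sig2.of_prim (by fun_prop)))
  have hNGood : Sig2 (fun z : ℕ × ℕ => ¬ Good z.1 z.2) := by
    refine (Sig2.and (Sig2.of_prim (P := fun z : ℕ × ℕ => z.2 ≠ 2 * 2 ^ z.1) (by fun_prop))
      (Sig2.ball (P := fun z w => ¬ OK w ∨ ¬ w.unpair.1 * 2 ^ z.1 ≤ z.2 * 2 ^ w.unpair.2.unpair.1)
      (f := fun z : ℕ × ℕ => z.1)
      (by fun_prop) (Sig2.or (hNOK.comp (f := fun z : (ℕ × ℕ) × ℕ => z.2)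
        (by fun_prop)) (Sig2.of_prim (by fun_prop))))).of_iff ?_
    intro z
    simp only [Good, not_or, not_exists, not_and, Ne]
    refine and_congr_right fun _ => forall_congr' fun w => imp_congr_right fun _ => ?_
    tauto
  have hlt : ∀ n j, Good n j → γ < (j : ℝ) / 2 ^ n := by
    rintro n j (rfl | ⟨w, -, h1, h3⟩)
    · push_cast
      rw [mul_div_assoc, div_self (by positivity)]
      linarith
    · have h4 : γ < (w.unpair.1 : ℝ) / 2 ^ w.unpair.2.unpair.1 := (hiff (_, _)).2 ⟨_, h1⟩
      refine lt_of_lt_of_le h4 ?_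
      rw [div_le_div_iff₀ (by positivity) (by positivity)]
      exact_mod_cast h3
  refine ⟨b, ?_, fun n => hlt n _ (hb n), fun n => hb' _ _ ?_, ?_, ?_⟩
  · refine (Sig2.and hGood (Sig2.ball (P := fun z i => ¬ Good z.1 i) (f := fun z : ℕ × ℕ => z.2)
      (by fun_prop) (hNGood.comp (f := fun w : (ℕ × ℕ) × ℕ => (w.1.1, w.2))
      (by fun_prop)))).of_iff ?_
    rintro ⟨n, v⟩
    show v = b n ↔ _
    rw [eq_comm]
    exact Nat.find_eq_iff (hG n)
  · rcases hb n with h1 | ⟨w, hw, h1, h3⟩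
    · exact Or.inl (by rw [h1, pow_succ]; ring)
    · exact Or.inr ⟨w, by omega, h1, by rw [pow_succ]; nlinarith⟩
  · intro y hy
    obtain ⟨a, s, h1, h3⟩ := dyadic_between h0 hy
    obtain ⟨k, hk⟩ := (hiff (a, s)).1 h1
    obtain ⟨m, hm⟩ := exists_pow_lt_of_lt_one (sub_pos.2 h3) (by norm_num : (1 / 2 : ℝ) < 1)
    let w := Nat.pair a (Nat.pair s k)
    let n := max s (max (w + 1) m)
    have hg : Good n (a * 2 ^ (n - s)) := by
      refine Or.inr ⟨w, by omega, by simpa [OK, w] using hk, ?_⟩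
      simp only [w, Nat.unpair_pair]
      rw [mul_assoc, ← pow_add, Nat.sub_add_cancel (by omega)]
    refine ⟨n, lt_of_le_of_lt ?_ h3⟩
    have h5 : (b n : ℝ) ≤ a * 2 ^ (n - s) := by exact_mod_cast hb' _ _ hg
    rw [div_le_div_iff₀ (by positivity) (by positivity)]
    calc (b n : ℝ) * 2 ^ s ≤ (a * 2 ^ (n - s)) * 2 ^ s := by gcongr
      _ = a * 2 ^ n := by rw [mul_assoc, ← pow_add, Nat.sub_add_cancel (by omega)]
  · exact hb' _ _ (Or.inl (by norm_num))

/-! ### Digits and measure -/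

theorem measurable_digits : Measurable digits := by
  rw [measurable_pi_iff]
  intro n
  unfold digits
  refine Measurable.comp (g := fun z : ℤ => decide (z % 2 = 1)) (measurable_of_countable _) ?_
  exact Int.measurable_floor.comp (measurable_id.mul_const _)

theorem initSeg_length (X : Cantor) (n : ℕ) : (initSeg X n).length = n := by simp [initSeg]

theorem initSeg_succ (X : Cantor) (n : ℕ) : initSeg X (n + 1) = initSeg X n ++ [X n] := by
  simp [initSeg, List.range_succ]

theorem initSeg_take (X : Cantor) {n m : ℕ} (h : n ≤ m) : (initSeg X m).take n = initSeg X n := by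
  simp only [initSeg, ← List.map_take, List.take_range, min_eq_left h]

theorem initSeg_le (X : Cantor) {n m : ℕ} (h : n ≤ m) : initSeg X n <+: initSeg X m := by
  rw [← initSeg_take X h]
  exact List.take_prefix _ _

theorem initSeg_add (X : Cantor) (n m : ℕ) :
    initSeg X (n + m) = initSeg X n ++ initSeg (fun i => X (n + i)) m := by
  simp only [initSeg, List.range_add, List.map_append, List.map_map]
  rfl

/-- Numerical value of a binary string. -/
def val (σ : List Bool) : ℕ := σ.foldl (fun n b => 2 * n + (if b = true then 1 else 0)) 0

theorem val_append (σ : List Bool) (b : Bool) :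
    val (σ ++ [b]) = 2 * val σ + (if b = true then 1 else 0) := by
  simp [val]

theorem val_nil : val [] = 0 := rfl

theorem val_lt (σ : List Bool) : val σ < 2 ^ σ.length := by
  induction σ using List.reverseRecOn with
  | nil => simp [val]
  | append_singleton σ b ih =>
    rw [val_append]
    simp only [List.length_append, List.length_cons, List.length_nil, zero_add, pow_succ]
    split_ifs <;> omega

theorem val_append_inj {σ τ : List Bool} (h : σ.length = τ.length) (hv : val σ = val τ) :
    σ = τ := by
  induction σ using List.reverseRecOn generalizing τ with
  | nil => simpa [eq_comm] using h
  | append_singleton σ b ih =>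
    rcases List.eq_nil_or_concat τ with rfl | ⟨τ, c, rfl⟩
    · simp at h
    · rw [List.concat_eq_append] at *
      rw [val_append, val_append] at hv
      have hl : σ.length = τ.length := by simpa using h
      have : b = c := by
        cases b <;> cases c <;> simp at hv ⊢ <;> omega
      subst this
      rw [ih hl (by omega)]

theorem val_prim : Primrec val := by
  refine Primrec.list_foldl (f := fun σ : List Bool => σ) (g := fun _ => 0)
    (h := fun _ (z : ℕ × Bool) => 2 * z.1 + (if z.2 = true then 1 else 0)) (by fun_prop)
    (by fun_prop) ?_
  exact Primrec.to₂ (f := fun z : List Bool × ℕ × Bool =>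
    2 * z.2.1 + (if z.2.2 = true then 1 else 0)) (by fun_prop)

theorem floor_two_mul (y : ℝ) (hy : 0 ≤ y) :
    ⌊2 * y⌋₊ = 2 * ⌊y⌋₊ + (if ⌊2 * y⌋ % 2 = 1 then 1 else 0) := by
  have h1 := Nat.floor_le hy
  have h2 := Nat.lt_floor_add_one y
  have h3 : ⌊2 * y⌋ = (⌊2 * y⌋₊ : ℤ) := (Int.natCast_floor_eq_floor (by positivity)).symm
  rw [h3]
  rcases lt_or_ge (2 * y) (2 * (⌊y⌋₊ : ℝ) + 1) with h | h
  · have : ⌊2 * y⌋₊ = 2 * ⌊y⌋₊ := by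
      rw [Nat.floor_eq_iff (by positivity)]
      push_cast
      constructor <;> linarith
    rw [this]
    rw [if_neg (by push_cast; omega)]
    omega
  · have : ⌊2 * y⌋₊ = 2 * ⌊y⌋₊ + 1 := by
      rw [Nat.floor_eq_iff (by positivity)]
      push_cast
      constructor <;> linarith
    rw [this]
    rw [if_pos (by push_cast; omega)]

theorem val_initSeg {x : ℝ} (h0 : 0 ≤ x) (h1 : x < 1) (n : ℕ) :
    val (initSeg (digits x) n) = ⌊x * 2 ^ n⌋₊ := by
  induction n with
  | zero =>
    simp only [initSeg, List.range_zero, List.map_nil, val_nil, pow_zero, mul_one]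
    rw [Nat.floor_eq_zero.2 h1]
  | succ n ih =>
    rw [initSeg_succ, val_append, ih]
    have := floor_two_mul (x * 2 ^ n) (by positivity)
    have e : 2 * (x * 2 ^ n) = x * 2 ^ (n + 1) := by ring
    rw [e] at this
    rw [this]
    simp [digits]

/-- The binary string of length `t` with value `j`. -/
def bits (j t : ℕ) : List Bool := (List.range t).map (fun n => decide ((j / 2 ^ (t - n - 1)) % 2 = 1))

theorem bits_length (j t : ℕ) : (bits j t).length = t := by simp [bits]

theorem bits_succ (j t : ℕ) : bits j (t + 1) = bits (j / 2) t ++ [decide (j % 2 = 1)] := by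
  simp only [bits, List.range_succ, List.map_append, List.map_cons, List.map_nil]
  congr 1
  · refine List.map_congr_left fun n hn => ?_
    have hn : n < t := by simpa using hn
    have e : t + 1 - n - 1 = (t - n - 1) + 1 := by omega
    rw [e, pow_succ', ← Nat.div_div_eq_div_mul]
  · simp

theorem val_bits (j t : ℕ) (h : j < 2 ^ t) : val (bits j t) = j := by
  induction t generalizing j with
  | zero =>
    have : j = 0 := by simpa using h
    subst this
    rfl
  | succ t ih =>
    rw [bits_succ, val_append, ih _ (by rw [pow_succ] at h; omega)]
    rcases Nat.mod_two_eq_zero_or_one j with h | h <;> simp [h] <;> omega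

theorem floor_lt_two_pow {x : ℝ} (h0 : 0 ≤ x) (h1 : x < 1) (t : ℕ) : ⌊x * 2 ^ t⌋₊ < 2 ^ t := by
  rw [Nat.floor_lt (by positivity)]
  push_cast
  have : (0 : ℝ) < 2 ^ t := by positivity
  nlinarith

theorem bits_floor {x : ℝ} (h0 : 0 ≤ x) (h1 : x < 1) (t : ℕ) :
    bits ⌊x * 2 ^ t⌋₊ t = initSeg (digits x) t := by
  apply val_append_inj
  · rw [bits_length, initSeg_length]
  · rw [val_bits _ _ (floor_lt_two_pow h0 h1 t), val_initSeg h0 h1]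

theorem mem_cell {x : ℝ} (h0 : 0 ≤ x) (j t : ℕ) :
    ⌊x * 2 ^ t⌋₊ = j ↔ (j : ℝ) / 2 ^ t ≤ x ∧ x < ((j : ℝ) + 1) / 2 ^ t := by
  rw [Nat.floor_eq_iff (by positivity), div_le_iff₀ (by positivity), lt_div_iff₀ (by positivity)]

theorem bits_prim : Primrec (fun z : ℕ × ℕ => bits z.1 z.2) := by
  unfold bits
  refine pr_map _ _ (by fun_prop) ?_
  exact pr_decide (fun w : (ℕ × ℕ) × ℕ => (w.1.1 / 2 ^ (w.1.2 - w.2 - 1)) % 2 = 1) (by fun_prop)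

/-- Volume of a union of dyadic cells. -/
theorem vol_cells (C : ℕ → Prop) (t : ℕ) :
    volume {x : ℝ | (0 ≤ x ∧ x < 1) ∧ C ⌊x * 2 ^ t⌋₊}
      = ENNReal.ofReal (((((List.range (2 ^ t)).map (fun j => if C j then 1 else 0)).sum : ℕ) : ℝ)
          / 2 ^ t) := by
  have h2 : (0 : ℝ) < 2 ^ t := by positivity
  have e : {x : ℝ | (0 ≤ x ∧ x < 1) ∧ C ⌊x * 2 ^ t⌋₊} = ⋃ j ∈ (Finset.range (2 ^ t)).filter C,
      Set.Ico ((j : ℝ) / 2 ^ t) (((j : ℝ) + 1) / 2 ^ t) := by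
    ext x
    simp only [Set.mem_ofPred_eq, Set.mem_iUnion, Finset.mem_filter, Finset.mem_range, exists_prop,
      Set.mem_Ico]
    constructor
    · rintro ⟨⟨h0, h1⟩, hc⟩
      exact ⟨_, ⟨floor_lt_two_pow h0 h1 t, hc⟩, (mem_cell h0 _ _).1 rfl⟩
    · rintro ⟨j, ⟨hj, hc⟩, hx⟩
      have h0 : 0 ≤ x := le_trans (by positivity) hx.1
      have hf := (mem_cell h0 _ _).2 hx
      refine ⟨⟨h0, lt_of_lt_of_le hx.2 ?_⟩, by rw [hf]; exact hc⟩
      rw [div_le_one h2]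
      exact_mod_cast hj
  rw [e, measure_biUnion_finset]
  · have : ∀ j : ℕ, volume (Set.Ico ((j : ℝ) / 2 ^ t) (((j : ℝ) + 1) / 2 ^ t))
        = ENNReal.ofReal (1 / 2 ^ t) := by
      intro j
      rw [Real.volume_Ico]
      congr 1
      ring
    rw [Finset.sum_congr rfl fun j _ => this j, Finset.sum_const, nsmul_eq_mul]
    have hc : ((List.range (2 ^ t)).map (fun j => if C j then 1 else 0)).sum
        = ((Finset.range (2 ^ t)).filter C).card := by
      rw [Finset.card_filter]
      rfl
    rw [hc, div_eq_mul_one_div (((Finset.range (2 ^ t)).filter C).card : ℝ), ENNReal.ofReal_mul (by positivity), ENNReal.ofReal_natCast]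
  · intro i _ j _ hij
    refine Set.disjoint_left.2 fun x hx hx' => hij ?_
    have h0 : 0 ≤ x := le_trans (by positivity) hx.1
    rw [← (mem_cell h0 i t).2 hx, ← (mem_cell h0 j t).2 hx']
  · intro j _
    exact measurableSet_Ico

theorem mu_eq {S : Set Cantor} (hS : MeasurableSet S) :
    mu S = volume {x : ℝ | (0 ≤ x ∧ x < 1) ∧ digits x ∈ S} := by
  unfold mu
  rw [Measure.map_apply measurable_digits hS, Measure.restrict_apply (measurable_digits hS)]
  congr 1
  ext x
  simp [and_comm]

theorem measurable_initSeg (T : Set (List Bool)) (n : ℕ) :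
    MeasurableSet {X : Cantor | initSeg X n ∈ T} := by
  have hm : Measurable (fun (X : Cantor) (i : Fin n) => X i) :=
    measurable_pi_iff.2 fun i => measurable_pi_apply _
  have : {X : Cantor | initSeg X n ∈ T}
      = (fun (X : Cantor) (i : Fin n) => X i) ⁻¹' {v | List.ofFn v ∈ T} := by
    ext X
    simp only [Set.mem_ofPred_eq, Set.mem_preimage]
    have : List.ofFn (fun i : Fin n => X i) = initSeg X n := by
      rw [List.ofFn_eq_map, initSeg, ← List.map_coe_finRange_eq_range, List.map_map]
      rfl
    rw [this]
  rw [this]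
  exact hm (Set.toFinite _).measurableSet

theorem measurable_monoINF (U : MonoMachine) : MeasurableSet (MonoINF U) := by
  have : MonoINF U = ⋂ k : ℕ, ⋃ n : ℕ, {X | initSeg X n ∈ {σ | ∃ a, a ∈ U.f σ ∧ k ≤ a.length}} := by
    ext X
    simp [MonoINF]
  rw [this]
  exact MeasurableSet.iInter fun k => MeasurableSet.iUnion fun n => measurable_initSeg _ _

/-- The set of reals in the unit interval whose expansion makes `U` produce infinite output. -/
def infR (U : MonoMachine) : Set ℝ := {x : ℝ | (0 ≤ x ∧ x < 1) ∧ digits x ∈ MonoINF U}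

theorem measurable_infR (U : MonoMachine) : MeasurableSet (infR U) := by
  have : infR U = Set.Ico 0 1 ∩ digits ⁻¹' MonoINF U := rfl
  rw [this]
  exact measurableSet_Ico.inter (measurable_digits (measurable_monoINF U))

theorem muR_eq (U : MonoMachine) : muR (MonoINF U) = (volume (infR U)).toReal := by
  rw [muR, mu_eq (measurable_monoINF U)]
  rfl

theorem infR_le_one (S : Set ℝ) (h : S ⊆ Set.Ico 0 1) : volume S ≤ 1 := by
  refine (measure_mono h).trans ?_
  simp

theorem infR_subset (U : MonoMachine) : infR U ⊆ Set.Ico 0 1 := fun _ hx => hx.1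

theorem muR_nonneg (U : MonoMachine) : 0 ≤ muR (MonoINF U) := ENNReal.toReal_nonneg

theorem muR_le_one (U : MonoMachine) : muR (MonoINF U) ≤ 1 := by
  rw [muR_eq]
  exact ENNReal.toReal_le_of_le_ofReal zero_le_one (by simpa using infR_le_one _ (infR_subset U))

/-! ### The probability of infinite output is right-c.e. in the halting problem -/

open Nat.Partrec (Code)

theorem machine_code {f : List Bool →. List Bool} (hf : Partrec f) :
    ∃ c : Code, ∀ σ, c.eval (Encodable.encode σ) = (f σ).map Encodable.encode := by
  obtain ⟨c, hc⟩ := Nat.Partrec.Code.exists_code.1 hf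
  refine ⟨c, fun σ => ?_⟩
  rw [hc]
  simp

theorem sig1_out (U : MonoMachine) :
    Sig1 (fun z : List Bool × ℕ => ∃ a, a ∈ U.f z.1 ∧ z.2 ≤ a.length) := by
  obtain ⟨c, hc⟩ := machine_code U.partrec
  refine ⟨fun z w => ∃ v ∈ Nat.Partrec.Code.evaln w c (Encodable.encode z.1),
    ∃ a ∈ (Encodable.decode v : Option (List Bool)), z.2 ≤ a.length, ?_, ?_⟩
  · refine pp_opt (fun z : (List Bool × ℕ) × ℕ =>
      Nat.Partrec.Code.evaln z.2 c (Encodable.encode z.1.1)) (fun z v =>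
        ∃ a ∈ (Encodable.decode v : Option (List Bool)), z.1.2 ≤ a.length) ?_ ?_
    · exact Nat.Partrec.Code.primrec_evaln.comp
        (f := fun a : (ℕ × Code) × ℕ => Nat.Partrec.Code.evaln a.1.1 a.1.2 a.2)
        (g := fun z : (List Bool × ℕ) × ℕ => ((z.2, c), Encodable.encode z.1.1)) (by fun_prop)
    · exact pp_opt (fun z : ((List Bool × ℕ) × ℕ) × ℕ => (Encodable.decode z.2 : Option (List Bool)))
        (fun z a => z.1.1.2 ≤ a.length) (by fun_prop) (by fun_prop)
  · rintro ⟨σ, k⟩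
    constructor
    · rintro ⟨a, h1, h2⟩
      have : Encodable.encode a ∈ c.eval (Encodable.encode σ) := by
        rw [hc]
        exact Part.mem_map _ h1
      obtain ⟨w, hw⟩ := Nat.Partrec.Code.evaln_complete.1 this
      exact ⟨w, _, hw, a, by simp, h2⟩
    · rintro ⟨w, v, hv, a, ha, h2⟩
      have := Nat.Partrec.Code.evaln_sound hv
      rw [hc] at this
      obtain ⟨a', ha', rfl⟩ := (Part.mem_map_iff _).1 this
      rw [Encodable.encodek, Option.mem_def, Option.some.injEq] at ha
      subst ha
      exact ⟨_, ha', h2⟩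

@[fun_prop] theorem pr_sum {α : Type*} [Primcodable α] (f : α → List ℕ) (hf : Primrec f) :
    Primrec (fun x => (f x).sum) := by
  have : Primrec (fun l : List ℕ => l.foldr (fun a b => a + b) 0) :=
    Primrec.list_foldr (f := fun l : List ℕ => l) (g := fun _ => 0)
      (h := fun _ (z : ℕ × ℕ) => z.1 + z.2) (by fun_prop) (by fun_prop)
      (Primrec.to₂ (f := fun z : List ℕ × ℕ × ℕ => z.2.1 + z.2.2) (by fun_prop))
  exact (this.comp hf).of_eq fun x => by rw [List.sum_eq_foldr]

theorem rc_muR (U : MonoMachine) : RC (muR (MonoINF U)) := by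
  obtain ⟨R, hR, hiff⟩ := sig1_out U
  let C : ℕ → ℕ → ℕ → Prop := fun k t j => ∃ u < t + 1, ∃ w < t + 1, R ((bits j t).take u, k) w
  have hC : PrimrecPred (fun z : (ℕ × ℕ) × ℕ => C z.1.1 z.1.2 z.2) := by
    refine pp_bex (fun z : (ℕ × ℕ) × ℕ => z.1.2 + 1)
      (fun z u => ∃ w < z.1.2 + 1, R ((bits z.2 z.1.2).take u, z.1.1) w) (by fun_prop) ?_
    refine pp_bex (fun z : ((ℕ × ℕ) × ℕ) × ℕ => z.1.1.2 + 1)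
      (fun z w => R ((bits z.1.2 z.1.1.2).take z.2, z.1.1.1) w) (by fun_prop) ?_
    refine pp_comp (f := fun w : (((ℕ × ℕ) × ℕ) × ℕ) × ℕ =>
      (((bits w.1.1.2 w.1.1.1.2).take w.1.2, w.1.1.1.1), w.2)) hR ?_
    have := bits_prim.comp (f := fun z : ℕ × ℕ => bits z.1 z.2)
      (g := fun w : (((ℕ × ℕ) × ℕ) × ℕ) × ℕ => (w.1.1.2, w.1.1.1.2)) (by fun_prop)
    fun_prop
  let N : ℕ → ℕ → ℕ := fun k t => ((List.range (2 ^ t)).map (fun j => if C k t j then 1 else 0)).sum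
  have hN : Primrec (fun z : ℕ × ℕ => N z.1 z.2) := by
    refine pr_sum _ (pr_map _ (fun (z : ℕ × ℕ) j => if C z.1 z.2 j then 1 else 0) (by fun_prop) ?_)
    exact pr_ite _ _ _ hC (by fun_prop) (by fun_prop)
  let V : ℕ → Set ℝ := fun k => {x | (0 ≤ x ∧ x < 1) ∧ ∃ n, ∃ a, a ∈ U.f (initSeg (digits x) n) ∧
    k ≤ a.length}
  let W : ℕ → ℕ → Set ℝ := fun k t => {x | (0 ≤ x ∧ x < 1) ∧ C k t ⌊x * 2 ^ t⌋₊}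
  have hCW : ∀ k t x, x ∈ W k t ↔ (0 ≤ x ∧ x < 1) ∧ ∃ u < t + 1, ∃ w < t + 1,
      R (initSeg (digits x) u, k) w := by
    intro k t x
    refine and_congr_right fun hx => ?_
    simp only [C]
    rw [bits_floor hx.1 hx.2]
    refine exists_congr fun u => and_congr_right fun hu => ?_
    rw [initSeg_take _ (by omega)]
  have hWmono : ∀ k, Monotone (W k) := by
    intro k t t' h x hx
    rw [hCW] at hx ⊢
    obtain ⟨h0, u, hu, w, hw, h1⟩ := hx
    exact ⟨h0, u, by omega, w, by omega, h1⟩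
  have hVW : ∀ k, V k = ⋃ t, W k t := by
    intro k
    ext x
    simp only [Set.mem_iUnion, hCW]
    constructor
    · rintro ⟨h0, n, h⟩
      obtain ⟨w, hw⟩ := (hiff (_, _)).1 h
      exact ⟨max n w, h0, n, by omega, w, by omega, hw⟩
    · rintro ⟨t, h0, u, -, w, -, h⟩
      exact ⟨h0, u, (hiff (_, _)).2 ⟨w, h⟩⟩
  have hvol : ∀ k t, volume (W k t) = ENNReal.ofReal ((N k t : ℝ) / 2 ^ t) := fun k t => by
    convert vol_cells (C k t) t
  have hV1 : ∀ k, volume (V k) ≤ 1 := fun k => infR_le_one _ fun x hx => hx.1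
  have hVanti : Antitone V := by
    intro k k' h x hx
    obtain ⟨h0, n, a, h1, h2⟩ := hx
    exact ⟨h0, n, a, h1, by omega⟩
  have hWm : ∀ k t, MeasurableSet (W k t) := by
    intro k t
    have : Measurable (fun x : ℝ => ⌊x * 2 ^ t⌋₊) := Nat.measurable_floor.comp
      (measurable_id.mul_const _)
    exact measurableSet_Ico.inter (this (MeasurableSet.of_discrete (s := {j | C k t j})))
  have hVm : ∀ k, MeasurableSet (V k) := by
    intro k
    rw [hVW]
    exact MeasurableSet.iUnion (hWm k)
  have hinf : infR U = ⋂ k, V k := by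
    ext x
    simp only [Set.mem_iInter]
    constructor
    · rintro ⟨h0, h⟩ k
      exact ⟨h0, h k⟩
    · intro h
      exact ⟨(h 0).1, fun k => (h k).2⟩
  have hmeas : volume (infR U) = ⨅ k, volume (V k) := by
    rw [hinf]
    exact hVanti.measure_iInter (fun k => (hVm k).nullMeasurableSet)
      ⟨0, ((hV1 0).trans_lt ENNReal.one_lt_top).ne⟩
  have hmeasV : ∀ k, volume (V k) = ⨆ t, volume (W k t) := by
    intro k
    rw [hVW]
    exact (hWmono k).measure_iUnion
  -- the characterization
  refine (Sig2.ex (P := fun (z : ℕ × ℕ) (y : ℕ × ℕ × ℕ) => y.2.1 * 2 ^ z.2 < z.1 * 2 ^ y.2.2 ∧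
    ∀ t, N y.1 t * 2 ^ y.2.2 ≤ y.2.1 * 2 ^ t) ?_).of_iff ?_
  · refine Sig2.and (Sig2.of_prim (by fun_prop)) (Sig2.pi (fun (z : (ℕ × ℕ) × ℕ × ℕ × ℕ) t =>
      N z.2.1 t * 2 ^ z.2.2.2 ≤ z.2.2.1 * 2 ^ t) ?_)
    have := hN.comp (g := fun z : ((ℕ × ℕ) × ℕ × ℕ × ℕ) × ℕ => (z.1.2.1, z.2)) (by fun_prop)
    fun_prop
  · rintro ⟨a, s⟩
    have hne : volume (infR U) ≠ ⊤ :=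
      ((infR_le_one _ (infR_subset U)).trans_lt ENNReal.one_lt_top).ne
    show muR (MonoINF U) < (a : ℝ) / 2 ^ s ↔ _
    rw [muR_eq, ← ENNReal.lt_ofReal_iff_toReal_lt hne, hmeas, iInf_lt_iff]
    have hb : ∀ k (a' s' : ℕ), volume (V k) ≤ ENNReal.ofReal ((a' : ℝ) / 2 ^ s') ↔
        ∀ t, N k t * 2 ^ s' ≤ a' * 2 ^ t := by
      intro k a' s'
      rw [hmeasV, iSup_le_iff]
      refine forall_congr' fun t => ?_
      rw [hvol, ENNReal.ofReal_le_ofReal_iff (by positivity),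
        div_le_div_iff₀ (by positivity) (by positivity)]
      norm_cast
    constructor
    · rintro ⟨k, hk⟩
      have hVne : volume (V k) ≠ ⊤ := ((hV1 k).trans_lt ENNReal.one_lt_top).ne
      rw [ENNReal.lt_ofReal_iff_toReal_lt hVne] at hk
      obtain ⟨a', s', h1, h2⟩ := dyadic_between ENNReal.toReal_nonneg hk
      refine ⟨(k, a', s'), ?_, (hb _ _ _).1 ?_⟩
      · rw [div_lt_div_iff₀ (by positivity) (by positivity)] at h2
        exact_mod_cast h2
      · exact ((ENNReal.lt_ofReal_iff_toReal_lt hVne).2 h1).le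
    · rintro ⟨⟨k, a', s'⟩, h1, h2⟩
      refine ⟨k, lt_of_le_of_lt ((hb _ _ _).2 h2) ?_⟩
      have h3 : (a' : ℝ) / 2 ^ s' < (a : ℝ) / 2 ^ s := by
        rw [div_lt_div_iff₀ (by positivity) (by positivity)]
        exact_mod_cast h1
      exact (ENNReal.ofReal_lt_ofReal_iff_of_nonneg (by positivity)).2 h3

/-! ### Realizing right-c.e. reals -/

theorem inf_tail (U : MonoMachine) (X : Cantor) (l : ℕ) :
    X ∈ MonoINF U ↔ ∀ k, ∃ n a, l ≤ n ∧ a ∈ U.f (initSeg X n) ∧ k ≤ a.length := by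
  constructor
  · intro h k
    have hB : ∀ l, ∃ B, ∀ n < l, ∀ a, a ∈ U.f (initSeg X n) → a.length < B := by
      intro l
      induction l with
      | zero => exact ⟨0, by simp⟩
      | succ l ih =>
        obtain ⟨B, hB⟩ := ih
        by_cases hd : ∃ a, a ∈ U.f (initSeg X l)
        · obtain ⟨a, ha⟩ := hd
          refine ⟨max B (a.length + 1), fun n hn b hb => ?_⟩
          rcases Nat.lt_succ_iff_lt_or_eq.1 hn with h | rfl
          · exact lt_of_lt_of_le (hB n h b hb) (le_max_left _ _)
          · rw [Part.mem_unique hb ha]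
            omega
        · refine ⟨B, fun n hn b hb => ?_⟩
          rcases Nat.lt_succ_iff_lt_or_eq.1 hn with h | rfl
          · exact hB n h b hb
          · exact absurd ⟨b, hb⟩ hd
    obtain ⟨B, hB⟩ := hB l
    obtain ⟨n, a, h1, h2⟩ := h (max k B)
    refine ⟨n, a, ?_, h1, by omega⟩
    by_contra hn
    have := hB n (by omega) a h1
    omega
  · intro h k
    obtain ⟨n, a, -, h1, h2⟩ := h k
    exact ⟨n, a, h1, h2⟩

theorem val_mono {σ τ : List Bool} (h : σ <+: τ) :
    (val τ + 1) * 2 ^ σ.length ≤ (val σ + 1) * 2 ^ τ.length := by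
  obtain ⟨ρ, rfl⟩ := h
  induction ρ using List.reverseRecOn with
  | nil => simp
  | append_singleton ρ b ih =>
    rw [← List.append_assoc, val_append]
    have : 2 * val (σ ++ ρ) + (if b = true then 1 else 0) + 1 ≤ 2 * (val (σ ++ ρ) + 1) := by
      split_ifs <;> omega
    calc _ ≤ 2 * (val (σ ++ ρ) + 1) * 2 ^ σ.length := Nat.mul_le_mul_right _ this
      _ = 2 * ((val (σ ++ ρ) + 1) * 2 ^ σ.length) := by ring
      _ ≤ 2 * ((val σ + 1) * 2 ^ (σ ++ ρ).length) := Nat.mul_le_mul_left _ ih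
      _ = _ := by
        simp only [List.length_append, List.length_cons, List.length_nil]
        ring

theorem exists_machine {γ : ℝ} (h : RC γ) : ∃ V : MonoMachine,
    (∀ σ, (V.f σ).Dom) ∧ ∀ x, 0 ≤ x → x < 1 →
      (x < γ → digits x ∈ MonoINF V) ∧ (γ < x → digits x ∉ MonoINF V) := by
  obtain ⟨R, hR, hiff⟩ := h
  let A : List Bool → ℕ → Prop := fun σ m =>
    (∃ j < σ.length, ¬ R (m.unpair.1, m.unpair.2.unpair.1) m.unpair.2.unpair.2 j) ∨
    (val σ + 1) * 2 ^ m.unpair.2.unpair.1 ≤ m.unpair.1 * 2 ^ σ.length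
  have hA : PrimrecPred (fun z : List Bool × ℕ => A z.1 z.2) := by
    refine pp_or _ _ ?_ ?_
    · refine pp_bex (fun z : List Bool × ℕ => z.1.length) (fun z j =>
        ¬ R (z.2.unpair.1, z.2.unpair.2.unpair.1) z.2.unpair.2.unpair.2 j) (by fun_prop) ?_
      exact pp_not _ (pp_comp (f := fun w : (List Bool × ℕ) × ℕ =>
        ((w.1.2.unpair.1, w.1.2.unpair.2.unpair.1), w.1.2.unpair.2.unpair.2, w.2)) hR (by fun_prop))
    · have := val_prim
      fun_prop
  have hAmono : ∀ σ τ m, σ <+: τ → A σ m → A τ m := by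
    intro σ τ m hst hm
    have hl := hst.length_le
    rcases hm with ⟨j, hj, h⟩ | h
    · exact Or.inl ⟨j, by omega, h⟩
    · right
      have h1 := val_mono hst
      have h2 : 0 < 2 ^ σ.length := by positivity
      refine Nat.le_of_mul_le_mul_right ?_ h2
      calc (val τ + 1) * 2 ^ m.unpair.2.unpair.1 * 2 ^ σ.length
          = ((val τ + 1) * 2 ^ σ.length) * 2 ^ m.unpair.2.unpair.1 := by ring
        _ ≤ ((val σ + 1) * 2 ^ τ.length) * 2 ^ m.unpair.2.unpair.1 := Nat.mul_le_mul_right _ h1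
        _ = ((val σ + 1) * 2 ^ m.unpair.2.unpair.1) * 2 ^ τ.length := by ring
        _ ≤ (m.unpair.1 * 2 ^ σ.length) * 2 ^ τ.length := Nat.mul_le_mul_right _ h
        _ = _ := by ring
  let B : List Bool → ℕ → Prop := fun σ m => ∀ i < m + 1, A σ i
  have hB : PrimrecPred (fun z : List Bool × ℕ => B z.1 z.2) := by
    refine pp_ball (fun z : List Bool × ℕ => z.2 + 1) (fun z i => A z.1 i) (by fun_prop) ?_
    exact pp_comp (f := fun w : (List Bool × ℕ) × ℕ => (w.1.1, w.2)) hA (by fun_prop)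
  let cnt : List Bool → ℕ := fun σ =>
    ((List.range σ.length).map (fun m => if B σ m then 1 else 0)).sum
  have hcnt : Primrec cnt := by
    refine pr_sum _ (pr_map _ (fun (σ : List Bool) m => if B σ m then 1 else 0) (by fun_prop) ?_)
    exact pr_ite _ _ _ hB (by fun_prop) (by fun_prop)
  have hcard : ∀ σ, cnt σ = ((Finset.range σ.length).filter (B σ)).card := by
    intro σ
    rw [Finset.card_filter]
    rfl
  let out : List Bool → List Bool := fun σ => (List.range (cnt σ)).map (fun _ => true)
  have hout : Primrec out := pr_map _ _ (by fun_prop) (by fun_prop)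
  have hmono : ∀ ⦃σ τ a b : List Bool⦄, σ <+: τ → a ∈ Part.some (out σ) →
      b ∈ Part.some (out τ) → a <+: b := by
    intro σ τ a b hst ha hb
    rw [Part.mem_some_iff] at ha hb
    subst ha hb
    have : cnt σ ≤ cnt τ := by
      rw [hcard, hcard]
      apply Finset.card_le_card
      intro m
      simp only [Finset.mem_filter, Finset.mem_range]
      rintro ⟨h1, h2⟩
      exact ⟨lt_of_lt_of_le h1 hst.length_le, fun i hi => hAmono _ _ _ hst (h2 i hi)⟩
    refine ⟨(List.range (cnt τ - cnt σ)).map (fun _ => true), ?_⟩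
    simp only [out, List.map_const', List.length_range, List.replicate_append_replicate]
    congr 1
    omega
  refine ⟨⟨fun σ => Part.some (out σ), hout.to_comp.partrec, hmono⟩, fun σ => trivial, ?_⟩
  · intro x h0 h1
    have hlen : ∀ σ, (out σ).length = cnt σ := by simp [out]
    have hmem : digits x ∈ MonoINF ⟨fun σ => Part.some (out σ), hout.to_comp.partrec, hmono⟩ ↔
        ∀ k, ∃ n, k ≤ cnt (initSeg (digits x) n) := by
      refine forall_congr' fun k => exists_congr fun n => ?_
      constructor
      · rintro ⟨a, h2, h3⟩
        have h2 := Part.mem_some_iff.1 h2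
        rw [h2, hlen] at h3
        exact h3
      · intro h
        exact ⟨_, Part.mem_some _, by rw [hlen]; exact h⟩
    rw [hmem]
    constructor
    · intro hx k
      have hev : ∀ m, ∃ n, A (initSeg (digits x) n) m := by
        intro m
        by_cases hm : ∃ j, ¬ R (m.unpair.1, m.unpair.2.unpair.1) m.unpair.2.unpair.2 j
        · obtain ⟨j, hj⟩ := hm
          exact ⟨j + 1, Or.inl ⟨j, by rw [initSeg_length]; omega, hj⟩⟩
        · push Not at hm
          have h2 : γ < (m.unpair.1 : ℝ) / 2 ^ m.unpair.2.unpair.1 := (hiff (_, _)).2 ⟨_, hm⟩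
          obtain ⟨n, hn⟩ := exists_pow_lt_of_lt_one (sub_pos.2 (hx.trans h2))
            (by norm_num : (1 / 2 : ℝ) < 1)
          refine ⟨n, Or.inr ?_⟩
          rw [val_initSeg h0 h1, initSeg_length]
          have h3 : (⌊x * 2 ^ n⌋₊ : ℝ) ≤ x * 2 ^ n := Nat.floor_le (by positivity)
          have h4 : (1 / 2 : ℝ) ^ n * 2 ^ n = 1 := by rw [← mul_pow]; norm_num
          have h6 : (0 : ℝ) < 2 ^ n := by positivity
          have h5 : ((⌊x * 2 ^ n⌋₊ : ℝ) + 1) ≤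
              (m.unpair.1 : ℝ) / 2 ^ m.unpair.2.unpair.1 * 2 ^ n := by nlinarith
          rw [div_mul_eq_mul_div, le_div_iff₀ (by positivity)] at h5
          exact_mod_cast h5
      choose n hn using hev
      obtain ⟨M, hM⟩ : ∃ M, ∀ i < k, n i ≤ M := by
        refine ⟨(Finset.range k).sup n, fun i hi => Finset.le_sup (Finset.mem_range.2 hi)⟩
      refine ⟨max M k, ?_⟩
      rw [hcard]
      calc k = (Finset.range k).card := (Finset.card_range k).symm
        _ ≤ _ := by
          apply Finset.card_le_card
          intro m
          simp only [Finset.mem_filter, Finset.mem_range]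
          intro hm
          refine ⟨by rw [initSeg_length]; omega, fun i hi => hAmono _ _ _ (initSeg_le _ ?_) (hn i)⟩
          have := hM i (by omega)
          omega
    · intro hx hall
      obtain ⟨a, s, h2, h3⟩ : ∃ a s : ℕ, γ < (a : ℝ) / 2 ^ s ∧ (a : ℝ) / 2 ^ s ≤ x := by
        by_cases hγ : 0 ≤ γ
        · obtain ⟨a, s, h2, h3⟩ := dyadic_between hγ hx
          exact ⟨a, s, h2, h3.le⟩
        · exact ⟨0, 0, by simpa using hγ, by simpa using h0⟩
      obtain ⟨k, hk⟩ := (hiff (a, s)).1 h2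
      obtain ⟨n, hn⟩ := hall (Nat.pair a (Nat.pair s k) + 1)
      rw [hcard] at hn
      have hex : ∃ m ∈ (Finset.range (initSeg (digits x) n).length).filter
          (B (initSeg (digits x) n)), Nat.pair a (Nat.pair s k) ≤ m := by
        by_contra hcon
        push Not at hcon
        have := Finset.card_le_card (fun m hm => Finset.mem_range.2 (hcon m hm))
        rw [Finset.card_range] at this
        omega
      obtain ⟨m, hm, hle⟩ := hex
      have hAm : A (initSeg (digits x) n) (Nat.pair a (Nat.pair s k)) :=
        (Finset.mem_filter.1 hm).2 _ (by omega)
      rcases hAm with ⟨j, -, hj⟩ | h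
      · simp only [Nat.unpair_pair] at hj
        exact hj (hk j)
      · simp only [Nat.unpair_pair, initSeg_length, val_initSeg h0 h1] at h
        have h4 : x * 2 ^ n < (⌊x * 2 ^ n⌋₊ : ℝ) + 1 := Nat.lt_floor_add_one _
        have h5 : ((⌊x * 2 ^ n⌋₊ : ℝ) + 1) * 2 ^ s ≤ a * 2 ^ n := by exact_mod_cast h
        rw [div_le_iff₀ (by positivity)] at h3
        have h6 : (0 : ℝ) < 2 ^ n := by positivity
        have h7 : (0 : ℝ) < 2 ^ s := by positivity
        nlinarith

/-! ### Measures of machines -/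

theorem val_app (σ τ : List Bool) : val (σ ++ τ) = val σ * 2 ^ τ.length + val τ := by
  induction τ using List.reverseRecOn with
  | nil => simp [val_nil]
  | append_singleton τ b ih =>
    rw [← List.append_assoc, val_append, val_append, ih, List.length_append]
    simp only [List.length_cons, List.length_nil]
    ring

theorem cell_mem {σ : List Bool} {x : ℝ} (h0 : 0 ≤ x) (h1 : x < 1) :
    initSeg (digits x) σ.length = σ ↔
      (val σ : ℝ) / 2 ^ σ.length ≤ x ∧ x < ((val σ : ℝ) + 1) / 2 ^ σ.length := by
  rw [← mem_cell h0, ← val_initSeg h0 h1]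
  constructor
  · intro h
    rw [h]
  · intro h
    exact val_append_inj (initSeg_length _ _) h

theorem cell_subset (σ : List Bool) :
    Set.Ico ((val σ : ℝ) / 2 ^ σ.length) (((val σ : ℝ) + 1) / 2 ^ σ.length) ⊆ Set.Ico 0 1 := by
  rintro x ⟨h1, h2⟩
  refine ⟨le_trans (by positivity) h1, lt_of_lt_of_le h2 ?_⟩
  rw [div_le_one (by positivity)]
  exact_mod_cast val_lt σ

theorem cell_split (σ : List Bool) {y : ℝ} (h0 : 0 ≤ y) (h1 : y < 1) (n : ℕ) :
    initSeg (digits (((val σ : ℝ) + y) / 2 ^ σ.length)) (σ.length + n)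
      = σ ++ initSeg (digits y) n := by
  have h2 : (0 : ℝ) < 2 ^ σ.length := by positivity
  have hc : ((val σ : ℝ) + y) / 2 ^ σ.length ∈ Set.Ico (0 : ℝ) 1 := by
    apply cell_subset σ
    constructor <;> gcongr
    linarith
  apply val_append_inj
  · simp [initSeg_length]
  · rw [val_initSeg hc.1 hc.2, val_app, val_initSeg h0 h1, initSeg_length]
    have : ((val σ : ℝ) + y) / 2 ^ σ.length * 2 ^ (σ.length + n)
        = y * 2 ^ n + ((val σ * 2 ^ n : ℕ) : ℝ) := by
      push_cast
      field_simp
      ring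
    rw [this, Nat.floor_add_natCast (by positivity)]
    ring

theorem vol_cell {U V : MonoMachine} (σ : List Bool) (h : ∀ τ, U.f (σ ++ τ) = V.f τ) :
    (volume (infR U ∩ Set.Ico ((val σ : ℝ) / 2 ^ σ.length)
      (((val σ : ℝ) + 1) / 2 ^ σ.length))).toReal = muR (MonoINF V) / 2 ^ σ.length := by
  set S := infR U ∩ Set.Ico ((val σ : ℝ) / 2 ^ σ.length)
      (((val σ : ℝ) + 1) / 2 ^ σ.length) with hS
  have h2 : (0 : ℝ) < 2 ^ σ.length := by positivity
  have hpre : infR V = (fun y => (2 ^ σ.length : ℝ)⁻¹ * y) ⁻¹'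
      ((fun z => (val σ : ℝ) / 2 ^ σ.length + z) ⁻¹' S) := by
    ext y
    have hy : (val σ : ℝ) / 2 ^ σ.length + (2 ^ σ.length : ℝ)⁻¹ * y
        = ((val σ : ℝ) + y) / 2 ^ σ.length := by
      field_simp
    simp only [Set.mem_preimage, hy, hS, Set.mem_inter_iff, Set.mem_Ico]
    rw [div_le_div_iff_of_pos_right h2, div_lt_div_iff_of_pos_right h2]
    by_cases h01 : 0 ≤ y ∧ y < 1
    · have hc : ((val σ : ℝ) + y) / 2 ^ σ.length ∈ Set.Ico (0 : ℝ) 1 := by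
        apply cell_subset σ
        constructor <;> gcongr
        · linarith
        · exact h01.2
      have h3 : digits y ∈ MonoINF V ↔
          digits (((val σ : ℝ) + y) / 2 ^ σ.length) ∈ MonoINF U := by
        rw [inf_tail U _ σ.length]
        refine forall_congr' fun k => ?_
        constructor
        · rintro ⟨n, a, ha, hk⟩
          refine ⟨σ.length + n, a, by omega, ?_, hk⟩
          rw [cell_split σ h01.1 h01.2, h]
          exact ha
        · rintro ⟨n, a, hn, ha, hk⟩
          obtain ⟨m, rfl⟩ := Nat.exists_eq_add_of_le hn
          rw [cell_split σ h01.1 h01.2, h] at ha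
          exact ⟨m, a, ha, hk⟩
      have e1 : y ∈ infR V ↔ digits y ∈ MonoINF V := ⟨fun h => h.2, fun h => ⟨h01, h⟩⟩
      have e2 : ((val σ : ℝ) + y) / 2 ^ σ.length ∈ infR U ↔
          digits (((val σ : ℝ) + y) / 2 ^ σ.length) ∈ MonoINF U :=
        ⟨fun h => h.2, fun h => ⟨⟨hc.1, hc.2⟩, h⟩⟩
      rw [e1, e2, h3]
      constructor
      · intro h; exact ⟨h, by linarith, by linarith⟩
      · intro h; exact h.1
    · constructor
      · intro h; exact absurd h.1 h01
      · rintro ⟨-, h3, h4⟩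
        exact absurd ⟨by linarith, by linarith⟩ h01
  rw [muR_eq, hpre, Real.volume_preimage_mul_left (by positivity), measure_preimage_add,
    ENNReal.toReal_mul, ENNReal.toReal_ofReal (by positivity), inv_inv, abs_of_pos h2]
  field_simp

/-- The machine `U` made divergent on extensions of `σ`. -/
def killM (U : MonoMachine) (σ : List Bool) : MonoMachine where
  f τ := bif decide (τ.take σ.length = σ) then Part.none else U.f τ
  partrec := Partrec.cond (pr_decide (fun τ : List Bool => τ.take σ.length = σ)
    (by fun_prop)).to_comp Partrec.none U.partrec
  mono := by
    intro ρ τ a b h ha hb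
    by_cases h1 : τ.take σ.length = σ
    · simp [h1] at hb
    · by_cases h2 : ρ.take σ.length = σ
      · exfalso
        apply h1
        obtain ⟨z, rfl⟩ := h
        have : σ.length ≤ ρ.length := by
          have := congrArg List.length h2
          simp at this
          exact this
        rw [List.take_append_of_le_length this, h2]
      · simp only [h1, h2, decide_false, cond_false] at ha hb
        exact U.mono h ha hb

theorem infR_kill (U : MonoMachine) (σ : List Bool) :
    infR (killM U σ) = infR U \ Set.Ico ((val σ : ℝ) / 2 ^ σ.length)
      (((val σ : ℝ) + 1) / 2 ^ σ.length) := by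
  ext x
  by_cases h01 : 0 ≤ x ∧ x < 1
  · have e1 : ∀ U, x ∈ infR U ↔ digits x ∈ MonoINF U := fun U => ⟨fun h => h.2, fun h => ⟨h01, h⟩⟩
    rw [Set.mem_diff, e1, e1, Set.mem_Ico, ← cell_mem h01.1 h01.2]
    by_cases hc : initSeg (digits x) σ.length = σ
    · simp only [hc, not_true, and_false, iff_false]
      rw [inf_tail _ _ σ.length]
      intro h
      obtain ⟨n, a, hn, ha, -⟩ := h 0
      simp [killM, initSeg_take _ hn, hc] at ha
    · simp only [hc, not_false_iff, and_true]
      refine forall_congr' fun k => exists_congr fun n => exists_congr fun a => ?_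
      have : (initSeg (digits x) n).take σ.length ≠ σ := by
        intro h
        have hl := congrArg List.length h
        simp [initSeg_length] at hl
        rw [initSeg_take _ hl] at h
        exact hc h
      simp [killM, this]
  · constructor
    · intro h; exact absurd h.1 h01
    · intro h; exact absurd h.1.1 h01

theorem muR_split {U V : MonoMachine} (σ : List Bool) (h : ∀ τ, U.f (σ ++ τ) = V.f τ) :
    muR (MonoINF U) = muR (MonoINF V) / 2 ^ σ.length + muR (MonoINF (killM U σ)) := by
  rw [← vol_cell σ h, muR_eq U, muR_eq (killM U σ), infR_kill, ← ENNReal.toReal_add,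
    measure_inter_add_diff _ measurableSet_Ico]
  · exact ((infR_le_one _ (Set.inter_subset_left.trans (infR_subset U))).trans_lt
      ENNReal.one_lt_top).ne
  · exact ((infR_le_one _ (Set.diff_subset.trans (infR_subset U))).trans_lt
      ENNReal.one_lt_top).ne

theorem muR_realize {γ : ℝ} (h0 : 0 ≤ γ) (h1 : γ ≤ 1) (h : RC γ) :
    ∃ V : MonoMachine, muR (MonoINF V) = γ := by
  obtain ⟨V, -, hV⟩ := exists_machine h
  refine ⟨V, ?_⟩
  rw [muR_eq]
  have a1 : volume (infR V) = ENNReal.ofReal γ := by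
    apply le_antisymm
    · have : infR V ⊆ Set.Icc 0 γ := by
        intro x hx
        refine ⟨hx.1.1, ?_⟩
        by_contra hlt
        exact (hV x hx.1.1 hx.1.2).2 (not_le.1 hlt) hx.2
      refine (measure_mono this).trans ?_
      simp
    · have : Set.Ico 0 γ ⊆ infR V := by
        intro x hx
        exact ⟨⟨hx.1, by linarith [hx.2]⟩, (hV x hx.1 (by linarith [hx.2])).1 hx.2⟩
      refine le_trans ?_ (measure_mono this)
      simp
  rw [a1, ENNReal.toReal_ofReal h0]

/-! ### Interval codes and a random right-c.e. real -/

open Nat.Partrec (Code)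

def iL (x : ℕ) : ℕ := x.unpair.1
def iR (x : ℕ) : ℕ := x.unpair.2.unpair.1
def iS (x : ℕ) : ℕ := x.unpair.2.unpair.2

@[fun_prop] theorem iL_prim : Primrec iL := by unfold iL; fun_prop
@[fun_prop] theorem iR_prim : Primrec iR := by unfold iR; fun_prop
@[fun_prop] theorem iS_prim : Primrec iS := by unfold iS; fun_prop

/-- The open interval with code `x`. -/
def iI (x : ℕ) : Set ℝ := Set.Ioo ((iL x : ℝ) / 2 ^ iS x) ((iR x : ℝ) / 2 ^ iS x)
/-- The length of the interval with code `x`. -/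
noncomputable def iLen (x : ℕ) : ℝ := ((iR x - iL x : ℕ) : ℝ) / 2 ^ iS x

theorem iLen_nonneg (x : ℕ) : 0 ≤ iLen x := by unfold iLen; positivity

theorem vol_iI (x : ℕ) : volume (iI x) ≤ ENNReal.ofReal (iLen x) := by
  rw [iI, Real.volume_Ioo]
  apply ENNReal.ofReal_le_ofReal
  rw [iLen, ← sub_div]
  gcongr
  have : (iR x : ℝ) ≤ ((iR x - iL x + iL x : ℕ) : ℝ) := by
    exact_mod_cast (by omega : iR x ≤ iR x - iL x + iL x)
  push_cast at this
  linarith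

theorem vol_of_sums (S : Set ℕ) (c : ℝ)
    (h : ∀ F : Finset ℕ, (∀ x ∈ F, x ∈ S) → ∑ x ∈ F, iLen x ≤ c) :
    volume (⋃ x ∈ S, iI x) ≤ ENNReal.ofReal c := by
  refine (measure_biUnion_le volume S.to_countable iI).trans ?_
  rw [ENNReal.tsum_eq_iSup_sum]
  apply iSup_le
  intro F
  calc ∑ x ∈ F, volume (iI x) ≤ ∑ x ∈ F, ENNReal.ofReal (iLen x) :=
        Finset.sum_le_sum fun x _ => vol_iI x
    _ = ENNReal.ofReal (∑ x ∈ F, iLen x) :=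
        (ENNReal.ofReal_sum_of_nonneg fun x _ => iLen_nonneg x.1).symm
    _ = ENNReal.ofReal (∑ x ∈ F.map (Function.Embedding.subtype _), iLen x) := by
        rw [Finset.sum_map]
        rfl
    _ ≤ _ := by
        apply ENNReal.ofReal_le_ofReal
        apply h
        intro x hx
        obtain ⟨y, -, rfl⟩ := Finset.mem_map.1 hx
        exact y.2

/-- Halting of the `e`-th program on `⟨i, p⟩`. -/
def hlt (e i p : ℕ) : Prop := ((Denumerable.ofNat Code e).eval (Nat.pair i p)).Dom

theorem hlt_sig1 : Sig1 (fun z : ℕ × ℕ × ℕ => hlt z.1 z.2.1 z.2.2) :=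
  Sig1.comp (f := fun z : ℕ × ℕ × ℕ => (Denumerable.ofNat Code z.1, Nat.pair z.2.1 z.2.2))
    sig1_dom (Primrec.pair ((Primrec.ofNat Code).comp Primrec.fst) (by fun_prop))

def Small (e i p : ℕ) : Prop := ∃ Z : List ℕ, ∃ t : ℕ,
  (∀ q < p + 1, q.unpair.1 ∈ Z ∨ hlt e i q) ∧
  ((∀ x ∈ Z, iS x ≤ t) ∧ (Z.map (fun x => (iR x - iL x) * 2 ^ (t - iS x))).sum * 2 ^ i ≤ 2 ^ t)

def InT (e i p : ℕ) : Prop := ¬ hlt e i p ∧ Small e i p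

theorem mem_list_prim : PrimrecPred (fun z : ℕ × List ℕ => z.1 ∈ z.2) :=
  (pp_bex_list (fun z : ℕ × List ℕ => z.2) (fun z y => y = z.1) (by fun_prop)
    (by fun_prop)).of_eq fun z => by simp

theorem inT_sig2 : Sig2 (fun z : ℕ × ℕ × ℕ => InT z.1 z.2.1 z.2.2) := by
  refine Sig2.and (Sig2.of_not hlt_sig1) ?_
  refine Sig2.ex (P := fun (z : ℕ × ℕ × ℕ) (Z : List ℕ) => ∃ t : ℕ,
    (∀ q < z.2.2 + 1, q.unpair.1 ∈ Z ∨ hlt z.1 z.2.1 q) ∧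
    ((∀ x ∈ Z, iS x ≤ t) ∧
      (Z.map (fun x => (iR x - iL x) * 2 ^ (t - iS x))).sum * 2 ^ z.2.1 ≤ 2 ^ t)) ?_
  refine Sig2.ex (P := fun (z : (ℕ × ℕ × ℕ) × List ℕ) (t : ℕ) =>
    (∀ q < z.1.2.2 + 1, q.unpair.1 ∈ z.2 ∨ hlt z.1.1 z.1.2.1 q) ∧
    ((∀ x ∈ z.2, iS x ≤ t) ∧
      (z.2.map (fun x => (iR x - iL x) * 2 ^ (t - iS x))).sum * 2 ^ z.1.2.1 ≤ 2 ^ t)) ?_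
  refine Sig2.and ?_ (Sig2.of_prim (pp_and _ _ ?_ ?_))
  · refine Sig2.ball (P := fun (z : ((ℕ × ℕ × ℕ) × List ℕ) × ℕ) q =>
      q.unpair.1 ∈ z.1.2 ∨ hlt z.1.1.1 z.1.1.2.1 q) (f := fun z => z.1.1.2.2 + 1)
      (by fun_prop) ?_
    refine Sig2.or (Sig2.of_prim ?_) (Sig2.of_sig1 ?_)
    · exact pp_comp (f := fun w : (((ℕ × ℕ × ℕ) × List ℕ) × ℕ) × ℕ => (w.2.unpair.1, w.1.1.2))
        mem_list_prim (by fun_prop)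
    · exact Sig1.comp (f := fun w : (((ℕ × ℕ × ℕ) × List ℕ) × ℕ) × ℕ =>
        (w.1.1.1.1, w.1.1.1.2.1, w.2)) hlt_sig1 (by fun_prop)
  · exact pp_ball_list (fun z : ((ℕ × ℕ × ℕ) × List ℕ) × ℕ => z.1.2) (fun z x => iS x ≤ z.2)
      (by fun_prop) (by fun_prop)
  · have : Primrec (fun z : ((ℕ × ℕ × ℕ) × List ℕ) × ℕ =>
        (z.1.2.map (fun x => (iR x - iL x) * 2 ^ (z.2 - iS x))).sum) :=
      pr_sum _ (pr_map _ (fun (z : ((ℕ × ℕ × ℕ) × List ℕ) × ℕ) x =>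
        (iR x - iL x) * 2 ^ (z.2 - iS x)) (by fun_prop) (by fun_prop))
    fun_prop

theorem sum_scaled (Z : List ℕ) (t : ℕ) (h : ∀ x ∈ Z, iS x ≤ t) :
    (((Z.map (fun x => (iR x - iL x) * 2 ^ (t - iS x))).sum : ℕ) : ℝ)
      = (Z.map iLen).sum * 2 ^ t := by
  induction Z with
  | nil => simp
  | cons x Z ih =>
    simp only [List.map_cons, List.sum_cons, Nat.cast_add]
    rw [ih (fun y hy => h y (List.mem_cons_of_mem _ hy)), add_mul, iLen]
    congr 1
    have := h x List.mem_cons_self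
    push_cast
    rw [pow_sub₀ _ (by norm_num) this]
    field_simp

theorem small_iff (Z : List ℕ) (t i : ℕ) (h : ∀ x ∈ Z, iS x ≤ t) :
    (Z.map (fun x => (iR x - iL x) * 2 ^ (t - iS x))).sum * 2 ^ i ≤ 2 ^ t ↔
      (Z.map iLen).sum ≤ (2 : ℝ)⁻¹ ^ i := by
  have h1 := sum_scaled Z t h
  rw [inv_pow, ← one_div, le_div_iff₀ (by positivity)]
  have h2 : (0 : ℝ) < 2 ^ t := by positivity
  rw [← @Nat.cast_le ℝ]
  push_cast
  push_cast at h1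
  rw [h1]
  constructor
  · intro h; nlinarith
  · intro h; nlinarith

def TT (e : ℕ) : Set ℕ := {x | ∃ k, InT e (e + 2) (Nat.pair x k)}

theorem TT_sums (e : ℕ) (F : Finset ℕ) (hF : ∀ x ∈ F, x ∈ TT e) :
    ∑ x ∈ F, iLen x ≤ (2 : ℝ)⁻¹ ^ (e + 2) := by
  rcases F.eq_empty_or_nonempty with rfl | hne
  · simp
  have hk : ∀ x : ℕ, ∃ k, x ∈ F → InT e (e + 2) (Nat.pair x k) := by
    intro x
    by_cases hx : x ∈ F
    · obtain ⟨k, hk⟩ := hF x hx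
      exact ⟨k, fun _ => hk⟩
    · exact ⟨0, fun h => absurd h hx⟩
  choose k hk using hk
  obtain ⟨m, hm, hmax⟩ := F.exists_max_image (fun x => Nat.pair x (k x)) hne
  obtain ⟨-, Z, t, h1, h2, h3⟩ := hk m hm
  rw [small_iff Z t _ h2] at h3
  have hsub : ∀ x ∈ F, x ∈ Z.toFinset := by
    intro x hx
    rcases h1 (Nat.pair x (k x)) (by have := hmax x hx; omega) with h | h
    · simpa using h
    · exact absurd h (hk x hx).1
  calc ∑ x ∈ F, iLen x ≤ ∑ x ∈ Z.toFinset, iLen x :=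
        Finset.sum_le_sum_of_subset_of_nonneg hsub fun x _ _ => iLen_nonneg x
    _ ≤ (Z.map iLen).sum := by
        clear h1 h2 h3 hsub
        induction Z with
        | nil => simp
        | cons y Z ih =>
          rw [List.toFinset_cons, List.map_cons, List.sum_cons]
          by_cases hy : y ∈ Z.toFinset
          · rw [Finset.insert_eq_of_mem hy]
            linarith [iLen_nonneg y]
          · rw [Finset.sum_insert hy]
            linarith
    _ ≤ _ := h3

def GG : Set ℝ := ⋃ e : ℕ, ⋃ x ∈ TT e, iI x

theorem GG_open : IsOpen GG :=
  isOpen_iUnion fun _ => isOpen_iUnion fun _ => isOpen_iUnion fun _ => isOpen_Ioo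

theorem GG_vol : volume GG ≤ ENNReal.ofReal (1 / 2) := by
  refine (measure_iUnion_le _).trans ?_
  calc ∑' e, volume (⋃ x ∈ TT e, iI x) ≤ ∑' e : ℕ, ENNReal.ofReal ((2 : ℝ)⁻¹ ^ (e + 2)) :=
        ENNReal.tsum_le_tsum fun e => vol_of_sums _ _ (TT_sums e)
    _ = ENNReal.ofReal (∑' e : ℕ, (2 : ℝ)⁻¹ ^ (e + 2)) := by
        rw [ENNReal.ofReal_tsum_of_nonneg]
        · intro e; positivity
        · simp only [pow_add]
          exact (summable_geometric_of_lt_one (by norm_num) (by norm_num)).mul_right _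
    _ = _ := by
        simp only [pow_add]
        rw [tsum_mul_right, tsum_geometric_of_lt_one (by norm_num) (by norm_num)]
        norm_num

theorem exists_beta : ∃ β : ℝ, 1 / 2 ≤ β ∧ β ≤ 1 ∧ β ∉ GG ∧ ∀ x, β < x → x ≤ 1 → x ∈ GG := by
  have hc : IsCompact (Set.Icc (0 : ℝ) 1 \ GG) := isCompact_Icc.diff GG_open
  have hne : (Set.Icc (0 : ℝ) 1 \ GG).Nonempty := by
    rw [Set.nonempty_iff_ne_empty]
    intro h
    rw [Set.sdiff_eq_empty] at h
    have := (measure_mono h).trans GG_vol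
    rw [Real.volume_Icc] at this
    rw [ENNReal.ofReal_le_ofReal_iff (by norm_num)] at this
    norm_num at this
  have hmem := hc.sSup_mem hne
  have hgt : ∀ x, sSup (Set.Icc (0 : ℝ) 1 \ GG) < x → x ≤ 1 → x ∈ GG := by
    intro x h1 h2
    by_contra hx
    have := le_csSup hc.bddAbove (show x ∈ _ from ⟨⟨by linarith [hmem.1.1], h2⟩, hx⟩)
    linarith
  refine ⟨_, ?_, hmem.1.2, hmem.2, hgt⟩
  have := (measure_mono (fun x (hx : x ∈ Set.Ioc _ _) => hgt x hx.1 hx.2)).trans GG_vol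
  rw [Real.volume_Ioc, ENNReal.ofReal_le_ofReal_iff (by norm_num)] at this
  linarith

def CellG (t j : ℕ) : Prop := ∃ w : ℕ × ℕ, InT w.1 (w.1 + 2) w.2 ∧
  (iL w.2.unpair.1 * 2 ^ t < j * 2 ^ iS w.2.unpair.1 ∧
    (j + 1) * 2 ^ iS w.2.unpair.1 < iR w.2.unpair.1 * 2 ^ t)

theorem cellG_sig2 : Sig2 (fun z : ℕ × ℕ => CellG z.1 z.2) := by
  refine Sig2.ex (P := fun (z : ℕ × ℕ) (w : ℕ × ℕ) => InT w.1 (w.1 + 2) w.2 ∧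
    (iL w.2.unpair.1 * 2 ^ z.1 < z.2 * 2 ^ iS w.2.unpair.1 ∧
    (z.2 + 1) * 2 ^ iS w.2.unpair.1 < iR w.2.unpair.1 * 2 ^ z.1)) ?_
  refine Sig2.and ?_ (Sig2.of_prim (by fun_prop))
  exact Sig2.comp (f := fun z : (ℕ × ℕ) × (ℕ × ℕ) => (z.2.1, z.2.1 + 2, z.2.2)) inT_sig2
    (by fun_prop)

theorem cellG_sub {t j : ℕ} (h : CellG t j) {x : ℝ} (h1 : (j : ℝ) / 2 ^ t ≤ x)
    (h2 : x ≤ ((j : ℝ) + 1) / 2 ^ t) : x ∈ GG := by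
  obtain ⟨⟨e, p⟩, h3, h4, h5⟩ := h
  simp only at h3 h4 h5
  refine Set.mem_iUnion.2 ⟨e, Set.mem_biUnion (x := p.unpair.1) ⟨p.unpair.2, ?_⟩ ⟨?_, ?_⟩⟩
  · rw [Nat.pair_unpair]
    exact h3
  · refine lt_of_lt_of_le ?_ h1
    rw [div_lt_div_iff₀ (by positivity) (by positivity)]
    exact_mod_cast h4
  · refine lt_of_le_of_lt h2 ?_
    rw [div_lt_div_iff₀ (by positivity) (by positivity)]
    exact_mod_cast h5

theorem exists_random : ∃ β : ℝ, 1 / 2 ≤ β ∧ β ≤ 1 ∧ RC β ∧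
    ∀ D : ℕ → ℕ → Prop, Sig2 (fun z : ℕ × ℕ => D z.1 z.2) →
      (∀ i, ∀ F : Finset ℕ, (∀ x ∈ F, D i x) → ∑ x ∈ F, iLen x ≤ (2 : ℝ)⁻¹ ^ i) →
      ∃ i, ∀ x, D i x → β ∉ iI x := by
  obtain ⟨β, hb1, hb2, hb3, hb4⟩ := exists_beta
  refine ⟨β, hb1, hb2, ?_, ?_⟩
  · -- right c.e.
    have key : ∀ z : ℕ × ℕ, β < (z.1 : ℝ) / 2 ^ z.2 ↔
        ∃ t : ℕ, ∀ j < 2 ^ t, (j + 1) * 2 ^ z.2 < z.1 * 2 ^ t ∨ CellG t j := by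
      rintro ⟨a, s⟩
      simp only
      constructor
      · intro h
        have hcov : Set.Icc ((a : ℝ) / 2 ^ s) 1 ⊆
            ⋃ w : {w : ℕ × ℕ // InT w.1 (w.1 + 2) w.2}, iI w.1.2.unpair.1 := by
          intro x hx
          obtain ⟨e, he⟩ := Set.mem_iUnion.1 (hb4 x (lt_of_lt_of_le h hx.1) hx.2)
          simp only [Set.mem_iUnion] at he
          obtain ⟨y, ⟨k, hk⟩, hy⟩ := he
          refine Set.mem_iUnion.2 ⟨⟨(e, Nat.pair y k), hk⟩, ?_⟩
          simpa using hy
        obtain ⟨δ, hδ, hL⟩ := lebesgue_number_lemma_of_metric isCompact_Icc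
          (fun w => isOpen_Ioo) hcov
        obtain ⟨t, ht⟩ := exists_pow_lt_of_lt_one hδ (by norm_num : (1 / 2 : ℝ) < 1)
        refine ⟨t, fun j hj => ?_⟩
        by_cases hlt : (j + 1) * 2 ^ s < a * 2 ^ t
        · exact Or.inl hlt
        · right
          have h2t : (0 : ℝ) < 2 ^ t := by positivity
          have e1 : (a : ℝ) / 2 ^ s ≤ ((j : ℝ) + 1) / 2 ^ t := by
            rw [div_le_div_iff₀ (by positivity) (by positivity)]
            exact_mod_cast not_lt.1 hlt
          have e2 : ((j : ℝ) + 1) / 2 ^ t ≤ 1 := by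
            rw [div_le_one h2t]
            exact_mod_cast hj
          obtain ⟨⟨⟨e, p⟩, hw⟩, hball⟩ := hL _ ⟨e1, e2⟩
          have m1 := hball (Metric.mem_ball_self hδ)
          have m2 : (j : ℝ) / 2 ^ t ∈ Metric.ball (((j : ℝ) + 1) / 2 ^ t) δ := by
            rw [Metric.mem_ball, Real.dist_eq, ← sub_div]
            have : (j : ℝ) - (j + 1) = -1 := by ring
            rw [this, abs_div, abs_neg, abs_one, abs_of_pos h2t]
            rw [div_pow, one_pow] at ht
            exact ht
          have m2 := hball m2
          refine ⟨(e, p), hw, ?_, ?_⟩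
          · have := m2.1
            rw [div_lt_div_iff₀ (by positivity) (by positivity)] at this
            exact_mod_cast this
          · have := m1.2
            rw [div_lt_div_iff₀ (by positivity) (by positivity)] at this
            exact_mod_cast this
      · rintro ⟨t, ht⟩
        by_contra hcon
        rw [not_lt] at hcon
        have h2t : (0 : ℝ) < 2 ^ t := by positivity
        -- find the cell of beta
        obtain ⟨j, hj, h1, h2⟩ : ∃ j : ℕ, j < 2 ^ t ∧
            (j : ℝ) / 2 ^ t ≤ β ∧ β ≤ ((j : ℝ) + 1) / 2 ^ t := by
          by_cases h1 : β < 1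
          · refine ⟨⌊β * 2 ^ t⌋₊, floor_lt_two_pow (by linarith) h1 t, ?_⟩
            have := (mem_cell (by linarith : 0 ≤ β) _ t).1 rfl
            exact ⟨this.1, this.2.le⟩
          · have : β = 1 := by linarith
            have hp : 0 < 2 ^ t := by positivity
            refine ⟨2 ^ t - 1, by omega, ?_, ?_⟩
            · rw [this, div_le_one h2t]
              push_cast [Nat.one_le_two_pow]
              linarith
            · rw [this, le_div_iff₀ h2t]
              push_cast [Nat.one_le_two_pow]
              linarith
        rcases ht j hj with h | h
        · have : ((j : ℝ) + 1) / 2 ^ t < (a : ℝ) / 2 ^ s := by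
            rw [div_lt_div_iff₀ (by positivity) (by positivity)]
            exact_mod_cast h
          linarith
        · exact hb3 (cellG_sub h h1 h2)
    refine Sig2.of_iff ?_ key
    refine Sig2.ex (P := fun (z : ℕ × ℕ) (t : ℕ) =>
      ∀ j < 2 ^ t, (j + 1) * 2 ^ z.2 < z.1 * 2 ^ t ∨ CellG t j) ?_
    refine Sig2.ball (P := fun (z : (ℕ × ℕ) × ℕ) (j : ℕ) =>
      (j + 1) * 2 ^ z.1.2 < z.1.1 * 2 ^ z.2 ∨ CellG z.2 j) (f := fun z => 2 ^ z.2)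
      (by fun_prop) ?_
    refine Sig2.or (Sig2.of_prim (by fun_prop)) ?_
    exact Sig2.comp (f := fun z : ((ℕ × ℕ) × ℕ) × ℕ => (z.1.2, z.2)) cellG_sig2 (by fun_prop)
  · intro D hD hsum
    obtain ⟨R, hR, hiff⟩ := hD
    have hpart : Partrec (fun n : ℕ => Nat.rfind (fun j : ℕ => Part.some (decide
        (¬ R (n.unpair.1, n.unpair.2.unpair.1) n.unpair.2.unpair.2 j)))) := by
      refine Partrec.rfind ?_
      have := pp_decide (pp_not _ (pp_comp (f := fun w : ℕ × ℕ =>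
        ((w.1.unpair.1, w.1.unpair.2.unpair.1), w.1.unpair.2.unpair.2, w.2)) hR (by fun_prop)))
      exact (this.to_comp).partrec.to₂
    obtain ⟨c, hc⟩ := Code.exists_code.1 (Partrec.nat_iff.1 hpart)
    set e := Encodable.encode c with he
    have hdom : ∀ i p, hlt e i p ↔ ∃ j, ¬ R (i, p.unpair.1) p.unpair.2 j := by
      intro i p
      unfold hlt
      rw [he, Denumerable.ofNat_encode, hc]
      refine Nat.rfind_dom.trans ?_
      simp only [Nat.unpair_pair, Part.mem_some_iff]
      constructor
      · rintro ⟨n, hn, -⟩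
        exact ⟨n, by simpa using hn⟩
      · rintro ⟨n, hn⟩
        exact ⟨n, by simpa using hn, fun _ => trivial⟩
    have hD : ∀ i x, D i x ↔ ∃ k, ¬ hlt e i (Nat.pair x k) := by
      intro i x
      refine (hiff (i, x)).trans (exists_congr fun k => ?_)
      rw [hdom]
      simp
    refine ⟨e + 2, fun x hx hmem => hb3 ?_⟩
    obtain ⟨k, hk⟩ := (hD _ _).1 hx
    refine Set.mem_iUnion.2 ⟨e, Set.mem_biUnion (x := x) ⟨k, hk, ?_⟩ hmem⟩
    set F := (((Finset.range (Nat.pair x k + 1)).filter (fun q => ¬ hlt e (e + 2) q)).image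
      (fun q => q.unpair.1)) with hF
    have hs := hsum (e + 2) F (by
      intro y hy
      rw [hF, Finset.mem_image] at hy
      obtain ⟨q, hq, rfl⟩ := hy
      rw [hD]
      refine ⟨q.unpair.2, ?_⟩
      rw [Nat.pair_unpair]
      exact (Finset.mem_filter.1 hq).2)
    refine ⟨F.toList, F.sup iS, ?_, ?_, ?_⟩
    · intro q hq
      by_cases h : hlt e (e + 2) q
      · exact Or.inr h
      · left
        rw [Finset.mem_toList, hF, Finset.mem_image]
        exact ⟨q, Finset.mem_filter.2 ⟨Finset.mem_range.2 hq, h⟩, rfl⟩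
    · intro y hy
      exact Finset.le_sup (Finset.mem_toList.1 hy)
    · rw [small_iff _ _ _ fun y hy => Finset.le_sup (Finset.mem_toList.1 hy)]
      rw [Finset.sum_map_toList]
      exact hs

/-! ### Disjoint dyadic cells inside a test -/

/-- The closed dyadic cell `(s,k)` is strictly inside the rational interval with code `w`. -/
def CellIn (w s k : ℕ) : Prop := (ValidQ w.unpair.1 ∧ ValidQ w.unpair.2) ∧
  (QLt w.unpair.1 k s ∧ QGt w.unpair.2 (k + 1) s)

theorem cellIn_prim : PrimrecPred (fun z : ℕ × ℕ × ℕ => CellIn z.1 z.2.1 z.2.2) := by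
  refine pp_and _ _ (pp_and _ _ ?_ ?_) (pp_and _ _ ?_ ?_)
  · exact pp_comp (f := fun z : ℕ × ℕ × ℕ => z.1.unpair.1) validQ_prim (by fun_prop)
  · exact pp_comp (f := fun z : ℕ × ℕ × ℕ => z.1.unpair.2) validQ_prim (by fun_prop)
  · exact pp_comp (f := fun z : ℕ × ℕ × ℕ => (z.1.unpair.1, z.2.2, z.2.1)) qLt_prim (by fun_prop)
  · exact pp_comp (f := fun z : ℕ × ℕ × ℕ => (z.1.unpair.2, z.2.2 + 1, z.2.1)) qGt_prim
      (by fun_prop)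

theorem cellIn_iff (p q : ℚ) (s k : ℕ) : CellIn (Encodable.encode (p, q)) s k ↔
    (p : ℝ) < (k : ℝ) / 2 ^ s ∧ ((k : ℝ) + 1) / 2 ^ s < q := by
  have e : Encodable.encode (p, q) = Nat.pair (Encodable.encode p) (Encodable.encode q) := rfl
  have h2 := qGt_iff q (k + 1) s
  push_cast at h2
  rw [qLt_iff, h2, CellIn, e, Nat.unpair_pair]
  simp only [← validQ_iff, exists_apply_eq_apply, true_and]

theorem cellIn_valid {w s k : ℕ} (h : CellIn w s k) :
    ∃ p q : ℚ, Encodable.encode (p, q) = w := by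
  obtain ⟨⟨h1, h2⟩, -⟩ := h
  obtain ⟨p, hp⟩ := (validQ_iff _).2 h1
  obtain ⟨q, hq⟩ := (validQ_iff _).2 h2
  refine ⟨p, q, ?_⟩
  have e : Encodable.encode (p, q) = Nat.pair (Encodable.encode p) (Encodable.encode q) := rfl
  rw [e, hp, hq, Nat.pair_unpair]

theorem floor_pow_div {x : ℝ} (t s : ℕ) (h : t ≤ s) :
    ⌊x * 2 ^ s⌋₊ / 2 ^ (s - t) = ⌊x * 2 ^ t⌋₊ := by
  have : x * 2 ^ t = x * 2 ^ s / ((2 ^ (s - t) : ℕ) : ℝ) := by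
    push_cast
    rw [pow_sub₀ _ (by norm_num) h]
    field_simp
  rw [this, Nat.floor_div_natCast]

theorem cells_of_test (W : Set ℕ) (hW : Sig2 (fun m => m ∈ W))
    (hvol : ∀ i, volume (testSet W i) ≤ ENNReal.ofReal ((2 : ℝ)⁻¹ ^ i)) :
    ∃ D : ℕ → ℕ → ℕ → Prop, Sig2 (fun z : ℕ × ℕ × ℕ => D z.1 z.2.1 z.2.2) ∧
      (∀ i x, 0 ≤ x → x ∈ testSet W i → ∃ s k : ℕ, D i s k ∧
        (k : ℝ) / 2 ^ s ≤ x ∧ x < ((k : ℝ) + 1) / 2 ^ s) ∧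
      (∀ i, ∀ F : Finset (ℕ × ℕ), (∀ z ∈ F, D i z.1 z.2) →
        ∑ z ∈ F, (2 : ℝ)⁻¹ ^ z.1 ≤ (2 : ℝ)⁻¹ ^ i) := by
  obtain ⟨R, hR, hiff⟩ := hW
  let C : ℕ → ℕ → ℕ → Prop := fun i s k => ∃ w < s + 1, ∃ l < s + 1,
    CellIn w s k ∧ ∀ j, R (Nat.pair i w) l j
  let NC : ℕ → ℕ → ℕ → Prop := fun i s k => ∀ w < s + 1, ∀ l < s + 1,
    ¬ CellIn w s k ∨ ∃ j, ¬ R (Nat.pair i w) l j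
  have hNC : ∀ i s k, NC i s k ↔ ¬ C i s k := by
    intro i s k
    simp only [NC, C]
    push Not
    simp only [imp_iff_not_or]
  have hCs : Sig2 (fun z : ℕ × ℕ × ℕ => C z.1 z.2.1 z.2.2) := by
    refine Sig2.ex (P := fun (z : ℕ × ℕ × ℕ) w => w < z.2.1 + 1 ∧ ∃ l < z.2.1 + 1,
      CellIn w z.2.1 z.2.2 ∧ ∀ j, R (Nat.pair z.1 w) l j) ?_
    refine Sig2.and (Sig2.of_prim (by fun_prop)) ?_
    refine Sig2.ex (P := fun (z : (ℕ × ℕ × ℕ) × ℕ) l => l < z.1.2.1 + 1 ∧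
      CellIn z.2 z.1.2.1 z.1.2.2 ∧ ∀ j, R (Nat.pair z.1.1 z.2) l j) ?_
    refine Sig2.and (Sig2.of_prim (by fun_prop)) (Sig2.and (Sig2.of_prim ?_) (Sig2.pi (fun
      (z : ((ℕ × ℕ × ℕ) × ℕ) × ℕ) j => R (Nat.pair z.1.1.1 z.1.2) z.2 j) ?_))
    · exact pp_comp (f := fun z : ((ℕ × ℕ × ℕ) × ℕ) × ℕ => (z.1.2, z.1.1.2.1, z.1.1.2.2))
        cellIn_prim (by fun_prop)
    · exact pp_comp (f := fun z : (((ℕ × ℕ × ℕ) × ℕ) × ℕ) × ℕ =>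
        (Nat.pair z.1.1.1.1 z.1.1.2, z.1.2, z.2)) hR (by fun_prop)
  have hNCs : Sig2 (fun z : ℕ × ℕ × ℕ => NC z.1 z.2.1 z.2.2) := by
    refine Sig2.ball (P := fun (z : ℕ × ℕ × ℕ) w => ∀ l < z.2.1 + 1,
      ¬ CellIn w z.2.1 z.2.2 ∨ ∃ j, ¬ R (Nat.pair z.1 w) l j) (f := fun z => z.2.1 + 1)
      (by fun_prop) ?_
    refine Sig2.ball (P := fun (z : (ℕ × ℕ × ℕ) × ℕ) l =>
      ¬ CellIn z.2 z.1.2.1 z.1.2.2 ∨ ∃ j, ¬ R (Nat.pair z.1.1 z.2) l j)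
      (f := fun z => z.1.2.1 + 1) (by fun_prop) ?_
    refine Sig2.or (Sig2.of_prim (pp_not _ ?_)) (Sig2.ex (P := fun
      (z : ((ℕ × ℕ × ℕ) × ℕ) × ℕ) j => ¬ R (Nat.pair z.1.1.1 z.1.2) z.2 j)
      (Sig2.of_prim (pp_not _ ?_)))
    · exact pp_comp (f := fun z : ((ℕ × ℕ × ℕ) × ℕ) × ℕ => (z.1.2, z.1.1.2.1, z.1.1.2.2))
        cellIn_prim (by fun_prop)
    · exact pp_comp (f := fun z : (((ℕ × ℕ × ℕ) × ℕ) × ℕ) × ℕ =>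
        (Nat.pair z.1.1.1.1 z.1.1.2, z.1.2, z.2)) hR (by fun_prop)
  have hCsub : ∀ i s k, C i s k → Set.Ico ((k : ℝ) / 2 ^ s) (((k : ℝ) + 1) / 2 ^ s) ⊆
      testSet W i := by
    rintro i s k ⟨w, -, l, -, hw, hj⟩ x ⟨hx1, hx2⟩
    obtain ⟨p, q, rfl⟩ := cellIn_valid hw
    rw [cellIn_iff] at hw
    exact ⟨p, q, (hiff _).2 ⟨l, hj⟩, by linarith, by linarith⟩
  have hCex : ∀ i x, 0 ≤ x → x ∈ testSet W i → ∃ s, C i s ⌊x * 2 ^ s⌋₊ := by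
    rintro i x h0 ⟨p, q, hpq, h1, h2⟩
    obtain ⟨l, hl⟩ := (hiff _).1 hpq
    obtain ⟨t, ht⟩ := exists_pow_lt_of_lt_one (lt_min (sub_pos.2 h1) (sub_pos.2 h2))
      (by norm_num : (1 / 2 : ℝ) < 1)
    set s := max t (max l (Encodable.encode (p, q))) with hs
    have hst : t ≤ s := le_max_left _ _
    have hps : (1 / 2 : ℝ) ^ s ≤ (1 / 2) ^ t :=
      pow_le_pow_of_le_one (by norm_num) (by norm_num) hst
    refine ⟨s, Encodable.encode (p, q), by omega, l, by omega, ?_, hl⟩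
    rw [cellIn_iff]
    have hx := (mem_cell h0 _ s).1 rfl
    rw [lt_min_iff] at ht
    rw [add_div] at hx ⊢
    rw [div_pow, one_pow] at hps
    constructor
    · linarith [hx.2, ht.1]
    · linarith [hx.1, ht.2]
  refine ⟨fun i s k => C i s k ∧ ∀ t < s, NC i t (k / 2 ^ (s - t)), ?_, ?_, ?_⟩
  · refine Sig2.and hCs (Sig2.ball (P := fun (z : ℕ × ℕ × ℕ) t =>
      NC z.1 t (z.2.2 / 2 ^ (z.2.1 - t))) (f := fun z => z.2.1) (by fun_prop) ?_)
    exact Sig2.comp (f := fun z : (ℕ × ℕ × ℕ) × ℕ => (z.1.1, z.2, z.1.2.2 / 2 ^ (z.1.2.1 - z.2)))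
      hNCs (by fun_prop)
  · intro i x h0 hx
    have hex := hCex i x h0 hx
    refine ⟨Nat.find hex, ⌊x * 2 ^ Nat.find hex⌋₊, ⟨Nat.find_spec hex, fun t ht => ?_⟩,
      (mem_cell h0 _ _).1 rfl⟩
    rw [hNC, floor_pow_div _ _ ht.le]
    exact Nat.find_min hex ht
  · intro i F hF
    have hdis : Set.PairwiseDisjoint (↑F : Set (ℕ × ℕ)) (fun z : ℕ × ℕ =>
        Set.Ico ((z.2 : ℝ) / 2 ^ z.1) (((z.2 : ℝ) + 1) / 2 ^ z.1)) := by
      have key : ∀ z ∈ F, ∀ z' ∈ F, z.1 ≤ z'.1 → ∀ x : ℝ,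
          x ∈ Set.Ico ((z.2 : ℝ) / 2 ^ z.1) (((z.2 : ℝ) + 1) / 2 ^ z.1) →
          x ∈ Set.Ico ((z'.2 : ℝ) / 2 ^ z'.1) (((z'.2 : ℝ) + 1) / 2 ^ z'.1) → z = z' := by
        rintro ⟨s, k⟩ hz ⟨s', k'⟩ hz' hle x hx hx'
        have h0 : 0 ≤ x := le_trans (by positivity) hx.1
        have e1 := (mem_cell h0 _ _).2 hx
        have e2 := (mem_cell h0 _ _).2 hx'
        simp only at e1 e2 hle
        rcases hle.lt_or_eq with h | rfl
        · exfalso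
          have := (hF _ hz').2 s h
          simp only at this
          rw [hNC, ← e2, floor_pow_div _ _ h.le, e1] at this
          exact this (hF _ hz).1
        · rw [← e1, ← e2]
      intro z hz z' hz' hne
      refine Set.disjoint_left.2 fun x hx hx' => hne ?_
      rcases le_total z.1 z'.1 with h | h
      · exact key z hz z' hz' h x hx hx'
      · exact (key z' hz' z hz h x hx' hx).symm
    have hm := measure_biUnion_finset (μ := volume) hdis (fun z _ => measurableSet_Ico)
    have hle : volume (⋃ z ∈ F, Set.Ico ((z.2 : ℝ) / 2 ^ z.1) (((z.2 : ℝ) + 1) / 2 ^ z.1))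
        ≤ ENNReal.ofReal ((2 : ℝ)⁻¹ ^ i) := by
      refine (measure_mono ?_).trans (hvol i)
      exact Set.iUnion₂_subset fun z hz => hCsub i _ _ (hF z hz).1
    rw [hm] at hle
    have hv : ∀ z : ℕ × ℕ, volume (Set.Ico ((z.2 : ℝ) / 2 ^ z.1) (((z.2 : ℝ) + 1) / 2 ^ z.1))
        = ENNReal.ofReal ((2 : ℝ)⁻¹ ^ z.1) := by
      intro z
      rw [Real.volume_Ico, ← sub_div, add_sub_cancel_left, inv_pow, one_div]
    simp only [hv] at hle
    rw [← ENNReal.ofReal_sum_of_nonneg (fun z _ => by positivity),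
      ENNReal.ofReal_le_ofReal_iff (by positivity)] at hle
    exact hle

theorem transfer {β γ : ℝ} (hβ0 : 0 < β) (hβ : RC β) (hβ1 : β ≤ 1) (hγ0 : 0 ≤ γ) (hγ1 : γ ≤ 1)
    (hγ : RC γ) (c : ℕ)
    (hrand : ∀ D : ℕ → ℕ → Prop, Sig2 (fun z : ℕ × ℕ => D z.1 z.2) →
      (∀ i, ∀ F : Finset ℕ, (∀ x ∈ F, D i x) → ∑ x ∈ F, iLen x ≤ (2 : ℝ)⁻¹ ^ i) →
      ∃ i, ∀ x, D i x → β ∉ iI x) :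
    MLRandomIn (iterJump 1) (β / 2 ^ c + γ) := by
  intro W hW hvol
  by_contra hall
  push Not at hall
  obtain ⟨D, hDs, hDc, hDm⟩ := cells_of_test W (sig2_of_ce hW) hvol
  obtain ⟨b, hb⟩ := exists_approx hβ0.le (by linarith) hβ
  obtain ⟨g, hg⟩ := exists_approx hγ0 (by linarith) hγ
  let Q : ℕ → ℕ → ℕ → ℕ → ℕ → Prop := fun n s k u v =>
    (u + 2 ^ c * v) * 2 ^ s ≤ (k + 1) * 2 ^ (n + c)
  let E : ℕ → ℕ → ℕ × ℕ × ℕ × ℕ × ℕ → Prop := fun i x y =>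
    D (i + c) y.1 y.2.1 ∧ (y.2.2.2.1 = b y.2.2.1 ∧ (y.2.2.2.2 = g y.2.2.1 ∧
      ((∀ m < y.2.2.1, ∃ w : ℕ × ℕ, w.1 = b m ∧ (w.2 = g m ∧ ¬ Q m y.1 y.2.1 w.1 w.2)) ∧
      (Q y.2.2.1 y.1 y.2.1 y.2.2.2.1 y.2.2.2.2 ∧
      x = Nat.pair (2 ^ c * (y.2.1 * 2 ^ y.2.2.1 - y.2.2.2.2 * 2 ^ y.1))
        (Nat.pair (y.2.2.2.1 * 2 ^ y.1) (y.2.2.1 + y.1))))))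
  have hs1 : Sig2 (fun z : ℕ × ℕ => ∃ y, E z.1 z.2 y) := by
    refine Sig2.ex (P := fun (z : ℕ × ℕ) y => E z.1 z.2 y) ?_
    refine Sig2.and ?_ (Sig2.and ?_ (Sig2.and ?_ (Sig2.and ?_ (Sig2.of_prim (by simp only [Q]; fun_prop)))))
    · exact Sig2.comp (f := fun z : (ℕ × ℕ) × (ℕ × ℕ × ℕ × ℕ × ℕ) =>
        (z.1.1 + c, z.2.1, z.2.2.1)) hDs (by fun_prop)
    · exact Sig2.comp (f := fun z : (ℕ × ℕ) × (ℕ × ℕ × ℕ × ℕ × ℕ) =>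
        (z.2.2.2.1, z.2.2.2.2.1)) hb.gr (by fun_prop)
    · exact Sig2.comp (f := fun z : (ℕ × ℕ) × (ℕ × ℕ × ℕ × ℕ × ℕ) =>
        (z.2.2.2.1, z.2.2.2.2.2)) hg.gr (by fun_prop)
    · refine Sig2.ball (P := fun (z : (ℕ × ℕ) × (ℕ × ℕ × ℕ × ℕ × ℕ)) m =>
        ∃ w : ℕ × ℕ, w.1 = b m ∧ (w.2 = g m ∧ ¬ Q m z.2.1 z.2.2.1 w.1 w.2))
        (f := fun z => z.2.2.2.1) (by fun_prop) ?_
      refine Sig2.ex (P := fun (z : ((ℕ × ℕ) × (ℕ × ℕ × ℕ × ℕ × ℕ)) × ℕ) (w : ℕ × ℕ) =>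
        w.1 = b z.2 ∧ (w.2 = g z.2 ∧ ¬ Q z.2 z.1.2.1 z.1.2.2.1 w.1 w.2)) ?_
      refine Sig2.and ?_ (Sig2.and ?_ (Sig2.of_prim (by simp only [Q]; fun_prop)))
      · exact Sig2.comp (f := fun z : (((ℕ × ℕ) × (ℕ × ℕ × ℕ × ℕ × ℕ)) × ℕ) × (ℕ × ℕ) =>
          (z.1.2, z.2.1)) hb.gr (by fun_prop)
      · exact Sig2.comp (f := fun z : (((ℕ × ℕ) × (ℕ × ℕ × ℕ × ℕ × ℕ)) × ℕ) × (ℕ × ℕ) =>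
          (z.1.2, z.2.2)) hg.gr (by fun_prop)
  have hs2 : ∀ i, ∀ F : Finset ℕ, (∀ x ∈ F, ∃ y, E i x y) → ∑ x ∈ F, iLen x ≤ (2 : ℝ)⁻¹ ^ i := by
    intro i F hF
    have hch : ∀ x : ℕ, ∃ y, x ∈ F → E i x y := by
      intro x
      by_cases hx : x ∈ F
      · obtain ⟨y, hy⟩ := hF x hx
        exact ⟨y, fun _ => hy⟩
      · exact ⟨default, fun h => absurd h hx⟩
    choose y hy using hch
    have hinj : Set.InjOn (fun x => ((y x).1, (y x).2.1)) (↑F : Set ℕ) := by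
      intro x hx x' hx' hxx
      obtain ⟨-, e1, e2, e3, e4, e5⟩ := hy x hx
      obtain ⟨-, f1, f2, f3, f4, f5⟩ := hy x' hx'
      simp only [Prod.mk.injEq] at hxx
      obtain ⟨h1, h2⟩ := hxx
      have hnn : (y x).2.2.1 = (y x').2.2.1 := by
        rcases lt_trichotomy (y x).2.2.1 (y x').2.2.1 with h | h | h
        · obtain ⟨⟨u, v⟩, hu, hv, hq⟩ := f3 _ h
          simp only at hu hv hq
          rw [hu, hv, ← e1, ← e2, ← h1, ← h2] at hq
          exact absurd e4 hq
        · exact h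
        · obtain ⟨⟨u, v⟩, hu, hv, hq⟩ := e3 _ h
          simp only at hu hv hq
          rw [hu, hv, ← f1, ← f2, h1, h2] at hq
          exact absurd f4 hq
      rw [e5, f5, e1, e2, f1, f2, h1, h2, hnn]
    have hsum := hDm (i + c) (F.image (fun x => ((y x).1, (y x).2.1))) (by
      intro z hz
      obtain ⟨x, hx, rfl⟩ := Finset.mem_image.1 hz
      exact (hy x hx).1)
    rw [Finset.sum_image hinj] at hsum
    have hlen : ∀ x ∈ F, iLen x ≤ 2 ^ c * (2 : ℝ)⁻¹ ^ (y x).1 := by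
      intro x hx
      obtain ⟨-, e1, e2, e3, e4, e5⟩ := hy x hx
      clear hsum hinj
      generalize y x = yx at *
      obtain ⟨s, k, n, u, v⟩ := yx
      simp only [Q] at e4 e5 ⊢
      rw [e5]
      simp only [iLen, iL, iR, iS, Nat.unpair_pair]
      have h1 : u * 2 ^ s - 2 ^ c * (k * 2 ^ n - v * 2 ^ s) ≤ 2 ^ n * 2 ^ c := by
        have h2 : k * 2 ^ n ≤ (k * 2 ^ n - v * 2 ^ s) + v * 2 ^ s := by omega
        have h3 := Nat.mul_le_mul_left (2 ^ c) h2
        rw [pow_add] at e4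
        have h4 : (u + 2 ^ c * v) * 2 ^ s = u * 2 ^ s + 2 ^ c * (v * 2 ^ s) := by ring
        have h5 : (k + 1) * (2 ^ n * 2 ^ c) = 2 ^ c * (k * 2 ^ n) + 2 ^ n * 2 ^ c := by ring
        rw [h4, h5] at e4
        rw [Nat.mul_add] at h3
        omega
      have h2 : ((u * 2 ^ s - 2 ^ c * (k * 2 ^ n - v * 2 ^ s) : ℕ) : ℝ) ≤ 2 ^ n * 2 ^ c := by
        exact_mod_cast h1
      rw [div_le_iff₀ (by positivity), pow_add]
      refine h2.trans (le_of_eq ?_)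
      have : (2 : ℝ)⁻¹ ^ s * 2 ^ s = 1 := by rw [← mul_pow]; norm_num
      linear_combination -((2 : ℝ) ^ c * 2 ^ n) * this
    calc ∑ x ∈ F, iLen x ≤ ∑ x ∈ F, 2 ^ c * (2 : ℝ)⁻¹ ^ (y x).1 := Finset.sum_le_sum hlen
      _ = 2 ^ c * ∑ x ∈ F, (2 : ℝ)⁻¹ ^ (y x).1 := by rw [Finset.mul_sum]
      _ ≤ 2 ^ c * (2 : ℝ)⁻¹ ^ (i + c) := by gcongr
      _ = (2 : ℝ)⁻¹ ^ i := by
        rw [pow_add]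
        have : (2 : ℝ)⁻¹ ^ c * 2 ^ c = 1 := by rw [← mul_pow]; norm_num
        linear_combination (2 : ℝ)⁻¹ ^ i * this
  obtain ⟨i, hi⟩ := hrand (fun i x => ∃ y, E i x y) hs1 hs2
  obtain ⟨s, k, hd, h1, h2⟩ := hDc (i + c) _ (by positivity) (hall (i + c))
  have hQiff : ∀ n, Q n s k (b n) (g n) ↔
      ((b n : ℝ) / 2 ^ n) / 2 ^ c + (g n : ℝ) / 2 ^ n ≤ ((k : ℝ) + 1) / 2 ^ s := by
    intro n
    have : ((b n : ℝ) / 2 ^ n) / 2 ^ c + (g n : ℝ) / 2 ^ n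
        = ((b n : ℝ) + 2 ^ c * g n) / 2 ^ (n + c) := by
      rw [pow_add]
      field_simp
    rw [this, div_le_div_iff₀ (by positivity) (by positivity)]
    simp only [Q]
    rw [← @Nat.cast_le ℝ]
    push_cast
    rfl
  have hex : ∃ n, Q n s k (b n) (g n) := by
    set δ := ((k : ℝ) + 1) / 2 ^ s - (β / 2 ^ c + γ) with hδ
    have hpc : (1 : ℝ) ≤ 2 ^ c := one_le_pow₀ (by norm_num)
    obtain ⟨n1, hn1⟩ := hb.lim (β + δ / 2) (by linarith)
    obtain ⟨n2, hn2⟩ := hg.lim (γ + δ / 2) (by linarith)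
    refine ⟨max n1 n2, (hQiff _).2 ?_⟩
    have a1 := hb.anti (le_max_left n1 n2)
    have a2 := hg.anti (le_max_right n1 n2)
    simp only at a1 a2
    have a3 : ((b (max n1 n2) : ℝ) / 2 ^ max n1 n2) / 2 ^ c ≤ (β + δ / 2) / 2 ^ c := by
      gcongr
      linarith
    have a4 : (δ / 2) / 2 ^ c ≤ δ / 2 := div_le_self (by linarith) hpc
    rw [add_div] at a3
    linarith
  set n := Nat.find hex with hn
  have hQn : Q n s k (b n) (g n) := Nat.find_spec hex
  refine hi _ ⟨(s, k, n, b n, g n), hd, rfl, rfl, fun m hm => ⟨(b m, g m), rfl, rfl,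
    Nat.find_min hex hm⟩, hQn, rfl⟩ ?_
  have hp1 : (0 : ℝ) < 2 ^ n := by positivity
  have hp2 : (0 : ℝ) < 2 ^ s := by positivity
  have hp3 : (0 : ℝ) < 2 ^ c := by positivity
  constructor
  · simp only [iL, iS, Nat.unpair_pair]
    rcases le_total (g n * 2 ^ s) (k * 2 ^ n) with hle | hle
    · push_cast [hle]
      have h3 := hg.lt n
      have h4 : (2 : ℝ) ^ c * (k * 2 ^ n - g n * 2 ^ s) / 2 ^ (n + s)
          = 2 ^ c * ((k : ℝ) / 2 ^ s - (g n : ℝ) / 2 ^ n) := by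
        rw [pow_add]
        field_simp
      rw [h4]
      have h5 : (k : ℝ) / 2 ^ s - (g n : ℝ) / 2 ^ n < β / 2 ^ c := by linarith
      rw [lt_div_iff₀ hp3] at h5
      linarith
    · rw [Nat.sub_eq_zero_of_le hle]
      simpa using hβ0
  · simp only [iR, iS, Nat.unpair_pair]
    push_cast
    have h4 : (b n : ℝ) * 2 ^ s / 2 ^ (n + s) = (b n : ℝ) / 2 ^ n := by
      rw [pow_add]
      field_simp
    rw [h4]
    exact hb.lt n

/-! ### First direction, and existence of universal machines -/

open Nat.Partrec (Code)

theorem direction_one (U : MonoMachine) (hU : UniversalMono U) :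
    NRandom 2 (muR (MonoINF U)) ∧ RightCeIn (iterJump 1) (muR (MonoINF U)) := by
  refine ⟨?_, rightCe_of_rc (muR_nonneg U) (rc_muR U)⟩
  obtain ⟨β, hb1, hb2, hb3, hb4⟩ := exists_random
  obtain ⟨V, hV⟩ := muR_realize (by linarith) hb2 hb3
  obtain ⟨M, σ, -, hM, -, -, hU⟩ := hU
  obtain ⟨e, he⟩ := hM V
  have hs := muR_split (U := U) (V := V) (σ e) (fun τ => by rw [hU, he])
  rw [hs, hV]
  exact transfer (by linarith) hb3 hb2 (muR_nonneg _) (muR_le_one _) (rc_muR _) _ hb4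

/-- Output of the `e`-th program on the string with code `m` within `s` steps. -/
def stageOut (e s m : ℕ) : Option (List Bool) :=
  (Code.evaln s (Denumerable.ofNat Code e) m).bind (fun a => (Encodable.decode a))

theorem stageOut_prim : Primrec (fun z : ℕ × ℕ × ℕ => stageOut z.1 z.2.1 z.2.2) := by
  unfold stageOut
  refine Primrec.option_bind ?_ (Primrec.to₂ (f := fun w : (ℕ × ℕ × ℕ) × ℕ =>
    (Encodable.decode w.2 : Option (List Bool))) (by fun_prop))
  refine Code.primrec_evaln.comp (g := fun z : ℕ × ℕ × ℕ =>
    ((z.2.1, Denumerable.ofNat Code z.1), z.2.2)) ?_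
  exact Primrec.pair (Primrec.pair (by fun_prop) ((Primrec.ofNat Code).comp Primrec.fst))
    (by fun_prop)

theorem stageOut_mono {e s s' m : ℕ} {a : List Bool} (h : s ≤ s') (ha : a ∈ stageOut e s m) :
    a ∈ stageOut e s' m := by
  unfold stageOut at ha ⊢
  rw [Option.mem_def, Option.bind_eq_some_iff] at ha ⊢
  obtain ⟨n, h1, h2⟩ := ha
  exact ⟨n, Code.evaln_mono h h1, h2⟩

theorem stageOut_bound {e s m : ℕ} {a : List Bool} (ha : a ∈ stageOut e s m) : m < s := by
  unfold stageOut at ha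
  rw [Option.mem_def, Option.bind_eq_some_iff] at ha
  obtain ⟨n, h1, h2⟩ := ha
  exact Code.evaln_bound h1

/-- Stage `s` exhibits no violation of monotonicity. -/
def StageOK (e s : ℕ) : Prop := ∀ m < s, ∀ m' < s,
  ¬ ∃ τ ∈ (Encodable.decode m : Option (List Bool)), ∃ τ' ∈ (Encodable.decode m' : Option (List Bool)),
    ∃ a ∈ stageOut e s m, ∃ b ∈ stageOut e s m',
      (Encodable.encode τ = m ∧ Encodable.encode τ' = m') ∧
      τ'.take τ.length = τ ∧ ¬ b.take a.length = a

theorem stageOK_prim : PrimrecPred (fun z : ℕ × ℕ => StageOK z.1 z.2) := by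
  unfold StageOK
  refine pp_ball (fun z : ℕ × ℕ => z.2) (fun z m => ∀ m' < z.2,
    ¬ ∃ τ ∈ (Encodable.decode m : Option (List Bool)),
      ∃ τ' ∈ (Encodable.decode m' : Option (List Bool)),
      ∃ a ∈ stageOut z.1 z.2 m, ∃ b ∈ stageOut z.1 z.2 m',
      (Encodable.encode τ = m ∧ Encodable.encode τ' = m') ∧
      τ'.take τ.length = τ ∧ ¬ b.take a.length = a) (by fun_prop) ?_
  refine pp_ball (fun z : (ℕ × ℕ) × ℕ => z.1.2) (fun z m' =>
    ¬ ∃ τ ∈ (Encodable.decode z.2 : Option (List Bool)),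
      ∃ τ' ∈ (Encodable.decode m' : Option (List Bool)),
      ∃ a ∈ stageOut z.1.1 z.1.2 z.2, ∃ b ∈ stageOut z.1.1 z.1.2 m',
      (Encodable.encode τ = z.2 ∧ Encodable.encode τ' = m') ∧
      τ'.take τ.length = τ ∧ ¬ b.take a.length = a) (by fun_prop) ?_
  refine pp_not _ ?_
  refine pp_opt (fun z : ((ℕ × ℕ) × ℕ) × ℕ => (Encodable.decode z.1.2 : Option (List Bool)))
    (fun z τ => ∃ τ' ∈ (Encodable.decode z.2 : Option (List Bool)),
      ∃ a ∈ stageOut z.1.1.1 z.1.1.2 z.1.2, ∃ b ∈ stageOut z.1.1.1 z.1.1.2 z.2,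
      (Encodable.encode τ = z.1.2 ∧ Encodable.encode τ' = z.2) ∧
      τ'.take τ.length = τ ∧ ¬ b.take a.length = a) (by fun_prop) ?_
  refine pp_opt (fun z : (((ℕ × ℕ) × ℕ) × ℕ) × List Bool =>
    (Encodable.decode z.1.2 : Option (List Bool)))
    (fun z τ' =>
      ∃ a ∈ stageOut z.1.1.1.1 z.1.1.1.2 z.1.1.2, ∃ b ∈ stageOut z.1.1.1.1 z.1.1.1.2 z.1.2,
      (Encodable.encode z.2 = z.1.1.2 ∧ Encodable.encode τ' = z.1.2) ∧
      τ'.take z.2.length = z.2 ∧ ¬ b.take a.length = a) (by fun_prop) ?_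
  refine pp_opt (fun z : ((((ℕ × ℕ) × ℕ) × ℕ) × List Bool) × List Bool =>
    stageOut z.1.1.1.1.1 z.1.1.1.1.2 z.1.1.1.2)
    (fun z a => ∃ b ∈ stageOut z.1.1.1.1.1 z.1.1.1.1.2 z.1.1.2,
      (Encodable.encode z.1.2 = z.1.1.1.2 ∧ Encodable.encode z.2 = z.1.1.2) ∧
      z.2.take z.1.2.length = z.1.2 ∧ ¬ b.take a.length = a) ?_ ?_
  · exact stageOut_prim.comp (g := fun z : ((((ℕ × ℕ) × ℕ) × ℕ) × List Bool) × List Bool =>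
      (z.1.1.1.1.1, z.1.1.1.1.2, z.1.1.1.2)) (by fun_prop)
  refine pp_opt (fun z : (((((ℕ × ℕ) × ℕ) × ℕ) × List Bool) × List Bool) × List Bool =>
    stageOut z.1.1.1.1.1.1 z.1.1.1.1.1.2 z.1.1.1.2)
    (fun z b => (Encodable.encode z.1.1.2 = z.1.1.1.1.2 ∧ Encodable.encode z.1.2 = z.1.1.1.2) ∧
      z.1.2.take z.1.1.2.length = z.1.1.2 ∧ ¬ b.take z.2.length = z.2) ?_ (by fun_prop)
  exact stageOut_prim.comp
    (g := fun z : (((((ℕ × ℕ) × ℕ) × ℕ) × List Bool) × List Bool) × List Bool =>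
      (z.1.1.1.1.1.1, z.1.1.1.1.1.2, z.1.1.1.2)) (by fun_prop)

theorem stageOK_use {e s : ℕ} (h : StageOK e s) {τ τ' a b : List Bool}
    (ha : a ∈ stageOut e s (Encodable.encode τ)) (hb : b ∈ stageOut e s (Encodable.encode τ'))
    (hp : τ <+: τ') : a <+: b := by
  have := h _ (stageOut_bound ha) _ (stageOut_bound hb)
  push Not at this
  have := this τ (by simp) τ' (by simp) a ha b hb ⟨rfl, rfl⟩ (List.prefix_iff_eq_take.1 hp).symm
  exact List.prefix_iff_eq_take.2 this.symm

/-- Step function of the enumeration of all monotone machines. -/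
noncomputable def enumStep (e : ℕ) (τ : List Bool) (s : ℕ) : Option (List Bool) :=
  if StageOK e s then stageOut e s (Encodable.encode τ) else none

theorem enumStep_prim : Primrec (fun z : (ℕ × List Bool) × ℕ => enumStep z.1.1 z.1.2 z.2) := by
  unfold enumStep
  refine pr_ite _ _ _ ?_ ?_ (by fun_prop)
  · exact pp_comp (f := fun z : (ℕ × List Bool) × ℕ => (z.1.1, z.2)) stageOK_prim (by fun_prop)
  · exact stageOut_prim.comp (g := fun z : (ℕ × List Bool) × ℕ =>
      (z.1.1, z.2, Encodable.encode z.1.2)) (by fun_prop)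

theorem enum_partrec : Partrec₂ (fun (e : ℕ) (τ : List Bool) => Nat.rfindOpt (enumStep e τ)) :=
  Partrec.rfindOpt (f := fun (z : ℕ × List Bool) s => enumStep z.1 z.2 s) enumStep_prim.to_comp.to₂

/-- The effective list of all monotone machines. -/
noncomputable def enumM (e : ℕ) : MonoMachine where
  f τ := Nat.rfindOpt (enumStep e τ)
  partrec := enum_partrec.comp (Computable.const e) Computable.id
  mono := by
    intro σ τ a b h ha hb
    obtain ⟨s, hs⟩ := Nat.rfindOpt_spec ha
    obtain ⟨t, ht⟩ := Nat.rfindOpt_spec hb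
    unfold enumStep at hs ht
    split_ifs at hs ht with h1 h2
    · rcases le_total s t with h3 | h3
      · exact stageOK_use h2 (stageOut_mono h3 hs) ht h
      · exact stageOK_use h1 hs (stageOut_mono h3 ht) h
    · simp at ht
    · simp at hs
    · simp at hs

theorem enum_all (V : MonoMachine) : ∃ e, (enumM e).f = V.f := by
  obtain ⟨c, hc⟩ := machine_code V.partrec
  have hout : ∀ σ a, a ∈ V.f σ ↔ ∃ s, a ∈ stageOut (Encodable.encode c) s (Encodable.encode σ) := by
    intro σ a
    unfold stageOut
    simp only [Option.mem_def, Option.bind_eq_some_iff, Denumerable.ofNat_encode]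
    constructor
    · intro h
      have : Encodable.encode a ∈ c.eval (Encodable.encode σ) := by
        rw [hc]
        exact Part.mem_map _ h
      obtain ⟨k, hk⟩ := Code.evaln_complete.1 this
      exact ⟨k, _, hk, by simp⟩
    · rintro ⟨s, n, h1, h2⟩
      have := Code.evaln_sound h1
      rw [hc, Part.mem_map_iff] at this
      obtain ⟨b, hb, rfl⟩ := this
      simp at h2
      rwa [← h2]
  have hok : ∀ s, StageOK (Encodable.encode c) s := by
    rintro s m - m' - ⟨τ, -, τ', -, a, ha, b, hb, ⟨rfl, rfl⟩, h1, h2⟩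
    refine h2 (List.prefix_iff_eq_take.1 ?_).symm
    exact V.mono (List.prefix_iff_eq_take.2 h1.symm) ((hout _ _).2 ⟨_, ha⟩) ((hout _ _).2 ⟨_, hb⟩)
  refine ⟨Encodable.encode c, ?_⟩
  funext σ
  ext a
  have : a ∈ Nat.rfindOpt (enumStep (Encodable.encode c) σ) ↔
      ∃ s, a ∈ enumStep (Encodable.encode c) σ s := by
    apply Nat.rfindOpt_mono
    intro a m n hmn
    unfold enumStep
    rw [if_pos (hok _), if_pos (hok _)]
    exact stageOut_mono hmn
  refine this.trans ?_
  rw [hout]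
  unfold enumStep
  simp only [if_pos (hok _)]

/-! ### A universal monotone machine -/

theorem idx_lt_of_pre {σ τ : List Bool} (h : σ <+: τ) (hσ : σ.idxOf false < σ.length) :
    τ.idxOf false = σ.idxOf false ∧ τ.idxOf false < τ.length := by
  obtain ⟨ρ, rfl⟩ := h
  have hm : false ∈ σ := List.idxOf_lt_length_iff.1 hσ
  have := List.idxOf_append_of_mem (l₂ := ρ) hm
  refine ⟨this, ?_⟩
  rw [this, List.length_append]
  omega

/-- A universal monotone machine. -/
noncomputable def univM : MonoMachine where
  f ρ := cond (decide (ρ.idxOf false < ρ.length))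
    ((enumM (ρ.idxOf false)).f (ρ.drop (ρ.idxOf false + 1))) Part.none
  partrec := by
    have h1 : Primrec (fun ρ : List Bool => ρ.idxOf false) :=
      Primrec.list_idxOf.comp (Primrec.const false) Primrec.id |>.of_eq (fun _ => by rfl)
    refine Partrec.cond (c := fun ρ : List Bool => decide (ρ.idxOf false < ρ.length)) ?_ ?_
      Partrec.none
    · exact (pr_decide _ (by fun_prop)).to_comp
    · exact enum_partrec.comp h1.to_comp
        (Primrec.to_comp (f := fun ρ : List Bool => ρ.drop (ρ.idxOf false + 1)) (by fun_prop))
  mono := by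
    intro σ τ a b h ha hb
    by_cases hσ : σ.idxOf false < σ.length
    · obtain ⟨h1, h2⟩ := idx_lt_of_pre h hσ
      rw [h1] at h2
      simp only [hσ, h1, h2, decide_true, cond_true] at ha hb
      exact (enumM _).mono (h.drop _) ha hb
    · simp [hσ] at ha

/-- The codes of the machines in the universal one. -/
def uCode (e : ℕ) : List Bool := (List.range e).map (fun _ => true) ++ [false]

theorem uCode_idx (e : ℕ) (τ : List Bool) : (uCode e ++ τ).idxOf false = e := by
  unfold uCode
  rw [List.append_assoc, List.idxOf_append_of_notMem (by simp)]
  simp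

theorem uCode_len (e : ℕ) : (uCode e).length = e + 1 := by simp [uCode]

theorem uCode_comp : Computable uCode := by
  refine Primrec.to_comp ?_
  unfold uCode
  have : Primrec (fun e : ℕ => (List.range e).map (fun _ => true)) :=
    pr_map _ _ (by fun_prop) (by fun_prop)
  exact Primrec.list_append.comp this (Primrec.const [false])

theorem uCode_free {e e' : ℕ} (h : uCode e <+: uCode e') : e = e' := by
  obtain ⟨ρ, h⟩ := h
  have h1 := uCode_idx e ρ
  have h2 := uCode_idx e' []
  rw [List.append_nil] at h2
  rw [h, h2] at h1
  exact h1.symm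

theorem univM_app (e : ℕ) (τ : List Bool) : univM.f (uCode e ++ τ) = (enumM e).f τ := by
  show cond _ _ _ = _
  rw [uCode_idx, List.length_append, uCode_len, decide_eq_true (by omega), cond_true,
    ← uCode_len e, List.drop_left]

theorem univM_universal : UniversalMono univM := by
  refine ⟨enumM, uCode, enum_partrec, enum_all, uCode_comp, ?_, univM_app⟩
  rintro _ ⟨e, rfl⟩ _ ⟨e', rfl⟩ h
  rw [uCode_free h]

/-- The string of `c` zeros. -/
def zeros (c : ℕ) : List Bool := List.replicate c false

theorem zeros_len (c : ℕ) : (zeros c).length = c := by simp [zeros]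

theorem pre_of_take {σ : List Bool} {c : ℕ} (h : σ.take c = zeros c) :
    zeros c <+: σ := h ▸ List.take_prefix c σ

/-- The machine simulating the universal machine above `zeros c` and `V` elsewhere. -/
noncomputable def combM (c : ℕ) (V : MonoMachine) : MonoMachine where
  f σ := cond (decide (σ.take c = zeros c)) (univM.f (σ.drop c))
    (cond (decide ((zeros c).take σ.length = σ)) Part.none (V.f σ))
  partrec := by
    refine Partrec.cond (c := fun σ : List Bool => decide (σ.take c = zeros c)) ?_ ?_ ?_
    · exact (pr_decide _ (by fun_prop)).to_comp
    · exact univM.partrec.comp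
        (Primrec.to_comp (f := fun σ : List Bool => σ.drop c) (by fun_prop))
    · refine Partrec.cond (c := fun σ : List Bool => decide ((zeros c).take σ.length = σ)) ?_
        Partrec.none V.partrec
      exact (pr_decide _ (by fun_prop)).to_comp
  mono := by
    intro σ τ a b h ha hb
    by_cases h1 : σ.take c = zeros c
    · have h2 : τ.take c = zeros c := by
        have := (pre_of_take h1).trans h
        have h3 := List.prefix_iff_eq_take.1 this
        rw [zeros_len] at h3
        exact h3.symm
      simp only [h1, h2, decide_true, cond_true] at ha hb
      exact univM.mono (h.drop _) ha hb
    · by_cases h2 : (zeros c).take σ.length = σ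
      · simp [h1, h2] at ha
      · have h3 : ¬ τ.take c = zeros c := by
          intro h3
          rcases List.prefix_or_prefix_of_prefix h (pre_of_take h3) with h4 | h4
          · exact h2 (List.prefix_iff_eq_take.1 h4).symm
          · have h5 := List.prefix_iff_eq_take.1 h4
            rw [zeros_len] at h5
            exact h1 h5.symm
        have h4 : ¬ (zeros c).take τ.length = τ := by
          intro h4
          exact h2 (List.prefix_iff_eq_take.1 (h.trans (List.prefix_iff_eq_take.2 h4.symm))).symm
        simp only [h1, h2, h3, h4, decide_false, cond_false] at ha hb
        exact V.mono h ha hb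

theorem combM_zeros (c : ℕ) (V : MonoMachine) (τ : List Bool) :
    (combM c V).f (zeros c ++ τ) = univM.f τ := by
  show cond _ _ _ = _
  have h1 : (zeros c ++ τ).take c = zeros c := by
    have := List.take_left (l₁ := zeros c) (l₂ := τ)
    rwa [zeros_len] at this
  have h2 : (zeros c ++ τ).drop c = τ := by
    have := List.drop_left (l₁ := zeros c) (l₂ := τ)
    rwa [zeros_len] at this
  rw [h1, h2]
  simp

theorem combM_universal (c : ℕ) (V : MonoMachine) : UniversalMono (combM c V) := by
  refine ⟨enumM, fun e => zeros c ++ uCode e, enum_partrec, enum_all, ?_, ?_, ?_⟩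
  · exact Primrec.list_append.to_comp.comp (Computable.const _) uCode_comp
  · rintro _ ⟨e, rfl⟩ _ ⟨e', rfl⟩ h
    rw [List.prefix_append_right_inj] at h
    simp only [uCode_free h]
  · intro e τ
    simp only [List.append_assoc]
    rw [combM_zeros, univM_app]

theorem val_zeros (c : ℕ) : val (zeros c) = 0 := by
  induction c with
  | zero => rfl
  | succ n ih =>
    have : zeros (n + 1) = zeros n ++ [false] := by simp [zeros, List.replicate_succ']
    rw [this, val_append, ih]
    simp

theorem combM_inf (c : ℕ) (V : MonoMachine) {x : ℝ} (h0 : 0 ≤ x) (h1 : x < 1)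
    (hx : (1 : ℝ) / 2 ^ c ≤ x) : digits x ∈ MonoINF (combM c V) ↔ digits x ∈ MonoINF V := by
  rw [inf_tail _ _ c, inf_tail V _ c]
  refine forall_congr' fun k => exists_congr fun n => exists_congr fun a =>
    and_congr_right fun hn => ?_
  have hc : ¬ initSeg (digits x) c = zeros c := by
    intro h
    have := (cell_mem (σ := zeros c) h0 h1).1 (by rw [zeros_len]; exact h)
    rw [val_zeros, zeros_len] at this
    have := this.2
    norm_num at this
    norm_num at hx
    linarith
  have e1 : ¬ (initSeg (digits x) n).take c = zeros c := by rwa [initSeg_take _ hn]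
  have e2 : ¬ (zeros c).take (initSeg (digits x) n).length = initSeg (digits x) n := by
    rw [initSeg_length]
    intro h
    rw [List.take_of_length_le (by rw [zeros_len]; exact hn)] at h
    apply e1
    rw [← h]
    exact List.take_of_length_le (by rw [zeros_len])
  have : (combM c V).f (initSeg (digits x) n) = V.f (initSeg (digits x) n) := by
    show cond _ _ _ = _
    rw [decide_eq_false e1, decide_eq_false e2]
    rfl
  rw [this]

theorem muR_comb (c : ℕ) {γ : ℝ} (h : RC γ) (h1 : γ ≤ 1) (hc : (1 : ℝ) / 2 ^ c ≤ γ) :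
    ∃ U, UniversalMono U ∧ muR (MonoINF U) = muR (MonoINF univM) / 2 ^ c + (γ - 1 / 2 ^ c) := by
  obtain ⟨V, -, hV⟩ := exists_machine h
  refine ⟨combM c V, combM_universal c V, ?_⟩
  have hpos : (0 : ℝ) < 1 / 2 ^ c := by positivity
  rw [muR_split (zeros c) (combM_zeros c V), zeros_len, muR_eq (killM _ _), infR_kill, zeros_len,
    val_zeros]
  congr 1
  have e1 : ∀ x ∉ Set.Ico (((0 : ℕ) : ℝ) / 2 ^ c) ((((0 : ℕ) : ℝ) + 1) / 2 ^ c), 0 ≤ x →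
      (1 : ℝ) / 2 ^ c ≤ x := by
    intro x hx h0
    by_contra hlt
    apply hx
    push Not at hlt
    simp only [Nat.cast_zero, zero_div, zero_add]
    exact ⟨h0, hlt⟩
  have a1 : volume (infR (combM c V) \ Set.Ico (((0 : ℕ) : ℝ) / 2 ^ c)
      ((((0 : ℕ) : ℝ) + 1) / 2 ^ c)) = ENNReal.ofReal (γ - 1 / 2 ^ c) := by
    apply le_antisymm
    · have : infR (combM c V) \ Set.Ico (((0 : ℕ) : ℝ) / 2 ^ c)
          ((((0 : ℕ) : ℝ) + 1) / 2 ^ c) ⊆ Set.Icc (1 / 2 ^ c) γ := by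
        rintro x ⟨hx, hx'⟩
        have hx1 := e1 x hx' hx.1.1
        refine ⟨hx1, ?_⟩
        by_contra hlt
        exact (hV x hx.1.1 hx.1.2).2 (not_le.1 hlt) ((combM_inf c V hx.1.1 hx.1.2 hx1).1 hx.2)
      refine (measure_mono this).trans ?_
      rw [Real.volume_Icc]
    · have : Set.Ico (1 / 2 ^ c) γ ⊆ infR (combM c V) \ Set.Ico (((0 : ℕ) : ℝ) / 2 ^ c)
          ((((0 : ℕ) : ℝ) + 1) / 2 ^ c) := by
        rintro x ⟨hx, hx'⟩
        have h0 : 0 ≤ x := by linarith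
        have h1 : x < 1 := by linarith
        refine ⟨⟨⟨h0, h1⟩, (combM_inf c V h0 h1 hx).2 ((hV x h0 h1).1 hx')⟩, ?_⟩
        simp only [Nat.cast_zero, zero_add, Set.mem_Ico, not_and, not_lt]
        exact fun _ => hx
      refine le_trans ?_ (measure_mono this)
      rw [Real.volume_Ico]
  rw [a1, ENNReal.toReal_ofReal (by linarith)]

/-! ### Second direction -/

theorem Sig2.exT {α β : Type} [Primcodable α] [Denumerable β] {P : α → β → Prop}
    (h : Sig2 (fun z : α × β => P z.1 z.2)) : Sig2 (fun x => ∃ y, P x y) := by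
  refine (Sig2.ex (P := fun (x : α) (n : ℕ) => P x (Denumerable.ofNat β n)) ?_).of_iff ?_
  · exact h.comp (f := fun z : α × ℕ => (z.1, Denumerable.ofNat β z.2))
      (Primrec.pair Primrec.fst ((Primrec.ofNat β).comp Primrec.snd))
  · intro x
    constructor
    · rintro ⟨y, hy⟩
      exact ⟨Encodable.encode y, by simpa using hy⟩
    · rintro ⟨n, hn⟩
      exact ⟨_, hn⟩

/-- The quantities used in the covering argument. -/
def runMin (h : ℕ → ℝ) : ℕ → ℝ
  | 0 => h 0
  | n + 1 => min (runMin h n) (h (n + 1))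

theorem runMin_le (h : ℕ → ℝ) {t n : ℕ} (ht : t ≤ n) : runMin h n ≤ h t := by
  induction n with
  | zero =>
    have : t = 0 := by omega
    subst this
    exact le_refl _
  | succ n ih =>
    rcases Nat.lt_or_ge t (n + 1) with h1 | h1
    · exact (min_le_left _ _).trans (ih (by omega))
    · have : t = n + 1 := by omega
      subst this
      exact min_le_right _ _

theorem cover_vol {a B : ℕ → ℝ} (ha : Antitone a) (hB : Antitone B) {ε : ℝ}
    (hε : 0 ≤ ε) (hB0 : B 0 ≤ 2) (hBn : ∀ n, 0 ≤ B n) (S : Set ℝ)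
    (hS : ∀ x ∈ S, ∃ t N, t ≤ N ∧ a t - ε * (B t - B (N + 1)) < x ∧ x < a N) :
    volume S ≤ ENNReal.ofReal (2 * ε) := by
  let m := runMin (fun t => a t - ε * B t)
  let K : ℕ → Set ℝ := fun N => Set.Ioc (m N + ε * B (N + 1)) (m N + ε * B N)
  have hsub : S ⊆ ⋃ N, K N := by
    intro x hx
    have hex : ∃ N, m N + ε * B (N + 1) < x ∧ x < a N := by
      obtain ⟨t, N, htN, h1, h2⟩ := hS x hx
      refine ⟨N, ?_, h2⟩
      have : m N ≤ a t - ε * B t := runMin_le (fun t => a t - ε * B t) htN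
      linarith
    obtain ⟨h1, h2⟩ := Nat.find_spec hex
    have hmin := fun n => Nat.find_min (m := n) hex
    set N := Nat.find hex
    refine Set.mem_iUnion.2 ⟨N, h1, ?_⟩
    by_contra hlt
    push Not at hlt
    rcases N with _ | n
    · have : m 0 = a 0 - ε * B 0 := rfl
      linarith
    · have hm : m (n + 1) = min (m n) (a (n + 1) - ε * B (n + 1)) := rfl
      rcases le_total (m n) (a (n + 1) - ε * B (n + 1)) with h3 | h3
      · rw [min_eq_left h3] at hm
        refine hmin n (by omega) ⟨by linarith, lt_of_lt_of_le h2 (ha (by omega))⟩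
      · rw [min_eq_right h3] at hm
        linarith
  refine (measure_mono hsub).trans ((measure_iUnion_le K).trans ?_)
  refine ENNReal.tsum_le_of_sum_range_le fun n => ?_
  have hd : ∀ N, volume (K N) = ENNReal.ofReal (ε * (B N - B (N + 1))) := by
    intro N
    rw [Real.volume_Ioc]
    congr 1
    ring
  simp only [hd]
  rw [← ENNReal.ofReal_sum_of_nonneg]
  · apply ENNReal.ofReal_le_ofReal
    rw [← Finset.mul_sum, Finset.sum_range_sub']
    nlinarith [hBn n]
  · intro i _
    exact mul_nonneg hε (sub_nonneg.2 (hB (Nat.le_succ i)))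

theorem kucera_slaman {α β : ℝ} (h0 : 0 < α) (h1 : α < 1) (hα : RC α)
    (hr : MLRandomIn (iterJump 1) α) (hb0 : 0 ≤ β) (hb1 : β ≤ 1) (hβ : RC β) (c0 : ℕ) :
    ∃ c, c0 ≤ c ∧ RC (α + 1 / 2 ^ c * (1 - β)) := by
  obtain ⟨A, hA⟩ := exists_approx h0.le (by linarith) hα
  obtain ⟨b, hb⟩ := exists_approx hb0 (by linarith) hβ
  let a : ℕ → ℝ := fun n => (A n : ℝ) / 2 ^ n
  let B : ℕ → ℝ := fun n => (b n : ℝ) / 2 ^ n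
  have ha : Antitone a := hA.anti
  have hB : Antitone B := hb.anti
  have hBn : ∀ n, 0 ≤ B n := fun n => by positivity
  have hBβ : ∀ n, β < B n := hb.lt
  have haα : ∀ n, α < a n := hA.lt
  have hB0 : B 0 ≤ 2 := by
    have : (b 0 : ℝ) ≤ 2 := by exact_mod_cast hb.init
    simpa [B] using this
  let K := c0 + 1
  -- the arithmetical condition defining the test
  let T : ℕ → ℕ × ℕ × ℕ × ℕ × ℕ × ℕ × ℕ × ℕ → Prop := fun w y =>
    (y.2.2.2.2.1 = A y.1 ∧ y.2.2.2.2.2.1 = A y.2.1 ∧ y.2.2.2.2.2.2.1 = b y.1 ∧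
      y.2.2.2.2.2.2.2 = b (y.2.1 + 1)) ∧ y.1 ≤ y.2.1 ∧
    QGt w.unpair.2.unpair.1 y.2.2.1 y.2.2.2.1 ∧
    QLt w.unpair.2.unpair.2 y.2.2.2.2.2.1 y.2.1 ∧
    y.2.2.2.2.1 * 2 ^ (y.2.2.2.1 + y.2.1 + 1 + (w.unpair.1 + K))
        + y.2.2.2.2.2.2.2 * 2 ^ (y.2.2.2.1 + y.1)
      ≤ y.2.2.1 * 2 ^ (y.1 + y.2.1 + 1 + (w.unpair.1 + K))
        + y.2.2.2.2.2.2.1 * 2 ^ (y.2.2.2.1 + y.2.1 + 1)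
  have hT : Sig2 (fun z : ℕ × (ℕ × ℕ × ℕ × ℕ × ℕ × ℕ × ℕ × ℕ) => T z.1 z.2) := by
    refine Sig2.and (Sig2.and ?_ (Sig2.and ?_ (Sig2.and ?_ ?_))) (Sig2.of_prim ?_)
    · exact hA.gr.comp (f := fun z : ℕ × (ℕ × ℕ × ℕ × ℕ × ℕ × ℕ × ℕ × ℕ) =>
        (z.2.1, z.2.2.2.2.2.1)) (by fun_prop)
    · exact hA.gr.comp (f := fun z : ℕ × (ℕ × ℕ × ℕ × ℕ × ℕ × ℕ × ℕ × ℕ) =>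
        (z.2.2.1, z.2.2.2.2.2.2.1)) (by fun_prop)
    · exact hb.gr.comp (f := fun z : ℕ × (ℕ × ℕ × ℕ × ℕ × ℕ × ℕ × ℕ × ℕ) =>
        (z.2.1, z.2.2.2.2.2.2.2.1)) (by fun_prop)
    · exact hb.gr.comp (f := fun z : ℕ × (ℕ × ℕ × ℕ × ℕ × ℕ × ℕ × ℕ × ℕ) =>
        (z.2.2.1 + 1, z.2.2.2.2.2.2.2.2)) (by fun_prop)
    · refine pp_and _ _ (by fun_prop) (pp_and _ _ ?_ (pp_and _ _ ?_ (by fun_prop)))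
      · exact pp_comp (f := fun z : ℕ × (ℕ × ℕ × ℕ × ℕ × ℕ × ℕ × ℕ × ℕ) =>
          (z.1.unpair.2.unpair.1, z.2.2.2.1, z.2.2.2.2.1)) qGt_prim (by fun_prop)
      · exact pp_comp (f := fun z : ℕ × (ℕ × ℕ × ℕ × ℕ × ℕ × ℕ × ℕ × ℕ) =>
          (z.1.unpair.2.unpair.2, z.2.2.2.2.2.2.1, z.2.2.1)) qLt_prim (by fun_prop)
  let W : Set ℕ := {w | ∃ y, T w y}
  have hW : CeIn (iterJump 1) W := ce_of_sig2 (Sig2.exT hT)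
  have hine : ∀ c t N k s : ℕ, A t * 2 ^ (s + N + 1 + c) + b (N + 1) * 2 ^ (s + t)
      ≤ k * 2 ^ (t + N + 1 + c) + b t * 2 ^ (s + N + 1) ↔
      a t - 1 / 2 ^ c * (B t - B (N + 1)) ≤ (k : ℝ) / 2 ^ s := by
    intro c t N k s
    rw [sub_le_iff_le_add]
    have e1 : ((A t * 2 ^ (s + N + 1 + c) + b (N + 1) * 2 ^ (s + t) : ℕ) : ℝ)
        = (a t + 1 / 2 ^ c * B (N + 1)) * 2 ^ (s + t + N + 1 + c) := by
      simp only [a, B]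
      push_cast
      field_simp
      ring
    have e2 : ((k * 2 ^ (t + N + 1 + c) + b t * 2 ^ (s + N + 1) : ℕ) : ℝ)
        = ((k : ℝ) / 2 ^ s + 1 / 2 ^ c * B t) * 2 ^ (s + t + N + 1 + c) := by
      simp only [B]
      push_cast
      field_simp
      ring
    rw [← Nat.cast_le (α := ℝ), e1, e2, mul_le_mul_iff_left₀ (by positivity)]
    constructor <;> intro h <;> linarith
  have hpq : ∀ (i : ℕ) (p q : ℚ), Nat.pair i (Encodable.encode (p, q)) ∈ W ↔
      ∃ t N k s : ℕ, t ≤ N ∧ (k : ℝ) / 2 ^ s < p ∧ (q : ℝ) < a N ∧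
        a t - 1 / 2 ^ (i + K) * (B t - B (N + 1)) ≤ (k : ℝ) / 2 ^ s := by
    intro i p q
    have e : Encodable.encode (p, q) = Nat.pair (Encodable.encode p) (Encodable.encode q) := rfl
    constructor
    · rintro ⟨⟨t, N, k, s, u, v, x, y⟩, ⟨h1, h2, h3, h4⟩, h5, h6, h7, h8⟩
      simp only [e, Nat.unpair_pair] at h1 h2 h3 h4 h5 h6 h7 h8
      subst h1 h2 h3 h4
      exact ⟨t, N, k, s, h5, (qGt_iff _ _ _).2 h6, (qLt_iff _ _ _).2 h7, (hine _ _ _ _ _).1 h8⟩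
    · rintro ⟨t, N, k, s, h5, h6, h7, h8⟩
      refine ⟨(t, N, k, s, A t, A N, b t, b (N + 1)), ⟨rfl, rfl, rfl, rfl⟩, h5, ?_, ?_, ?_⟩
      · simpa only [e, Nat.unpair_pair] using (qGt_iff _ _ _).1 h6
      · simpa only [e, Nat.unpair_pair] using (qLt_iff _ _ _).1 h7
      · simpa only [e, Nat.unpair_pair] using (hine _ _ _ _ _).2 h8
  have hvol : ∀ i, volume (testSet W i) ≤ ENNReal.ofReal ((2 : ℝ)⁻¹ ^ i) := by
    intro i
    have hε : (0 : ℝ) ≤ 1 / 2 ^ (i + K) := by positivity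
    refine (cover_vol ha hB hε hB0 hBn (testSet W i) ?_).trans ?_
    · rintro x ⟨p, q, hw, hp, hq⟩
      obtain ⟨t, N, k, s, h5, h6, h7, h8⟩ := (hpq i p q).1 hw
      exact ⟨t, N, h5, by linarith, by linarith⟩
    · apply ENNReal.ofReal_le_ofReal
      have h2 : (1 : ℝ) ≤ 2 ^ c0 := one_le_pow₀ (by norm_num)
      rw [inv_pow, ← one_div, mul_one_div, div_le_div_iff₀ (by positivity) (by positivity)]
      simp only [K, pow_add]
      have : (0 : ℝ) < 2 ^ i := by positivity
      nlinarith
  obtain ⟨i, hi⟩ := hr W hW hvol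
  refine ⟨i + K, by omega, ?_⟩
  set c := i + K with hc
  have hεp : (0 : ℝ) < 1 / 2 ^ c := by positivity
  have key1 : ∀ t N, t ≤ N → α ≤ a t - 1 / 2 ^ c * (B t - B (N + 1)) := by
    intro t N htN
    by_contra hlt
    push Not at hlt
    obtain ⟨k, s, h3, h4⟩ := dyadic_between (le_max_right (a t - 1 / 2 ^ c * (B t - B (N + 1))) 0)
      (max_lt hlt h0)
    obtain ⟨p, hp1, hp2⟩ := exists_rat_btwn h4
    obtain ⟨q, hq1, hq2⟩ := exists_rat_btwn (haα N)
    exact hi ⟨p, q, (hpq i p q).2 ⟨t, N, k, s, htN, hp1, hq2, ((le_max_left _ _).trans_lt h3).le⟩,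
      hp2, hq1⟩
  have key : ∀ t, α ≤ a t - 1 / 2 ^ c * (B t - β) := by
    intro t
    by_contra hlt
    push Not at hlt
    have hy : β < β + (α - (a t - 1 / 2 ^ c * (B t - β))) * 2 ^ c := by
      have : 0 < (α - (a t - 1 / 2 ^ c * (B t - β))) * 2 ^ c :=
        mul_pos (by linarith) (by positivity)
      linarith
    obtain ⟨n, hn⟩ := hb.lim _ hy
    have h3 := key1 t (max t n) (le_max_left _ _)
    have h4 : B (max t n + 1) ≤ B n := hB (by omega)
    have h5 : 1 / 2 ^ c * B (max t n + 1)
        < 1 / 2 ^ c * (β + (α - (a t - 1 / 2 ^ c * (B t - β))) * 2 ^ c) :=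
      mul_lt_mul_of_pos_left (lt_of_le_of_lt h4 hn) hεp
    have h6 : 1 / 2 ^ c * (β + (α - (a t - 1 / 2 ^ c * (B t - β))) * 2 ^ c)
        = 1 / 2 ^ c * β + (α - (a t - 1 / 2 ^ c * (B t - β))) := by
      field_simp
    rw [h6] at h5
    linarith
  have hRC : Sig2 (fun z : ℕ × ℕ => ∃ y : ℕ × ℕ × ℕ, (y.2.1 = A y.1 ∧ y.2.2 = b y.1) ∧
      y.2.1 * 2 ^ (z.2 + c) + 2 ^ (z.2 + y.1) < z.1 * 2 ^ (y.1 + c) + y.2.2 * 2 ^ z.2) := by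
    refine Sig2.exT (P := fun (z : ℕ × ℕ) (y : ℕ × ℕ × ℕ) => (y.2.1 = A y.1 ∧ y.2.2 = b y.1) ∧
      y.2.1 * 2 ^ (z.2 + c) + 2 ^ (z.2 + y.1) < z.1 * 2 ^ (y.1 + c) + y.2.2 * 2 ^ z.2) ?_
    refine Sig2.and (Sig2.and ?_ ?_) (Sig2.of_prim (by fun_prop))
    · exact hA.gr.comp (f := fun z : (ℕ × ℕ) × (ℕ × ℕ × ℕ) => (z.2.1, z.2.2.1)) (by fun_prop)
    · exact hb.gr.comp (f := fun z : (ℕ × ℕ) × (ℕ × ℕ × ℕ) => (z.2.1, z.2.2.2)) (by fun_prop)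
  refine hRC.of_iff ?_
  rintro ⟨k, s⟩
  have hin2 : ∀ t, A t * 2 ^ (s + c) + 2 ^ (s + t) < k * 2 ^ (t + c) + b t * 2 ^ s ↔
      a t + 1 / 2 ^ c - 1 / 2 ^ c * B t < (k : ℝ) / 2 ^ s := by
    intro t
    rw [sub_lt_iff_lt_add]
    have e1 : ((A t * 2 ^ (s + c) + 2 ^ (s + t) : ℕ) : ℝ)
        = (a t + 1 / 2 ^ c) * 2 ^ (s + t + c) := by
      simp only [a]
      push_cast
      field_simp
      ring
    have e2 : ((k * 2 ^ (t + c) + b t * 2 ^ s : ℕ) : ℝ)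
        = ((k : ℝ) / 2 ^ s + 1 / 2 ^ c * B t) * 2 ^ (s + t + c) := by
      simp only [B]
      push_cast
      field_simp
      ring
    rw [← Nat.cast_lt (α := ℝ), e1, e2, mul_lt_mul_iff_left₀ (by positivity)]
  show α + 1 / 2 ^ c * (1 - β) < (k : ℝ) / 2 ^ s ↔ _
  constructor
  · intro h
    have hy : α < (k : ℝ) / 2 ^ s - 1 / 2 ^ c * (1 - β) := by linarith
    obtain ⟨t, ht⟩ := hA.lim _ hy
    refine ⟨(t, A t, b t), ⟨rfl, rfl⟩, (hin2 t).2 ?_⟩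
    have : 1 / 2 ^ c * β < 1 / 2 ^ c * B t := mul_lt_mul_of_pos_left (hBβ t) hεp
    have ht' : a t < (k : ℝ) / 2 ^ s - 1 / 2 ^ c * (1 - β) := ht
    linarith
  · rintro ⟨⟨t, u, v⟩, ⟨h3, h4⟩, h5⟩
    simp only at h3 h4 h5
    subst h3 h4
    have h6 := (hin2 t).1 h5
    have := key t
    linarith

theorem direction_two (α : ℝ) (h0 : 0 < α) (h1 : α < 1) (hr : NRandom 2 α)
    (hα : RightCeIn (iterJump 1) α) : ∃ U : MonoMachine, UniversalMono U ∧ muR (MonoINF U) = α := by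
  have hRC := rc_of_rightCe hα
  obtain ⟨c0, hc0⟩ := exists_pow_lt_of_lt_one (lt_min h0 (sub_pos.2 h1))
    (by norm_num : (1 / 2 : ℝ) < 1)
  obtain ⟨c, hc, hγ⟩ := kucera_slaman h0 h1 hRC hr (muR_nonneg univM) (muR_le_one univM)
    (rc_muR univM) c0
  have hle : (1 : ℝ) / 2 ^ c ≤ (1 / 2) ^ c0 := by
    rw [one_div_pow]
    gcongr
    norm_num
  have hl1 := hc0.trans_le (min_le_left _ _)
  have hl2 := hc0.trans_le (min_le_right _ _)
  have hεp : (0 : ℝ) < 1 / 2 ^ c := by positivity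
  have hb0 := muR_nonneg univM
  have hb1 := muR_le_one univM
  have k1 : 0 ≤ 1 / 2 ^ c * (1 - muR (MonoINF univM)) := mul_nonneg hεp.le (by linarith)
  have k2 : 0 ≤ 1 / 2 ^ c * muR (MonoINF univM) := mul_nonneg hεp.le hb0
  obtain ⟨U, hU, hm⟩ := muR_comb c hγ (by linarith) (by linarith)
  refine ⟨U, hU, ?_⟩
  rw [hm, div_eq_mul_one_div]
  ring

/-- **Infinity probability for universal monotone machines.**
The probability that the output of a universal monotone machine on a random infinite
binary input is infinite is a 2-random `∅'`-right-c.e. real; conversely, every 2-random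
`∅'`-right-c.e. real in `(0,1)` is such a probability for some universal monotone machine. -/
theorem monotone_infinity_probability_characterization :
    (∀ U : MonoMachine, UniversalMono U →
        NRandom 2 (muR (MonoINF U)) ∧ RightCeIn (iterJump 1) (muR (MonoINF U))) ∧
    (∀ α : ℝ, 0 < α → α < 1 → NRandom 2 α → RightCeIn (iterJump 1) α →
        ∃ U : MonoMachine, UniversalMono U ∧ muR (MonoINF U) = α) := by
  exact ⟨direction_one, direction_two⟩

end RandProb
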